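/- arXiv:0708.1547 — 3 statements merged into one kernel-verified Lean document; each statement's English description precedes it below -/
import Mathlib

section
/- Let n ≥ 3 and γ ∈ [(n+1)/2, n+1]. There is a constant C (depending on n, γ) such that for every Schwartz function ψ on ℝⁿ, every integer m ≥ 1, and all s₁, s₂ ∈ [m, m+1], one has m^{(n−2)/2} · | ‖ψ̂_{√s₁}‖² − ‖ψ̂_{√s₂}‖² | ≤ C ( |s₁ − s₂|^{n+1−γ} / m )^{1/γ} ‖ψ‖²_{L^{2γ/(γ+2)}(ℝⁿ)}, where ‖ψ̂_{√s}‖² = ∫_{S^{n−1}} |ψ̂(√s · ω)|² dσ(ω). -/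
open MeasureTheory Complex FourierTransform Metric
open scoped ENNReal Real

noncomputable section

/-!
Write `K` for the Fourier transform of surface measure. Then `‖ψ̂_{r₁}‖² - ‖ψ̂_{r₂}‖²` is the
quadratic form of convolution with `K (r₁ •) - K (r₂ •)`. Along a ray `K` solves Bessel's equation,
whence `|K (r₁ z) - K (r₂ z)| ≲ |r₁ - r₂| ^ α * ‖z‖ ^ (α - (d - 1) / 2)` for `0 ≤ α ≤ 1` and
`1 ≤ r₁, r₂`. Beyond a radius `R` this pointwise bound is used; inside, the localised kernel is the
Fourier transform of a difference of mollified surface measures, which is handled by Plancherel on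
one factor and by the Stein–Tomas restriction theorem on the other. Optimising in `R` gives a bound
on pairs of functions bounded by `1` in terms of their integrals, whose two exponents differ.
Integrating it over all pairs of levels of `ψ` gives the strong `Lᵖ` bound: the two exponents being
different makes the integral converge off the diagonal. At the endpoint `2 * α = d - 1` one has
`p = 1`, and the kernel is bounded. Dilation from radius `√m` to radius `1`, with
`α = (d + 1) / γ - 1`, concludes.
-/

namespace SphereRestriction

open Filter Module Topology
open scoped ComplexConjugate Pointwise RealInnerProductSpace

section Decay

theorem sq_add_sq_deriv_le_of_deriv_eq_sub_mul {w w' q : ℝ → ℝ} {c : ℝ}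
    (hw : ∀ t, 1 ≤ t → HasDerivAt w (w' t) t)
    (hw' : ∀ t, 1 ≤ t → HasDerivAt w' (-(1 - q t) * w t) t)
    (hq : ∀ t, 1 ≤ t → |q t| ≤ c / t ^ 2) {t : ℝ} (ht : 1 ≤ t) :
    w t ^ 2 + w' t ^ 2 ≤ Real.exp c * (w 1 ^ 2 + w' 1 ^ 2) := by
  set G : ℝ → ℝ := fun s => (w s ^ 2 + w' s ^ 2) * Real.exp (c / s)
  have hG (s : ℝ) (hs : 1 ≤ s) : HasDerivAt G
      ((2 * q s * (w s * w' s) - c / s ^ 2 * (w s ^ 2 + w' s ^ 2)) * Real.exp (c / s)) s := by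
    have hs0 : s ≠ 0 := by positivity
    have hexp := ((hasDerivAt_inv hs0).const_mul c).exp
    simp only [← div_eq_mul_inv] at hexp
    refine ((((hw s hs).pow 2).add ((hw' s hs).pow 2)).mul hexp).congr_deriv ?_
    simp only [Pi.add_apply, Pi.pow_apply]
    field_simp
    ring
  have hanti : AntitoneOn G (Set.Ici 1) := by
    refine antitoneOn_of_hasDerivWithinAt_nonpos (convex_Ici 1)
      (fun s hs => (hG s hs).continuousAt.continuousWithinAt)
      (fun s hs => (hG s (interior_subset hs)).hasDerivWithinAt) fun s hs => ?_
    refine mul_nonpos_of_nonpos_of_nonneg (sub_nonpos.2 ?_) (Real.exp_pos _).le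
    calc 2 * q s * (w s * w' s) ≤ |q s| * |2 * (w s * w' s)| := by
          rw [← abs_mul]; exact (le_of_eq (by ring)).trans (le_abs_self _)
      _ ≤ c / s ^ 2 * (w s ^ 2 + w' s ^ 2) := by
          refine mul_le_mul (hq s (interior_subset hs)) (abs_le.2 ⟨?_, ?_⟩) (abs_nonneg _)
            ((abs_nonneg _).trans (hq s (interior_subset hs))) <;>
          nlinarith [sq_nonneg (w s + w' s), sq_nonneg (w s - w' s)]
  have hc : 0 ≤ c := (abs_nonneg _).trans (by simpa using hq 1 le_rfl)
  calc w t ^ 2 + w' t ^ 2 ≤ G t := le_mul_of_one_le_right (by positivity)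
        (Real.one_le_exp (by positivity))
    _ ≤ G 1 := hanti (Set.mem_Ici.2 le_rfl) ht ht
    _ = Real.exp c * (w 1 ^ 2 + w' 1 ^ 2) := by simp only [G, div_one, mul_comm]

-- The substitution `w = t ^ κ * F` turns Bessel's equation into a harmonic oscillator with an
-- integrable perturbation.
theorem sq_add_sq_le_of_bessel_ode {κ : ℝ} {F F' : ℝ → ℝ}
    (hF : ∀ t, 1 ≤ t → HasDerivAt F (F' t) t)
    (hF' : ∀ t, 1 ≤ t → HasDerivAt F' (-(2 * κ / t) * F' t - F t) t) {t : ℝ} (ht : 1 ≤ t) :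
    (t ^ κ * F t) ^ 2 + (t ^ κ * (κ / t * F t + F' t)) ^ 2 ≤
      Real.exp |κ * (κ - 1)| * (F 1 ^ 2 + (κ * F 1 + F' 1) ^ 2) := by
  have hpow (s : ℝ) (hs : 1 ≤ s) : HasDerivAt (fun s : ℝ => s ^ κ) (s ^ κ * (κ / s)) s := by
    have hs0 : s ≠ 0 := by positivity
    exact (Real.hasDerivAt_rpow_const (.inl hs0)).congr_deriv (by
      rw [Real.rpow_sub_one hs0]; ring)
  have hw (s : ℝ) (hs : 1 ≤ s) : HasDerivAt (fun s => s ^ κ * F s)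
      (s ^ κ * (κ / s * F s + F' s)) s :=
    ((hpow s hs).mul (hF s hs)).congr_deriv (by ring)
  have hw' (s : ℝ) (hs : 1 ≤ s) : HasDerivAt (fun s => s ^ κ * (κ / s * F s + F' s))
      (-(1 - κ * (κ - 1) / s ^ 2) * (s ^ κ * F s)) s := by
    have hs0 : s ≠ 0 := by positivity
    have hinv := (hasDerivAt_inv hs0).const_mul κ
    simp only [← div_eq_mul_inv] at hinv
    refine ((hpow s hs).mul ((hinv.mul (hF s hs)).add (hF' s hs))).congr_deriv ?_
    simp only [Pi.add_apply, Pi.mul_apply]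
    field_simp
    ring
  simpa only [Real.one_rpow, one_mul, div_one] using sq_add_sq_deriv_le_of_deriv_eq_sub_mul hw hw'
    (fun s _ => (abs_div _ _).trans_le (by rw [abs_of_nonneg (sq_nonneg s)])) ht

theorem abs_rpow_mul_le_of_bessel_ode {κ M : ℝ} (hκ : 0 ≤ κ) {F F' : ℝ → ℝ}
    (hF : ∀ t, 1 ≤ t → HasDerivAt F (F' t) t)
    (hF' : ∀ t, 1 ≤ t → HasDerivAt F' (-(2 * κ / t) * F' t - F t) t)
    (hM : |F 1| ≤ M) (hM' : |F' 1| ≤ M) {t : ℝ} (ht : 1 ≤ t) :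
    |t ^ κ * F t| ≤ (1 + κ) * (Real.exp |κ * (κ - 1)| * (2 + κ)) * M ∧
      |t ^ κ * F' t| ≤ (1 + κ) * (Real.exp |κ * (κ - 1)| * (2 + κ)) * M := by
  set K := Real.exp |κ * (κ - 1)| * (2 + κ) with hK
  have hM0 : 0 ≤ M := (abs_nonneg _).trans hM
  have hexp : 1 ≤ Real.exp |κ * (κ - 1)| := Real.one_le_exp (abs_nonneg _)
  have hinit : Real.exp |κ * (κ - 1)| * (F 1 ^ 2 + (κ * F 1 + F' 1) ^ 2) ≤ (K * M) ^ 2 := by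
    have h₁ : F 1 ^ 2 ≤ M ^ 2 := sq_le_sq.2 (hM.trans (le_abs_self M))
    have h₂ : (κ * F 1 + F' 1) ^ 2 ≤ ((κ + 1) * M) ^ 2 := sq_le_sq.2 <| by
      rw [abs_of_nonneg (by positivity : 0 ≤ (κ + 1) * M), add_one_mul]
      refine (abs_add_le _ _).trans (add_le_add ?_ hM')
      rw [abs_mul, abs_of_nonneg hκ]
      exact mul_le_mul_of_nonneg_left hM hκ
    calc _ ≤ Real.exp |κ * (κ - 1)| ^ 2 * ((2 + κ) * M) ^ 2 := mul_le_mul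
          (le_self_pow₀ hexp two_ne_zero) (by nlinarith [mul_nonneg hκ (sq_nonneg M)])
          (by positivity) (by positivity)
      _ = (K * M) ^ 2 := by rw [hK]; ring
  have hE := (sq_add_sq_le_of_bessel_ode hF hF' ht).trans hinit
  have hw : |t ^ κ * F t| ≤ K * M :=
    abs_le_of_sq_le_sq (by nlinarith [sq_nonneg (t ^ κ * (κ / t * F t + F' t))]) (by positivity)
  have hw' : |t ^ κ * (κ / t * F t + F' t)| ≤ K * M :=
    abs_le_of_sq_le_sq (by nlinarith [sq_nonneg (t ^ κ * F t)]) (by positivity)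
  refine ⟨by nlinarith [mul_nonneg hκ (hw.trans' (abs_nonneg _))], ?_⟩
  calc
    |t ^ κ * F' t| = |t ^ κ * (κ / t * F t + F' t) - κ / t * (t ^ κ * F t)| := by ring_nf
    _ ≤ K * M + κ / t * (K * M) := (abs_sub _ _).trans <| by
      rw [abs_mul (κ / t), abs_of_nonneg (by positivity : 0 ≤ κ / t)]
      gcongr
    _ ≤ K * M + κ * (K * M) := by gcongr; exact div_le_self hκ ht
    _ = (1 + κ) * K * M := by ring

theorem exists_abs_le_rpow_neg_of_bessel_ode {κ : ℝ} (hκ : 0 ≤ κ) :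
    ∃ C : ℝ, 0 < C ∧ ∀ (M : ℝ) (F F' : ℝ → ℝ), (∀ t, 0 < t → HasDerivAt F (F' t) t) →
      (∀ t, 0 < t → HasDerivAt F' (-(2 * κ / t) * F' t - F t) t) →
      (∀ t, |F t| ≤ M) → (∀ t, |F' t| ≤ M) → ∀ t, 0 < t →
      |F t| ≤ C * M * t ^ (-κ) ∧ |F' t| ≤ C * M * t ^ (-κ) := by
  set C := (1 + κ) * (Real.exp |κ * (κ - 1)| * (2 + κ))
  have hC : 1 ≤ C := one_le_mul_of_one_le_of_one_le (by linarith)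
    (one_le_mul_of_one_le_of_one_le (Real.one_le_exp (abs_nonneg _)) (by linarith))
  refine ⟨C, by positivity, fun M F F' hF hF' hM hM' t ht => ?_⟩
  have hM0 : 0 ≤ M := (abs_nonneg _).trans (hM 0)
  rcases le_total t 1 with ht1 | ht1
  · have hbd : M ≤ C * M * t ^ (-κ) := (le_mul_of_one_le_left hM0 hC).trans <|
      le_mul_of_one_le_right (by positivity)
        (Real.one_le_rpow_of_pos_of_le_one_of_nonpos ht ht1 (neg_nonpos.2 hκ))
    exact ⟨(hM t).trans hbd, (hM' t).trans hbd⟩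
  · have hpos := Real.rpow_pos_of_pos ht κ
    rw [Real.rpow_neg ht.le, ← div_eq_mul_inv, le_div_iff₀ hpos, le_div_iff₀ hpos]
    rw [← abs_of_pos hpos, ← abs_mul, ← abs_mul, mul_comm, mul_comm (F' t)]
    exact abs_rpow_mul_le_of_bessel_ode hκ (fun s hs => hF s (by positivity))
      (fun s hs => hF' s (by positivity)) (hM 1) (hM' 1) ht1

end Decay

theorem min_one_le_rpow {t α : ℝ} (ht : 0 ≤ t) (hα : α ∈ Set.Icc (0 : ℝ) 1) : min 1 t ≤ t ^ α := by
  rcases le_total t 1 with h | h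
  · exact (min_le_right _ _).trans (Real.self_le_rpow_of_le_one ht h hα.2)
  · exact (min_le_left _ _).trans (Real.one_le_rpow h hα.1)

section DecayProfile

variable {E : Type*} [NormedAddCommGroup E] [NormedSpace ℝ E]

/-- An integrable majorant of the Schwartz functions, of the lowest convenient integer order. -/
def decayProfile (x : E) : ℝ :=
  (1 + ‖x‖) ^ (-(finrank ℝ E + 1 : ℝ))

theorem decayProfile_pos (x : E) : 0 < decayProfile x := by
  unfold decayProfile
  positivity

theorem continuous_decayProfile : Continuous (decayProfile : E → ℝ) :=
  (continuous_const.add continuous_norm).rpow_const fun x =>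
    .inl (by positivity : (0 : ℝ) < 1 + ‖x‖).ne'

theorem decayProfile_neg (x : E) : decayProfile (-x) = decayProfile x := by
  rw [decayProfile, decayProfile, norm_neg]

theorem decayProfile_le_of_norm_sub_le_one {x y : E} (h : ‖x - y‖ ≤ 1) :
    decayProfile x ≤ 2 ^ (finrank ℝ E + 1) * decayProfile y := by
  have hy : 1 + ‖y‖ ≤ 2 * (1 + ‖x‖) := by
    linarith [norm_le_insert x y, norm_nonneg x]
  have hx : (0 : ℝ) < 1 + ‖x‖ := by positivity
  rw [decayProfile, decayProfile, ← Nat.cast_add_one, Real.rpow_neg hx.le,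
    Real.rpow_neg (by positivity), Real.rpow_natCast, Real.rpow_natCast, ← div_eq_mul_inv,
    inv_eq_one_div, div_le_div_iff₀ (by positivity) (by positivity), one_mul, ← mul_pow]
  gcongr

theorem exists_norm_le_decayProfile (Φ : SchwartzMap E ℂ) :
    ∃ C : ℝ, 0 < C ∧ ∀ x, ‖Φ x‖ ≤ C * decayProfile x ∧ ‖fderiv ℝ Φ x‖ ≤ C * decayProfile x := by
  set C := 2 ^ (finrank ℝ E + 1) *
    (Finset.Iic (finrank ℝ E + 1, 1)).sup (fun m => SchwartzMap.seminorm ℝ m.1 m.2) Φ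
  have hbound (k : ℕ) (hk : k ≤ 1) (x : E) :
      ‖iteratedFDeriv ℝ k Φ x‖ ≤ (C + 1) * decayProfile x := by
    have h := SchwartzMap.one_add_le_sup_seminorm_apply (𝕜 := ℝ) (m := (finrank ℝ E + 1, 1))
      le_rfl hk Φ x
    rw [decayProfile, ← Nat.cast_add_one, Real.rpow_neg (by positivity), Real.rpow_natCast,
      ← div_eq_mul_inv, le_div_iff₀ (by positivity), mul_comm]
    linarith
  refine ⟨C + 1, by positivity, fun x => ⟨?_, ?_⟩⟩
  · simpa only [norm_iteratedFDeriv_zero] using hbound 0 zero_le_one x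
  · simpa only [norm_iteratedFDeriv_one] using hbound 1 le_rfl x

theorem exists_norm_sub_le_decayProfile (Φ : SchwartzMap E ℂ) :
    ∃ C : ℝ, 0 < C ∧ ∀ α ∈ Set.Icc (0 : ℝ) 1, ∀ x y,
      ‖Φ x - Φ y‖ ≤ C * ‖x - y‖ ^ α * (decayProfile x + decayProfile y) := by
  obtain ⟨C, hC, h⟩ := exists_norm_le_decayProfile Φ
  refine ⟨2 ^ (finrank ℝ E + 1) * C, by positivity, fun α hα x y => ?_⟩
  have hx := decayProfile_pos x
  have hy := decayProfile_pos y
  have hpow : (1 : ℝ) ≤ 2 ^ (finrank ℝ E + 1) := one_le_pow₀ one_le_two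
  suffices ‖Φ x - Φ y‖ ≤ 2 ^ (finrank ℝ E + 1) * C * min 1 ‖x - y‖ *
      (decayProfile x + decayProfile y) by
    refine this.trans ?_
    gcongr
    exact min_one_le_rpow (norm_nonneg _) hα
  rcases le_total ‖x - y‖ 1 with hxy | hxy
  · rw [min_eq_right hxy]
    have hmv := (convex_closedBall x 1).norm_image_sub_le_of_norm_fderiv_le (f := Φ) (𝕜 := ℝ)
      (C := C * (2 ^ (finrank ℝ E + 1) * decayProfile x)) (fun z _ => Φ.differentiableAt)
      (fun z hz => (h z).2.trans (by
        gcongr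
        exact decayProfile_le_of_norm_sub_le_one (mem_closedBall_iff_norm.1 hz)))
      (mem_closedBall_iff_norm'.2 hxy) (mem_closedBall_self zero_le_one)
    calc ‖Φ x - Φ y‖ ≤ 2 ^ (finrank ℝ E + 1) * C * ‖x - y‖ * decayProfile x := by linarith
      _ ≤ _ := by gcongr; linarith
  · rw [min_eq_left hxy, mul_one]
    calc ‖Φ x - Φ y‖ ≤ 1 * C * (decayProfile x + decayProfile y) := by
          linarith [norm_sub_le (Φ x) (Φ y), (h x).1, (h y).1]
      _ ≤ _ := by gcongr

end DecayProfile

variable {E : Type*} [NormedAddCommGroup E] [InnerProductSpace ℝ E] [FiniteDimensional ℝ E]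

section Orthonormal

theorem exists_linearIsometryEquiv_of_orthonormal {ι : Type*} {b b' : ι → E}
    (hb : Orthonormal ℝ b) (hb' : Orthonormal ℝ b') : ∃ U : E ≃ₗᵢ[ℝ] E, ∀ i, U (b i) = b' i := by
  set v := Basis.span hb.linearIndependent
  have hv : ∀ i, (v i : E) = b i := fun i =>
    congrArg Subtype.val (Basis.span_apply hb.linearIndependent i)
  have hL : ∀ i, v.constr ℝ b' (v i) = b' i := v.constr_basis ℝ b'
  let L : Submodule.span ℝ (Set.range b) →ₗᵢ[ℝ] E :=
    (v.constr ℝ b').isometryOfOrthonormal (v := v)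
      (by simpa only [Orthonormal, Submodule.coe_norm, Submodule.coe_inner, hv] using hb)
      (by simpa only [Function.comp_def, hL] using hb')
  refine ⟨L.extend.toLinearIsometryEquiv rfl, fun i => ?_⟩
  rw [LinearIsometry.coe_toLinearIsometryEquiv, ← hv i, L.extend_apply]
  exact hL i

omit [FiniteDimensional ℝ E] in
theorem orthonormal_cos_sin {e v : E} (h : Orthonormal ℝ ![e, v]) (θ : ℝ) :
    Orthonormal ℝ ![Real.cos θ • e + Real.sin θ • v, Real.cos θ • v - Real.sin θ • e] := by
  obtain ⟨he, hev, hv⟩ : ‖e‖ = 1 ∧ ⟪e, v⟫ = 0 ∧ ‖v‖ = 1 := by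
    simpa [orthonormal_vecCons_iff] using h
  have hsq (a b : ℝ) (hab : a ^ 2 + b ^ 2 = 1) : ‖a • e + b • v‖ = 1 := by
    rw [← sq_eq_sq₀ (norm_nonneg _) zero_le_one, norm_add_sq_real]
    simpa [norm_smul, real_inner_smul_left, real_inner_smul_right, he, hv, hev] using hab
  have h₁ := hsq (Real.cos θ) (Real.sin θ) (Real.cos_sq_add_sin_sq θ)
  have h₂ := hsq (-Real.sin θ) (Real.cos θ) (by simp)
  rw [neg_smul, neg_add_eq_sub] at h₂
  have h₃ : ⟪Real.cos θ • e + Real.sin θ • v, Real.cos θ • v - Real.sin θ • e⟫ = 0 := by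
    simp only [inner_add_left, inner_sub_right, real_inner_smul_left, real_inner_smul_right,
      real_inner_self_eq_norm_sq, real_inner_comm e v, he, hv, hev]
    ring
  simpa [orthonormal_vecCons_iff, h₁, h₂] using h₃

end Orthonormal

variable [MeasurableSpace E] [BorelSpace E]

local notation "σ" => Measure.toSphere (volume : Measure E)

section Sphere

theorem integrable_sphere_of_continuous {F : Type*} [NormedAddCommGroup F]
    {g : sphere (0 : E) 1 → F} (hg : Continuous g) : Integrable g σ :=
  hg.integrable_of_hasCompactSupport (HasCompactSupport.of_compactSpace g)

theorem lintegral_eq_lintegral_toSphere [Nontrivial E] (μ : Measure E) [μ.IsAddHaarMeasure]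
    {f : E → ℝ≥0∞} (hf : Measurable f) :
    ∫⁻ x, f x ∂μ = ∫⁻ ω, (∫⁻ r in Set.Ioi (0 : ℝ),
      ENNReal.ofReal (r ^ (finrank ℝ E - 1)) * f (r • (ω : E))) ∂μ.toSphere := by
  calc
    ∫⁻ x, f x ∂μ = ∫⁻ x : ({(0)}ᶜ : Set E), f x ∂(μ.comap (↑)) := by
      rw [lintegral_subtype_comap (measurableSet_singleton _).compl, restrict_compl_singleton]
    _ = ∫⁻ z, f ((z.2 : ℝ) • (z.1 : E)) ∂μ.toSphere.prod (.volumeIoiPow (finrank ℝ E - 1)) := by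
      rw [← μ.measurePreserving_homeomorphUnitSphereProd.lintegral_comp_emb
        (Homeomorph.measurableEmbedding _)]
      refine lintegral_congr fun x => ?_
      have hx : ‖(x : E)‖ ≠ 0 := norm_ne_zero_iff.2 x.2
      simp [homeomorphUnitSphereProd_apply_snd_coe, smul_smul, hx]
    _ = ∫⁻ ω, ∫⁻ r, f ((r : ℝ) • (ω : E)) ∂(Measure.volumeIoiPow (finrank ℝ E - 1))
          ∂μ.toSphere := by
      rw [lintegral_prod]
      fun_prop
    _ = _ := by
      refine lintegral_congr fun ω => ?_
      rw [Measure.volumeIoiPow, lintegral_withDensity_eq_lintegral_mul _ (by fun_prop)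
        (by fun_prop)]
      exact lintegral_subtype_comap measurableSet_Ioi
        (fun r : ℝ => ENNReal.ofReal (r ^ (finrank ℝ E - 1)) * f (r • (ω : E)))

/-- The action of a linear isometry on the unit sphere. -/
def sphereMap (U : E ≃ₗᵢ[ℝ] E) (ω : sphere (0 : E) 1) : sphere (0 : E) 1 :=
  ⟨U ω, by simp⟩

theorem measurePreserving_sphereMap (U : E ≃ₗᵢ[ℝ] E) : MeasurePreserving (sphereMap U) σ σ := by
  have hU : Measurable (sphereMap U) :=
    (U.continuous.comp continuous_subtype_val).measurable.subtype_mk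
  refine ⟨hU, Measure.ext fun s hs => ?_⟩
  have hcone : Set.Ioo (0 : ℝ) 1 • ((↑) '' (sphereMap U ⁻¹' s) : Set E) =
      U ⁻¹' (Set.Ioo (0 : ℝ) 1 • ((↑) '' s : Set E)) := by
    ext x
    simp only [Set.mem_smul, Set.mem_preimage]
    constructor
    · rintro ⟨r, hr, _, ⟨ω, hω, rfl⟩, rfl⟩
      exact ⟨r, hr, _, ⟨sphereMap U ω, hω, rfl⟩, (map_smul U r (ω : E)).symm⟩
    · rintro ⟨r, hr, _, ⟨ω, hω, rfl⟩, hx⟩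
      refine ⟨r, hr, _, ⟨sphereMap U.symm ω, ?_, rfl⟩, ?_⟩
      · simpa [sphereMap] using hω
      · exact U.injective (by simpa [sphereMap] using hx)
  rw [Measure.map_apply hU hs, Measure.toSphere_apply' _ hs, Measure.toSphere_apply' _ (hU hs),
    hcone]
  congr 1
  exact U.measurePreserving.measure_preimage_emb U.toHomeomorph.measurableEmbedding _

theorem integral_sphere_comp_linearIsometryEquiv {F : Type*} [NormedAddCommGroup F]
    [NormedSpace ℝ F] (U : E ≃ₗᵢ[ℝ] E) (g : E → F) :
    ∫ ω : sphere (0 : E) 1, g (U ω) ∂σ = ∫ ω : sphere (0 : E) 1, g ω ∂σ :=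
  (measurePreserving_sphereMap U).integral_comp
    (MeasurableEquiv.measurableEmbedding ⟨⟨sphereMap U, sphereMap U.symm,
      fun ω => by simp [sphereMap], fun ω => by simp [sphereMap]⟩,
      (measurePreserving_sphereMap U).measurable,
      (measurePreserving_sphereMap U.symm).measurable⟩) (fun ω => g ω)

theorem integral_sphere_comp_inner_orthonormal {F : Type*} [NormedAddCommGroup F]
    [NormedSpace ℝ F] {ι : Type*} {b b' : ι → E} (hb : Orthonormal ℝ b) (hb' : Orthonormal ℝ b')
    (g : (ι → ℝ) → F) :
    ∫ ω : sphere (0 : E) 1, g (fun i => ⟪b i, ω⟫) ∂σ =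
      ∫ ω : sphere (0 : E) 1, g (fun i => ⟪b' i, ω⟫) ∂σ := by
  obtain ⟨U, hU⟩ := exists_linearIsometryEquiv_of_orthonormal hb hb'
  rw [← integral_sphere_comp_linearIsometryEquiv U fun x => g fun i => ⟪b' i, x⟫]
  simp only [← hU, LinearIsometryEquiv.inner_map_map]

theorem hasDerivAt_integral_of_compactSpace {K : Type*} [TopologicalSpace K] [CompactSpace K]
    [MeasurableSpace K] [OpensMeasurableSpace K] {μ : Measure K} [IsFiniteMeasure μ]
    {g g' : ℝ → K → ℝ} (hg : ∀ t, Continuous (g t)) (hg' : Continuous (Function.uncurry g'))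
    (hgg' : ∀ t ω, HasDerivAt (g · ω) (g' t ω) t) (t : ℝ) :
    HasDerivAt (fun t => ∫ ω, g t ω ∂μ) (∫ ω, g' t ω ∂μ) t := by
  obtain ⟨C, hC⟩ := ((isCompact_closedBall t 1).prod isCompact_univ).exists_bound_of_continuousOn
    hg'.continuousOn
  have hint : ∀ {f : K → ℝ}, Continuous f → Integrable f μ := fun hf =>
    hf.integrable_of_hasCompactSupport (HasCompactSupport.of_compactSpace _)
  exact (hasDerivAt_integral_of_dominated_loc_of_deriv_le (closedBall_mem_nhds t one_pos)
    (.of_forall fun t => (hint (hg t)).aestronglyMeasurable) (hint (hg t))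
    (hint (hg'.comp (Continuous.prodMk_right t))).aestronglyMeasurable
    (.of_forall fun ω s hs => hC (s, ω) ⟨hs, Set.mem_univ ω⟩)
    (integrable_const C) (.of_forall fun ω s _ => hgg' s ω)).2

/-- Infinitesimal rotation invariance of the sphere in the plane of `e` and `v`. -/
theorem integral_sphere_inner_sq_mul_deriv {e v : E} (h : Orthonormal ℝ ![e, v]) {φ φ' : ℝ → ℝ}
    (hφ : ∀ u, HasDerivAt φ (φ' u) u) (hφ' : Continuous φ') :
    ∫ ω : sphere (0 : E) 1, ⟪v, ω⟫ ^ 2 * φ' ⟪e, ω⟫ ∂σ =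
      ∫ ω : sphere (0 : E) 1, ⟪e, ω⟫ * φ ⟪e, ω⟫ ∂σ := by
  have : Continuous φ := continuous_iff_continuousAt.2 fun u => (hφ u).continuousAt
  let c (θ : ℝ) (ω : sphere (0 : E) 1) : ℝ := Real.cos θ * ⟪e, ω⟫ + Real.sin θ * ⟪v, ω⟫
  let s (θ : ℝ) (ω : sphere (0 : E) 1) : ℝ := Real.cos θ * ⟪v, ω⟫ - Real.sin θ * ⟪e, ω⟫
  have hc : ∀ θ ω, HasDerivAt (c · ω) (s θ ω) θ := fun θ ω =>
    (((Real.hasDerivAt_cos θ).mul_const _).add ((Real.hasDerivAt_sin θ).mul_const _)).congr_deriv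
      (by simp only [s]; ring)
  have hs : ∀ θ ω, HasDerivAt (s · ω) (-c θ ω) θ := fun θ ω =>
    (((Real.hasDerivAt_cos θ).mul_const _).sub ((Real.hasDerivAt_sin θ).mul_const _)).congr_deriv
      (by simp only [c]; ring)
  have hderiv := hasDerivAt_integral_of_compactSpace (μ := σ)
    (g := fun θ ω => s θ ω * φ (c θ ω))
    (g' := fun θ ω => -c θ ω * φ (c θ ω) + s θ ω * (φ' (c θ ω) * s θ ω))
    (fun θ => by fun_prop) (by fun_prop)
    (fun θ ω => (hs θ ω).mul ((hφ _).comp θ (hc θ ω))) 0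
  have hconst : ∀ θ, ∫ ω, s θ ω * φ (c θ ω) ∂σ = ∫ ω : sphere (0 : E) 1, ⟪v, ω⟫ * φ ⟪e, ω⟫ ∂σ :=
    fun θ => by
      simpa [inner_add_left, inner_sub_left, real_inner_smul_left] using
        integral_sphere_comp_inner_orthonormal (orthonormal_cos_sin h θ) h fun u => u 1 * φ (u 0)
  have hzero : ∫ ω : sphere (0 : E) 1, ⟪v, ω⟫ ^ 2 * φ' ⟪e, ω⟫ - ⟪e, ω⟫ * φ ⟪e, ω⟫ ∂σ = 0 := by
    simp only [hconst] at hderiv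
    rw [(hasDerivAt_const (0 : ℝ) _).unique hderiv]
    simp only [c, s, Real.cos_zero, Real.sin_zero]
    congr 1 with ω
    ring_nf
  rwa [integral_sub (integrable_sphere_of_continuous (by fun_prop))
    (integrable_sphere_of_continuous (by fun_prop)), sub_eq_zero] at hzero

theorem integral_sphere_one_sub_inner_sq_mul_deriv {e : E} (he : ‖e‖ = 1) {φ φ' : ℝ → ℝ}
    (hφ : ∀ u, HasDerivAt φ (φ' u) u) (hφ' : Continuous φ') :
    ∫ ω : sphere (0 : E) 1, (1 - ⟪e, ω⟫ ^ 2) * φ' ⟪e, ω⟫ ∂σ =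
      ((finrank ℝ E : ℝ) - 1) * ∫ ω : sphere (0 : E) 1, ⟪e, ω⟫ * φ ⟪e, ω⟫ ∂σ := by
  classical
  have : Continuous φ := continuous_iff_continuousAt.2 fun u => (hφ u).continuousAt
  obtain ⟨u, b, heu, hb⟩ := Orthonormal.exists_orthonormalBasis_extension (𝕜 := ℝ) (v := {e})
    (by simpa [orthonormal_subsingleton_iff] using he)
  have hub : Orthonormal ℝ ((↑) : u → E) := hb ▸ b.orthonormal
  replace heu : e ∈ u := heu rfl
  have hcard : ((u.erase e).card : ℝ) = finrank ℝ E - 1 := by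
    rw [finrank_eq_card_finset_basis b.toBasis, Finset.cast_card_erase_of_mem heu]
  have hpyth (ω : sphere (0 : E) 1) : 1 - ⟪e, (ω : E)⟫ ^ 2 = ∑ v ∈ u.erase e, ⟪v, ω⟫ ^ 2 := by
    have hsum := b.sum_sq_norm_inner_right (ω : E)
    simp only [hb, Real.norm_eq_abs, sq_abs, norm_eq_of_mem_sphere, one_pow] at hsum
    rw [Finset.sum_coe_sort u fun v => ⟪v, (ω : E)⟫ ^ 2, ← Finset.add_sum_erase u _ heu] at hsum
    linarith
  have hpair : ∀ v ∈ u.erase e, Orthonormal ℝ ![e, v] := fun v hv => by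
    obtain ⟨hve, hvu⟩ := Finset.mem_erase.1 hv
    simpa [orthonormal_vecCons_iff, he] using
      And.intro (hub.inner_eq_zero (i := ⟨e, heu⟩) (j := ⟨v, hvu⟩) (by simpa using hve.symm))
        (hub.norm_eq_one ⟨v, hvu⟩)
  simp only [hpyth, Finset.sum_mul]
  rw [integral_finsetSum _ fun v _ => integrable_sphere_of_continuous (by fun_prop),
    Finset.sum_congr rfl fun v hv => integral_sphere_inner_sq_mul_deriv (hpair v hv) hφ hφ',
    Finset.sum_const, nsmul_eq_mul, hcard]

end Sphere

section Kernel

/-- The profile of the Fourier transform of surface measure along the direction `e`. -/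
def sphereCos (e : E) (t : ℝ) : ℝ :=
  ∫ ω : sphere (0 : E) 1, Real.cos (t * ⟪e, ω⟫) ∂σ

/-- The derivative of `sphereCos`. -/
def sphereCosDeriv (e : E) (t : ℝ) : ℝ :=
  ∫ ω : sphere (0 : E) 1, -Real.sin (t * ⟪e, ω⟫) * ⟪e, ω⟫ ∂σ

theorem hasDerivAt_sphereCos (e : E) (t : ℝ) :
    HasDerivAt (sphereCos e) (sphereCosDeriv e t) t :=
  hasDerivAt_integral_of_compactSpace
    (g := fun t (ω : sphere (0 : E) 1) => Real.cos (t * ⟪e, (ω : E)⟫))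
    (fun t => by fun_prop) (by fun_prop)
    (fun t ω => (hasDerivAt_mul_const (⟪e, (ω : E)⟫ : ℝ)).cos) t

theorem hasDerivAt_sphereCosDeriv {e : E} (he : ‖e‖ = 1) {t : ℝ} (ht : 0 < t) :
    HasDerivAt (sphereCosDeriv e)
      (-(((finrank ℝ E : ℝ) - 1) / t) * sphereCosDeriv e t - sphereCos e t) t := by
  have hderiv := hasDerivAt_integral_of_compactSpace (μ := σ)
    (g := fun t ω => -Real.sin (t * ⟪e, (ω : E)⟫) * ⟪e, ω⟫)
    (g' := fun t ω => -(Real.cos (t * ⟪e, (ω : E)⟫) * ⟪e, ω⟫) * ⟪e, ω⟫)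
    (fun t => by fun_prop) (by fun_prop)
    (fun t ω => ((hasDerivAt_mul_const (⟪e, (ω : E)⟫ : ℝ)).sin.neg).mul_const _) t
  have hibp := integral_sphere_one_sub_inner_sq_mul_deriv he
    (φ := fun u => Real.sin (t * u) / t) (φ' := fun u => Real.cos (t * u))
    (fun u => ((hasDerivAt_const_mul t).sin.div_const t).congr_deriv
      (mul_div_cancel_right₀ _ ht.ne')) (by fun_prop)
  refine hderiv.congr_deriv ?_
  calc ∫ ω : sphere (0 : E) 1, -(Real.cos (t * ⟪e, (ω : E)⟫) * ⟪e, ω⟫) * ⟪e, ω⟫ ∂σ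
      = ∫ ω : sphere (0 : E) 1, (1 - ⟪e, (ω : E)⟫ ^ 2) * Real.cos (t * ⟪e, ω⟫)
          - Real.cos (t * ⟪e, ω⟫) ∂σ := by congr 1 with ω; ring
    _ = (((finrank ℝ E : ℝ) - 1) * ∫ ω : sphere (0 : E) 1,
          ⟪e, (ω : E)⟫ * (Real.sin (t * ⟪e, ω⟫) / t) ∂σ) - sphereCos e t := by
        rw [integral_sub (integrable_sphere_of_continuous (by fun_prop))
          (integrable_sphere_of_continuous (by fun_prop)), hibp, sphereCos]
    _ = -(((finrank ℝ E : ℝ) - 1) / t) * sphereCosDeriv e t - sphereCos e t := by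
        rw [sphereCosDeriv, ← integral_const_mul, ← integral_const_mul]
        congr 2 with ω
        ring

theorem abs_integral_sphere_le {g : sphere (0 : E) 1 → ℝ} (hg : ∀ ω, |g ω| ≤ 1) :
    |∫ ω, g ω ∂σ| ≤ Measure.real σ Set.univ := by
  simpa using norm_integral_le_of_norm_le_const (f := g) (μ := σ) (.of_forall hg)

variable (E) in
theorem exists_sphereCos_decay [Nontrivial E] :
    ∃ C : ℝ, 0 < C ∧ ∀ e : E, ‖e‖ = 1 → ∀ t, 0 < t →
      |sphereCos e t| ≤ C * t ^ (-(((finrank ℝ E : ℝ) - 1) / 2)) ∧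
      |sphereCosDeriv e t| ≤ C * t ^ (-(((finrank ℝ E : ℝ) - 1) / 2)) := by
  have hd : (1 : ℝ) ≤ finrank ℝ E := mod_cast finrank_pos
  obtain ⟨C, hC, h⟩ := exists_abs_le_rpow_neg_of_bessel_ode
    (κ := ((finrank ℝ E : ℝ) - 1) / 2) (by linarith)
  refine ⟨C * (Measure.real σ Set.univ + 1), by positivity, fun e he t ht => ?_⟩
  refine h _ _ _ (fun t _ => hasDerivAt_sphereCos e t) (fun t ht => ?_)
    (fun t => (abs_integral_sphere_le fun ω => Real.abs_cos_le_one _).trans (by linarith))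
    (fun t => (abs_integral_sphere_le fun ω => ?_).trans (by linarith)) t ht
  · rw [mul_div_cancel₀ _ two_ne_zero]
    exact hasDerivAt_sphereCosDeriv he ht
  · rw [abs_mul, abs_neg]
    refine mul_le_one₀ (Real.abs_sin_le_one _) (abs_nonneg _) ?_
    simpa [he] using abs_real_inner_le_norm e (ω : E)

/-- The Fourier transform of surface measure on the unit sphere. The sphere being symmetric, this
is the cosine transform. -/
def sphereKernel (y : E) : ℝ :=
  ∫ ω : sphere (0 : E) 1, Real.cos (2 * π * ⟪y, ω⟫) ∂σ

theorem integral_sphere_cexp_inner (y : E) :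
    ∫ ω : sphere (0 : E) 1, cexp (↑(-2 * π * ⟪y, (ω : E)⟫) * I) ∂σ = sphereKernel y := by
  have hcont (t : ℝ) : Integrable (fun ω : sphere (0 : E) 1 =>
      cexp (↑(t * ⟪y, (ω : E)⟫) * I)) σ := integrable_sphere_of_continuous (by fun_prop)
  have hneg := integral_sphere_comp_linearIsometryEquiv (LinearIsometryEquiv.neg ℝ)
    fun x : E => cexp (↑(-2 * π * ⟪y, x⟫) * I)
  simp only [LinearIsometryEquiv.coe_neg, inner_neg_right, neg_mul, mul_neg, neg_neg] at hneg
  have hsum : (2 : ℂ) * sphereKernel y =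
      (∫ ω : sphere (0 : E) 1, cexp (↑(2 * π * ⟪y, (ω : E)⟫) * I) ∂σ) +
        ∫ ω : sphere (0 : E) 1, cexp (↑(-2 * π * ⟪y, (ω : E)⟫) * I) ∂σ := by
    rw [← integral_add (hcont _) (hcont _), sphereKernel, ← integral_complex_ofReal,
      ← integral_const_mul]
    congr 1 with ω
    rw [ofReal_cos, two_cos]
    push_cast
    ring_nf
  simp only [neg_mul] at hsum ⊢
  linear_combination -hneg / 2 - hsum / 2

theorem sphereKernel_neg (y : E) : sphereKernel (-y) = sphereKernel y := by
  simp only [sphereKernel, inner_neg_left, mul_neg, Real.cos_neg]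

theorem continuous_sphereKernel : Continuous (sphereKernel : E → ℝ) :=
  continuous_of_dominated (bound := fun _ => 1) (fun y =>
      (integrable_sphere_of_continuous (by fun_prop)).aestronglyMeasurable)
    (fun y => .of_forall fun ω => Real.abs_cos_le_one _) (integrable_const _)
    (.of_forall fun ω => by fun_prop)

theorem abs_sphereKernel_le (y : E) : |sphereKernel y| ≤ Measure.real σ Set.univ :=
  abs_integral_sphere_le fun _ => Real.abs_cos_le_one _

theorem sphereKernel_smul (e : E) (t : ℝ) : sphereKernel (t • e) = sphereCos e (2 * π * t) := by
  simp only [sphereKernel, sphereCos, real_inner_smul_left, mul_assoc]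

variable (E) in
theorem exists_sphereKernel_smul_bound [Nontrivial E] :
    ∃ C : ℝ, 0 < C ∧ ∀ y : E, y ≠ 0 → ∀ r₁ r₂ : ℝ, 1 ≤ r₁ → 1 ≤ r₂ →
      |sphereKernel (r₁ • y)| ≤ C * ‖y‖ ^ (-(((finrank ℝ E : ℝ) - 1) / 2)) ∧
      |sphereKernel (r₁ • y) - sphereKernel (r₂ • y)| ≤
        C * ‖y‖ ^ (-(((finrank ℝ E : ℝ) - 1) / 2)) * (|r₁ - r₂| * ‖y‖) := by
  obtain ⟨C, hC, h⟩ := exists_sphereCos_decay E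
  set κ := ((finrank ℝ E : ℝ) - 1) / 2
  have hκ : 0 ≤ κ := by
    have : (1 : ℝ) ≤ finrank ℝ E := mod_cast finrank_pos
    simp only [κ]; linarith
  have h2π : 1 ≤ 2 * π := by linarith [Real.pi_gt_three]
  refine ⟨2 * π * C, by positivity, fun y hy r₁ r₂ hr₁ hr₂ => ?_⟩
  have hy0 : 0 < ‖y‖ := norm_pos_iff.2 hy
  set e := ‖y‖⁻¹ • y
  have he : ‖e‖ = 1 := norm_smul_inv_norm hy
  have hye (r : ℝ) : sphereKernel (r • y) = sphereCos e (r * (2 * π * ‖y‖)) := by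
    rw [show r * (2 * π * ‖y‖) = 2 * π * (r * ‖y‖) by ring, ← sphereKernel_smul, smul_smul,
      mul_assoc, mul_inv_cancel₀ hy0.ne', mul_one]
  have hpow (r : ℝ) (hr : 1 ≤ r) :
      C * (r * (2 * π * ‖y‖)) ^ (-κ) ≤ C * ‖y‖ ^ (-κ) := by
    refine mul_le_mul_of_nonneg_left (Real.rpow_le_rpow_of_nonpos hy0 ?_ (neg_nonpos.2 hκ)) hC.le
    nlinarith [mul_le_mul hr h2π zero_le_one (by linarith)]
  rw [hye, hye]
  constructor
  · refine ((h e he _ (by positivity)).1.trans (hpow r₁ hr₁)).trans ?_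
    exact mul_le_mul_of_nonneg_right (le_mul_of_one_le_left hC.le h2π) (by positivity)
  · have hlip := (convex_Ici (1 : ℝ)).norm_image_sub_le_of_norm_hasDerivWithin_le
      (f := fun r => sphereCos e (r * (2 * π * ‖y‖))) (C := C * ‖y‖ ^ (-κ) * (2 * π * ‖y‖))
      (fun r _ => ((hasDerivAt_sphereCos e _).comp r
        (hasDerivAt_mul_const (2 * π * ‖y‖))).hasDerivWithinAt) (fun r hr => ?_) hr₂ hr₁
    · exact hlip.trans_eq (by rw [Real.norm_eq_abs]; ring)
    · have hr0 : 0 < r := zero_lt_one.trans_le hr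
      rw [norm_mul, Real.norm_of_nonneg (by positivity : 0 ≤ 2 * π * ‖y‖)]
      gcongr
      exact (h e he _ (by positivity)).2.trans (hpow r hr)

variable (E) in
theorem exists_sphereKernel_sub_le [Nontrivial E] :
    ∃ C : ℝ, 0 < C ∧ ∀ α ∈ Set.Icc (0 : ℝ) 1, ∀ y : E, y ≠ 0 → ∀ r₁ r₂ : ℝ, 1 ≤ r₁ → 1 ≤ r₂ →
      |sphereKernel (r₁ • y) - sphereKernel (r₂ • y)| ≤
        C * |r₁ - r₂| ^ α * ‖y‖ ^ (α - ((finrank ℝ E : ℝ) - 1) / 2) := by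
  obtain ⟨C, hC, h⟩ := exists_sphereKernel_smul_bound E
  refine ⟨2 * C, by positivity, fun α hα y hy r₁ r₂ hr₁ hr₂ => ?_⟩
  have hy0 : 0 < ‖y‖ := norm_pos_iff.2 hy
  obtain ⟨h₁, hlip⟩ := h y hy r₁ r₂ hr₁ hr₂
  have h₂ := (h y hy r₂ r₁ hr₂ hr₁).1
  set P := C * ‖y‖ ^ (-(((finrank ℝ E : ℝ) - 1) / 2)) with hP
  have hP0 : 0 ≤ P := by positivity
  have hmin : |sphereKernel (r₁ • y) - sphereKernel (r₂ • y)| ≤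
      2 * P * min 1 (|r₁ - r₂| * ‖y‖) := by
    rw [mul_min_of_nonneg _ _ (by positivity)]
    refine le_min ((abs_sub _ _).trans (by linarith)) (hlip.trans ?_)
    exact mul_le_mul_of_nonneg_right (by linarith) (by positivity)
  calc _ ≤ 2 * P * (|r₁ - r₂| * ‖y‖) ^ α :=
        hmin.trans (mul_le_mul_of_nonneg_left (min_one_le_rpow (by positivity) hα) (by positivity))
    _ = _ := by
      rw [hP, Real.mul_rpow (abs_nonneg _) hy0.le, sub_eq_add_neg α, Real.rpow_add hy0]
      ring

end Kernel

section Fourier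

variable {H : Type*} [NormedAddCommGroup H] [InnerProductSpace ℂ H]

theorem norm_fourier_le_integral_norm (f : E → H) (ξ : E) : ‖𝓕 f ξ‖ ≤ ∫ x, ‖f x‖ :=
  VectorFourier.norm_fourierIntegral_le_integral_norm _ _ _ _ _

theorem continuous_fourier_of_integrable {f : E → H} (hf : Integrable f) : Continuous (𝓕 f) :=
  VectorFourier.fourierIntegral_continuous Real.continuous_fourierChar
    (by exact continuous_inner) hf

theorem fourier_toLp_ae_eq [CompleteSpace H] {f : E → H} (hf : Integrable f) (hf2 : MemLp f 2) :
    (𝓕 (hf2.toLp f) : Lp H 2 (volume : Measure E)) =ᵐ[volume] 𝓕 f := by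
  refine ae_eq_of_integral_contDiff_smul_eq ((Lp.memLp _).locallyIntegrable one_le_two)
    (continuous_fourier_of_integrable hf).locallyIntegrable fun g hg hgc => ?_
  let G : SchwartzMap E ℂ := HasCompactSupport.toSchwartzMap
    (f := fun x => (g x : ℂ)) (hgc.comp_left ofReal_zero) (ofRealCLM.contDiff.comp hg)
  have hdist := DFunLike.congr_fun (Lp.fourier_toTemperedDistribution_eq (hf2.toLp f)) G
  simp only [TemperedDistribution.fourier_apply, Lp.toTemperedDistribution_apply] at hdist
  have hG (u : E → H) : ∫ ξ, g ξ • u ξ = ∫ ξ, G ξ • u ξ :=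
    integral_congr_ae (.of_forall fun ξ => (Complex.coe_smul (g ξ) (u ξ)).symm)
  rw [hG, hG, ← hdist]
  calc ∫ x, 𝓕 G x • hf2.toLp f x = ∫ x, 𝓕 G x • f x := by
        refine integral_congr_ae ?_
        filter_upwards [hf2.coeFn_toLp] with x hx
        rw [hx]
    _ = ∫ ξ, G ξ • 𝓕 f ξ := by
        rw [SchwartzMap.fourier_coe]
        simpa using! VectorFourier.integral_fourierIntegral_smul_eq_flip (L := innerₗ E)
          Real.continuous_fourierChar continuous_inner G.integrable hf

theorem eLpNorm_fourier_eq [CompleteSpace H] {f : E → H} (hf : Integrable f) (hf2 : MemLp f 2) :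
    eLpNorm (𝓕 f) 2 = eLpNorm f 2 := by
  rw [← eLpNorm_congr_ae (fourier_toLp_ae_eq hf hf2), ← eLpNorm_congr_ae hf2.coeFn_toLp,
    ← Lp.enorm_def, ← Lp.enorm_def, ← ofReal_norm, Lp.norm_fourier_eq, ofReal_norm]

end Fourier

section KernelForm

/-- The sesquilinear form with the real convolution kernel `L`, that is `⟨g, L ∗ f⟩`; a restricted
norm of `𝓕 f` is `kernelForm L f f` for a suitable `L`. -/
def kernelForm (L : E → ℝ) (f g : E → ℂ) : ℂ :=
  ∫ z : E × E, f z.1 * conj (g z.2) * (L (z.1 - z.2) : ℂ)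

variable {f g : E → ℂ} {L L' : E → ℝ} {M M' : ℝ}

theorem integrable_mul_conj_prod (hf : Integrable f) (hg : Integrable g) :
    Integrable fun z : E × E => f z.1 * conj (g z.2) :=
  hf.mul_prod (f := f) (g := fun y => conj (g y)) (hg.congr' (by fun_prop) (by simp))

theorem integrable_kernelForm (hf : Integrable f) (hg : Integrable g) (hL : Continuous L)
    (hM : ∀ z, |L z| ≤ M) :
    Integrable fun z : E × E => f z.1 * conj (g z.2) * (L (z.1 - z.2) : ℂ) :=
  (integrable_mul_conj_prod hf hg).mul_bdd (c := M) (by fun_prop)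
    (.of_forall fun z => by rw [norm_real]; exact hM _)

theorem norm_kernelForm_le (hf : Integrable f) (hg : Integrable g) (hM : ∀ z, |L z| ≤ M) :
    ‖kernelForm L f g‖ ≤ M * ((∫ x, ‖f x‖) * ∫ x, ‖g x‖) := by
  rw [← integral_prod_mul, ← integral_const_mul]
  refine norm_integral_le_of_norm_le ((hf.norm.mul_prod hg.norm).const_mul M)
    (.of_forall fun z => ?_)
  rw [norm_mul, norm_mul, RCLike.norm_conj, norm_real, mul_comm M]
  gcongr
  exact hM _

theorem kernelForm_add (hf : Integrable f) (hg : Integrable g) (hL : Continuous L)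
    (hL' : Continuous L') (hM : ∀ z, |L z| ≤ M) (hM' : ∀ z, |L' z| ≤ M') :
    kernelForm (fun z => L z + L' z) f g = kernelForm L f g + kernelForm L' f g := by
  rw [kernelForm, kernelForm, kernelForm,
    ← integral_add (integrable_kernelForm hf hg hL hM) (integrable_kernelForm hf hg hL' hM')]
  simp only [ofReal_add, mul_add]

theorem kernelForm_sub (hf : Integrable f) (hg : Integrable g) (hL : Continuous L)
    (hL' : Continuous L') (hM : ∀ z, |L z| ≤ M) (hM' : ∀ z, |L' z| ≤ M') :
    kernelForm (fun z => L z - L' z) f g = kernelForm L f g - kernelForm L' f g := by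
  rw [kernelForm, kernelForm, kernelForm,
    ← integral_sub (integrable_kernelForm hf hg hL hM) (integrable_kernelForm hf hg hL' hM')]
  simp only [ofReal_sub, mul_sub]

theorem conj_kernelForm (hL : ∀ z, L (-z) = L z) (f g : E → ℂ) :
    conj (kernelForm L f g) = kernelForm L g f := by
  rw [kernelForm, kernelForm, ← integral_conj, Measure.volume_eq_prod, ← integral_prod_swap]
  refine integral_congr_ae (.of_forall fun z => ?_)
  simp only [Prod.fst_swap, Prod.snd_swap, map_mul, conj_conj, conj_ofReal]
  rw [← neg_sub z.1 z.2, hL]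
  ring

theorem norm_kernelForm_swap (hL : ∀ z, L (-z) = L z) (f g : E → ℂ) :
    ‖kernelForm L f g‖ = ‖kernelForm L g f‖ := by
  rw [← conj_kernelForm hL, RCLike.norm_conj]

theorem fourier_mul_conj_fourier (f g : E → ℂ) (ξ : E) :
    𝓕 f ξ * conj (𝓕 g ξ) =
      ∫ z : E × E, f z.1 * conj (g z.2) * cexp (↑(-2 * π * ⟪z.1 - z.2, ξ⟫) * I) := by
  rw [Real.fourier_eq', Real.fourier_eq', ← integral_conj, Measure.volume_eq_prod,
    ← integral_prod_mul]
  refine integral_congr_ae (.of_forall fun z => ?_)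
  simp only [smul_eq_mul, map_mul, ← Complex.exp_conj, conj_ofReal, conj_I]
  rw [inner_sub_left, show ((-2 * π * (⟪z.1, ξ⟫ - ⟪z.2, ξ⟫) : ℝ) : ℂ) * I =
    ((-2 * π * ⟪z.1, ξ⟫ : ℝ) : ℂ) * I + ((-2 * π * ⟪z.2, ξ⟫ : ℝ) : ℂ) * -I by push_cast; ring,
    Complex.exp_add]
  ring

/-- The kernel is the Fourier transform of the push-forward by `X` of the measure `w • ν`. -/
theorem integral_mul_fourier_mul_conj_fourier {Ω : Type*} [MeasurableSpace Ω] {ν : Measure Ω}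
    [SFinite ν] {X : Ω → E} (hX : Measurable X) {w : Ω → ℂ} (hw : Integrable w ν)
    (hf : Integrable f) (hg : Integrable g)
    (hL : ∀ z, ∫ a, w a * cexp (↑(-2 * π * ⟪z, X a⟫) * I) ∂ν = L z) :
    ∫ a, w a * (𝓕 f (X a) * conj (𝓕 g (X a))) ∂ν = kernelForm L f g := by
  have hint : Integrable (fun p : Ω × (E × E) => w p.1 * (f p.2.1 * conj (g p.2.2) *
      cexp (↑(-2 * π * ⟪p.2.1 - p.2.2, X p.1⟫) * I))) (ν.prod volume) := by
    have hm : Measurable fun p : Ω × (E × E) =>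
        cexp (↑(-2 * π * ⟪p.2.1 - p.2.2, X p.1⟫) * I) := by fun_prop
    refine ((hw.mul_prod (integrable_mul_conj_prod hf hg)).bdd_mul (c := 1)
      hm.aestronglyMeasurable (.of_forall fun p => (norm_exp_ofReal_mul_I _).le)).congr
      (.of_forall fun p => ?_)
    simp only
    ring
  simp only [fourier_mul_conj_fourier, ← integral_const_mul]
  rw [integral_integral_swap hint]
  refine integral_congr_ae (.of_forall fun z => ?_)
  simp only [← hL, ← integral_const_mul]
  exact integral_congr_ae (.of_forall fun a => by ring)

theorem integral_sphere_fourier_mul_conj_fourier (r : ℝ) (hf : Integrable f) (hg : Integrable g) :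
    ∫ ω : sphere (0 : E) 1, 𝓕 f (r • (ω : E)) * conj (𝓕 g (r • (ω : E))) ∂σ =
      kernelForm (fun z => sphereKernel (r • z)) f g := by
  simpa only [one_mul] using integral_mul_fourier_mul_conj_fourier (ν := σ)
    (X := fun ω : sphere (0 : E) 1 => r • (ω : E)) (by fun_prop) (integrable_const 1) hf hg
    (L := fun z => sphereKernel (r • z)) fun z => by
      rw [← integral_sphere_cexp_inner]
      simp only [one_mul, real_inner_smul_left, real_inner_smul_right]

theorem integral_sphere_norm_fourier_sq (r : ℝ) (hf : Integrable f) :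
    ((∫ ω : sphere (0 : E) 1, ‖𝓕 f (r • (ω : E))‖ ^ 2 ∂σ : ℝ) : ℂ) =
      kernelForm (fun z => sphereKernel (r • z)) f f := by
  rw [← integral_sphere_fourier_mul_conj_fourier r hf hf]
  simp only [mul_conj', ← ofReal_pow]
  exact integral_ofReal.symm

theorem integral_mul_fourier_mul_conj_fourier_volume {w : E → ℂ} (hw : Integrable w)
    (hf : Integrable f) (hg : Integrable g) (hL : ∀ z, 𝓕 w z = L z) :
    ∫ ξ, w ξ * (𝓕 f ξ * conj (𝓕 g ξ)) = kernelForm L f g :=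
  integral_mul_fourier_mul_conj_fourier measurable_id hw hf hg fun z => by
    rw [← hL, Real.fourier_eq']
    refine integral_congr_ae (.of_forall fun ξ => ?_)
    simp only [id, smul_eq_mul, real_inner_comm, mul_comm]

theorem fourier_modulation (f : E → ℂ) (ζ ξ : E) :
    𝓕 (fun x => cexp (↑(-2 * π * ⟪x, ζ⟫) * I) * f x) ξ = 𝓕 f (ξ + ζ) := by
  rw [Real.fourier_eq', Real.fourier_eq']
  refine integral_congr_ae (.of_forall fun x => ?_)
  simp only [smul_eq_mul]
  rw [← mul_assoc, ← Complex.exp_add, inner_add_right]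
  congr 2
  push_cast
  ring

theorem memLp_two_fourier (hf : Integrable f) (hf2 : MemLp f 2) : MemLp (𝓕 f) 2 :=
  ⟨(continuous_fourier_of_integrable hf).aestronglyMeasurable,
    (eLpNorm_fourier_eq hf hf2).trans_lt hf2.2⟩

theorem integral_norm_fourier_sq (hf : Integrable f) (hf2 : MemLp f 2) :
    ∫ ξ, ‖𝓕 f ξ‖ ^ 2 = ∫ x, ‖f x‖ ^ 2 := by
  have key (u : E → ℂ) (hu : MemLp u 2) : ∫ x, ‖u x‖ ^ 2 = (eLpNorm u 2).toReal ^ 2 := by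
    have h0 : 0 ≤ ∫ x, ‖u x‖ ^ (2 : ℝ) := integral_nonneg fun x => by positivity
    rw [hu.eLpNorm_eq_integral_rpow_norm two_ne_zero ENNReal.ofNat_ne_top, ENNReal.toReal_ofNat,
      ENNReal.toReal_ofReal (Real.rpow_nonneg h0 _), ← Real.rpow_two, ← Real.rpow_mul h0]
    norm_num
  rw [key _ (memLp_two_fourier hf hf2), key _ hf2, eLpNorm_fourier_eq hf hf2]

end KernelForm

section Mollification

variable {𝕜 : Type*} [RCLike 𝕜]

/-- The convolution of the `L¹`-normalised dilate `R ^ d • Φ (R • ·)` with the image of surface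
measure under `ω ↦ r • ω`. -/
def sphereMollification (Φ : E → 𝕜) (R r : ℝ) (ξ : E) : 𝕜 :=
  ∫ ω : sphere (0 : E) 1, R ^ finrank ℝ E • Φ (R • (ξ - r • (ω : E))) ∂σ

variable {Φ : E → 𝕜} {R : ℝ}

theorem integral_dilate_comp_sub_mul (hR : 0 < R) (Φ h : E → 𝕜) (v : E) :
    ∫ ξ, R ^ finrank ℝ E • Φ (R • (ξ - v)) * h ξ = ∫ η, Φ η * h (v + R⁻¹ • η) := by
  rw [← integral_add_right_eq_self _ v]
  have := Measure.integral_comp_smul (volume : Measure E) (fun η => Φ η * h (v + R⁻¹ • η)) R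
  simp only [smul_smul, inv_mul_cancel₀ hR.ne', one_smul] at this
  rw [abs_of_pos (by positivity), eq_inv_smul_iff₀ (by positivity)] at this
  rw [← this, ← integral_smul]
  simp only [add_sub_cancel_left, smul_mul_assoc, add_comm _ v]

theorem integrable_dilate_comp_sub (hΦ : Integrable Φ) (hR : 0 < R) (v : E) :
    Integrable fun ξ => R ^ finrank ℝ E • Φ (R • (ξ - v)) :=
  ((hΦ.comp_smul hR.ne').comp_sub_right v).fun_smul _

theorem integrable_dilate_comp_sub_prod (hΦ : Integrable Φ) (hΦc : Continuous Φ) (hR : 0 < R)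
    (r : ℝ) : Integrable (fun p : E × sphere (0 : E) 1 =>
      R ^ finrank ℝ E • Φ (R • (p.1 - r • (p.2 : E)))) (volume.prod σ) := by
  have hm : Continuous fun p : E × sphere (0 : E) 1 =>
      R ^ finrank ℝ E • Φ (R • (p.1 - r • (p.2 : E))) := by fun_prop
  refine (integrable_prod_iff' hm.aestronglyMeasurable).2
    ⟨.of_forall fun ω => integrable_dilate_comp_sub hΦ hR (r • (ω : E)), ?_⟩
  have hconst (ω : sphere (0 : E) 1) :
      ∫ ξ, ‖R ^ finrank ℝ E • Φ (R • (ξ - r • (ω : E)))‖ =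
        ∫ ξ, ‖R ^ finrank ℝ E • Φ (R • ξ)‖ :=
    integral_sub_right_eq_self (fun ξ => ‖R ^ finrank ℝ E • Φ (R • ξ)‖) _
  simp only [hconst]
  exact integrable_const _

theorem integrable_sphereMollification (hΦ : Integrable Φ) (hΦc : Continuous Φ) (hR : 0 < R)
    (r : ℝ) : Integrable (sphereMollification Φ R r) :=
  (integrable_dilate_comp_sub_prod hΦ hΦc hR r).integral_prod_left

theorem integral_sphereMollification_mul (hΦ : Integrable Φ) (hΦc : Continuous Φ) (hR : 0 < R)
    (r : ℝ) {h : E → 𝕜} (hc : Continuous h) {M : ℝ} (hM : ∀ ξ, ‖h ξ‖ ≤ M) :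
    ∫ ξ, sphereMollification Φ R r ξ * h ξ =
      ∫ η, Φ η * ∫ ω : sphere (0 : E) 1, h (r • (ω : E) + R⁻¹ • η) ∂σ := by
  simp only [sphereMollification, ← integral_mul_const, ← integral_const_mul]
  have hprod : Integrable (fun p : E × sphere (0 : E) 1 => Φ p.1 * h (r • (p.2 : E) + R⁻¹ • p.1))
      (volume.prod σ) :=
    ((hΦ.mul_prod (integrable_const (1 : 𝕜))).mul_bdd
      (g := fun p : E × sphere (0 : E) 1 => h (r • (p.2 : E) + R⁻¹ • p.1)) (c := M)
      (by fun_prop) (.of_forall fun p => hM _)).congr (.of_forall fun p => by simp only [mul_one])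
  refine (integral_integral_swap ?_).trans ?_
  · exact (integrable_dilate_comp_sub_prod hΦ hΦc hR r).mul_bdd (c := M)
      (g := fun p : E × sphere (0 : E) 1 => h p.1) (by fun_prop) (.of_forall fun p => hM _)
  · simp only [integral_dilate_comp_sub_mul hR]
    exact (integral_integral_swap hprod).symm

theorem fourier_sphereMollification {Φ : E → ℂ} (hΦ : Integrable Φ) (hΦc : Continuous Φ)
    (hR : 0 < R) (r : ℝ) (z : E) :
    𝓕 (sphereMollification Φ R r) z = 𝓕 Φ (R⁻¹ • z) * sphereKernel (r • z) := by
  have h := integral_sphereMollification_mul hΦ hΦc hR r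
    (h := fun ξ => cexp (↑(-2 * π * ⟪ξ, z⟫) * I)) (by fun_prop)
    (fun ξ => (norm_exp_ofReal_mul_I _).le)
  rw [Real.fourier_eq', Real.fourier_eq', ← integral_mul_const]
  simp only [smul_eq_mul, mul_comm (cexp _)]
  rw [h]
  refine integral_congr_ae (.of_forall fun η => ?_)
  simp only [mul_assoc, ← integral_sphere_cexp_inner, ← integral_const_mul]
  refine integral_congr_ae (.of_forall fun ω => congrArg (Φ η * ·) ?_)
  rw [← Complex.exp_add, inner_add_left]
  simp only [real_inner_smul_left, real_inner_smul_right, real_inner_comm z]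
  congr 1
  push_cast
  ring

end Mollification

section DecayProfileMollification

theorem integrable_decayProfile : Integrable (decayProfile : E → ℝ) :=
  integrable_one_add_norm (lt_add_one _)

theorem integral_decayProfile_pos : 0 < ∫ x : E, decayProfile x := by
  refine (integral_pos_iff_support_of_nonneg (fun x => (decayProfile_pos x).le)
    integrable_decayProfile).2 ?_
  rw [Function.support_eq_univ fun x => (decayProfile_pos x).ne']
  exact Measure.measure_univ_pos.2 NeZero.out

variable {R r : ℝ}

theorem lintegral_dilate_decayProfile (hR : 0 < R) (ξ : E) :
    ∫⁻ ζ : E, ENNReal.ofReal (R ^ finrank ℝ E * decayProfile (R • (ξ - ζ))) =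
      ENNReal.ofReal (∫ x : E, decayProfile x) := by
  have hsymm (ζ : E) : decayProfile (R • (ξ - ζ)) = decayProfile (R • (ζ - ξ)) := by
    rw [← decayProfile_neg, ← smul_neg, neg_sub]
  have h := integral_dilate_comp_sub_mul hR (decayProfile : E → ℝ) 1 ξ
  simp only [Pi.one_apply, mul_one, smul_eq_mul] at h
  simp only [hsymm, ← h]
  exact (ofReal_integral_eq_lintegral_ofReal
    (integrable_dilate_comp_sub integrable_decayProfile hR ξ)
    (.of_forall fun ζ => mul_nonneg (by positivity) (decayProfile_pos _).le)).symm

theorem le_mul_lintegral_rpow_mul (hR : 0 < R) (hr : 1 ≤ r) (k : ℕ) {c K : ℝ≥0∞} {F : ℝ → ℝ≥0∞}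
    (hK : K ≠ ∞) (h : ∀ ρ ∈ Set.Icc r (r + R⁻¹), c ≤ K * F ρ) :
    c ≤ K * ENNReal.ofReal R * ∫⁻ ρ in Set.Ioi (0 : ℝ), ENNReal.ofReal (ρ ^ k) * F ρ := by
  have hvol : ENNReal.ofReal R * volume (Set.Icc r (r + R⁻¹)) = 1 := by
    rw [Real.volume_Icc, add_sub_cancel_left, ← ENNReal.ofReal_mul hR.le, mul_inv_cancel₀ hR.ne',
      ENNReal.ofReal_one]
  calc c = ENNReal.ofReal R * ∫⁻ _ in Set.Icc r (r + R⁻¹), c := by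
        rw [setLIntegral_const, mul_left_comm, hvol, mul_one]
    _ ≤ ENNReal.ofReal R * ∫⁻ ρ in Set.Icc r (r + R⁻¹), K * (ENNReal.ofReal (ρ ^ k) * F ρ) := by
        gcongr ENNReal.ofReal R * ?_
        refine setLIntegral_mono' measurableSet_Icc fun ρ hρ => (h ρ hρ).trans ?_
        gcongr
        exact le_mul_of_one_le_left' (ENNReal.one_le_ofReal.2 (one_le_pow₀ (hr.trans hρ.1)))
    _ ≤ ENNReal.ofReal R * ∫⁻ ρ in Set.Ioi (0 : ℝ), K * (ENNReal.ofReal (ρ ^ k) * F ρ) := by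
        gcongr
        exact fun ρ hρ => zero_lt_one.trans_le (hr.trans hρ.1)
    _ = _ := by rw [lintegral_const_mul' _ _ hK, mul_left_comm, mul_assoc]

theorem sphereMollification_decayProfile_le [Nontrivial E] (hR : 0 < R) (hr : 1 ≤ r) (ξ : E) :
    sphereMollification decayProfile R r ξ ≤
      2 ^ (finrank ℝ E + 1) * R * ∫ x : E, decayProfile x := by
  have hI := integral_decayProfile_pos (E := E)
  have hclose (ω : sphere (0 : E) 1) (ρ : ℝ) (hρ : ρ ∈ Set.Icc r (r + R⁻¹)) :
      ENNReal.ofReal (R ^ finrank ℝ E * decayProfile (R • (ξ - r • (ω : E)))) ≤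
        ENNReal.ofReal (2 ^ (finrank ℝ E + 1)) *
          ENNReal.ofReal (R ^ finrank ℝ E * decayProfile (R • (ξ - ρ • (ω : E)))) := by
    rw [← ENNReal.ofReal_mul (by positivity), mul_left_comm]
    gcongr
    refine decayProfile_le_of_norm_sub_le_one ?_
    rw [← smul_sub, sub_sub_sub_cancel_left, ← sub_smul, norm_smul, norm_smul,
      norm_eq_of_mem_sphere, mul_one, Real.norm_of_nonneg hR.le,
      Real.norm_of_nonneg (sub_nonneg.2 hρ.1)]
    calc R * (ρ - r) ≤ R * R⁻¹ := by gcongr; linarith [hρ.2]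
      _ = 1 := mul_inv_cancel₀ hR.ne'
  refine (ENNReal.ofReal_le_ofReal_iff (by positivity)).1 ?_
  calc ENNReal.ofReal (sphereMollification decayProfile R r ξ)
      = ∫⁻ ω, ENNReal.ofReal (R ^ finrank ℝ E * decayProfile (R • (ξ - r • (ω : E)))) ∂σ :=
        ofReal_integral_eq_lintegral_ofReal (integrable_sphere_of_continuous (by
          have := continuous_decayProfile (E := E)
          fun_prop))
          (.of_forall fun ω => mul_nonneg (by positivity) (decayProfile_pos _).le)
    _ ≤ ∫⁻ ω, ENNReal.ofReal (2 ^ (finrank ℝ E + 1)) * ENNReal.ofReal R *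
          (∫⁻ ρ in Set.Ioi (0 : ℝ), ENNReal.ofReal (ρ ^ (finrank ℝ E - 1)) *
            ENNReal.ofReal (R ^ finrank ℝ E * decayProfile (R • (ξ - ρ • (ω : E))))) ∂σ :=
        lintegral_mono fun ω =>
          le_mul_lintegral_rpow_mul hR hr _ ENNReal.ofReal_ne_top (hclose ω)
    _ = _ := by
        rw [lintegral_const_mul' _ _ (by finiteness), ← lintegral_eq_lintegral_toSphere volume
          (f := fun ζ => ENNReal.ofReal (R ^ finrank ℝ E * decayProfile (R • (ξ - ζ)))) (by
            have := (continuous_decayProfile (E := E)).measurable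
            fun_prop),
          lintegral_dilate_decayProfile hR, ← ENNReal.ofReal_mul (by positivity),
          ← ENNReal.ofReal_mul (by positivity)]

theorem sphereMollification_decayProfile_nonneg (hR : 0 < R) (ξ : E) :
    0 ≤ sphereMollification decayProfile R r ξ :=
  integral_nonneg fun _ => mul_nonneg (by positivity) (decayProfile_pos _).le

end DecayProfileMollification

section Cutoff

variable (E) in
/-- The smooth cutoff, equal to `1` on the unit ball, that separates the part of a kernel near the
origin from its part at infinity. -/
def cutoff : ContDiffBump (0 : E) :=
  ⟨1, 2, zero_lt_one, one_lt_two⟩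

variable (E) in
/-- The Schwartz function with Fourier transform `cutoff E`. -/
def mollifier : SchwartzMap E ℂ :=
  𝓕⁻ (HasCompactSupport.toSchwartzMap (f := fun x => (cutoff E x : ℂ))
    ((cutoff E).hasCompactSupport.comp_left ofReal_zero)
    (ofRealCLM.contDiff.comp (cutoff E).contDiff))

theorem fourier_mollifier (z : E) : 𝓕 (mollifier E : E → ℂ) z = cutoff E z := by
  rw [← SchwartzMap.fourier_coe, mollifier, FourierTransform.fourier_fourierInv_eq]
  rfl

theorem fourier_sphereMollification_mollifier {R : ℝ} (hR : 0 < R) (r : ℝ) (z : E) :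
    𝓕 (sphereMollification (mollifier E) R r) z =
      (cutoff E (R⁻¹ • z) * sphereKernel (r • z) : ℝ) := by
  rw [fourier_sphereMollification (mollifier E).integrable (mollifier E).continuous hR,
    fourier_mollifier, ofReal_mul]

omit [MeasurableSpace E] [BorelSpace E] in
theorem abs_one_sub_cutoff_mul_le {R H t : ℝ} (hR : 0 < R) (hH : 0 ≤ H) (z : E)
    (h : R ≤ ‖z‖ → |t| ≤ H) : |(1 - cutoff E (R⁻¹ • z)) * t| ≤ H := by
  rcases le_total R ‖z‖ with hz | hz
  · rw [abs_mul, abs_of_nonneg (sub_nonneg.2 (cutoff E).le_one)]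
    exact (mul_le_of_le_one_left (abs_nonneg t) (by linarith [(cutoff E).nonneg' (R⁻¹ • z)])).trans
      (h hz)
  · rw [(cutoff E).one_of_mem_closedBall, sub_self, zero_mul, abs_zero]
    · exact hH
    · rw [mem_closedBall_zero_iff, norm_smul, norm_inv, Real.norm_of_nonneg hR.le]
      exact inv_mul_le_one_of_le₀ hz hR.le

variable {f g : E → ℂ}

theorem integrable_mul_norm_fourier_mul {w : E → ℝ} (hw : Integrable w) (hf : Integrable f)
    (hg : Integrable g) : Integrable fun ξ => w ξ * (‖𝓕 f ξ‖ * ‖𝓕 g ξ‖) := by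
  refine hw.mul_bdd (c := (∫ x, ‖f x‖) * ∫ x, ‖g x‖)
    ((continuous_fourier_of_integrable hf).norm.mul
      (continuous_fourier_of_integrable hg).norm).aestronglyMeasurable (.of_forall fun ξ => ?_)
  rw [norm_mul, norm_norm, norm_norm]
  gcongr
  · exact norm_fourier_le_integral_norm f ξ
  · exact norm_fourier_le_integral_norm g ξ

/-- Off the ball of radius `R` the kernel is bounded pointwise; inside, Plancherel applies to the
multiplier `w`, whose Fourier transform is the localised kernel. -/
theorem norm_kernelForm_le_add_integral {L : E → ℝ} (hL : Continuous L) {M : ℝ}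
    (hM : ∀ z, |L z| ≤ M) {w : E → ℂ} (hw : Integrable w) {R : ℝ} (hR : 0 < R)
    (hwL : ∀ z, 𝓕 w z = (cutoff E (R⁻¹ • z) * L z : ℝ)) {H : ℝ} (hH0 : 0 ≤ H)
    (hH : ∀ z, R ≤ ‖z‖ → |L z| ≤ H) (hf : Integrable f) (hg : Integrable g) :
    ‖kernelForm L f g‖ ≤
      H * ((∫ x, ‖f x‖) * ∫ x, ‖g x‖) + ∫ ξ, ‖w ξ‖ * (‖𝓕 f ξ‖ * ‖𝓕 g ξ‖) := by
  have hfar (z : E) := abs_one_sub_cutoff_mul_le hR hH0 z (hH z)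
  have hnear (z : E) : |cutoff E (R⁻¹ • z) * L z| ≤ M := by
    rw [abs_mul, abs_of_nonneg (cutoff E).nonneg]
    exact (mul_le_of_le_one_left (abs_nonneg _) (cutoff E).le_one).trans (hM z)
  have hcut : Continuous fun z : E => cutoff E (R⁻¹ • z) :=
    (cutoff E).continuous.comp (continuous_const_smul _)
  have hsplit : kernelForm L f g = kernelForm (fun z => (1 - cutoff E (R⁻¹ • z)) * L z) f g +
      kernelForm (fun z => cutoff E (R⁻¹ • z) * L z) f g := by
    rw [← kernelForm_add hf hg (by fun_prop) (by fun_prop) hfar hnear]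
    simp only [← add_mul, sub_add_cancel, one_mul]
  rw [hsplit, ← integral_mul_fourier_mul_conj_fourier_volume hw hf hg hwL]
  refine (norm_add_le _ _).trans (add_le_add (norm_kernelForm_le hf hg hfar)
    ((norm_integral_le_integral_norm _).trans_eq ?_))
  simp only [norm_mul, RCLike.norm_conj]

variable (E) in
theorem exists_norm_sphereMollification_mollifier_le :
    ∃ C : ℝ, 0 < C ∧ ∀ R > 0, ∀ (r : ℝ) (ξ : E),
      ‖sphereMollification (mollifier E) R r ξ‖ ≤ C * sphereMollification decayProfile R r ξ := by
  obtain ⟨C, hC, h⟩ := exists_norm_le_decayProfile (mollifier E)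
  refine ⟨C, hC, fun R hR r ξ => ?_⟩
  have hc := continuous_decayProfile (E := E)
  rw [sphereMollification, sphereMollification, ← integral_const_mul]
  refine norm_integral_le_of_norm_le (integrable_sphere_of_continuous (by fun_prop))
    (.of_forall fun ω => ?_)
  rw [norm_smul, norm_pow, Real.norm_of_nonneg hR.le, smul_eq_mul, mul_left_comm]
  gcongr
  exact (h _).1

variable (E) in
theorem exists_norm_sphereMollification_mollifier_sub_le :
    ∃ C : ℝ, 0 < C ∧ ∀ α ∈ Set.Icc (0 : ℝ) 1, ∀ R > 0, ∀ (r₁ r₂ : ℝ) (ξ : E),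
      ‖sphereMollification (mollifier E) R r₁ ξ - sphereMollification (mollifier E) R r₂ ξ‖ ≤
        C * (R * |r₁ - r₂|) ^ α *
          (sphereMollification decayProfile R r₁ ξ + sphereMollification decayProfile R r₂ ξ) := by
  obtain ⟨C, hC, h⟩ := exists_norm_sub_le_decayProfile (mollifier E)
  refine ⟨C, hC, fun α hα R hR r₁ r₂ ξ => ?_⟩
  have hc := continuous_decayProfile (E := E)
  have hc' := (mollifier E).continuous
  simp only [sphereMollification]
  rw [← integral_sub (integrable_sphere_of_continuous (by fun_prop))
    (integrable_sphere_of_continuous (by fun_prop)),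
    ← integral_add (integrable_sphere_of_continuous (by fun_prop))
    (integrable_sphere_of_continuous (by fun_prop)), ← integral_const_mul]
  refine norm_integral_le_of_norm_le (integrable_sphere_of_continuous (by fun_prop))
    (.of_forall fun ω => ?_)
  have hdist : ‖R • (ξ - r₁ • (ω : E)) - R • (ξ - r₂ • (ω : E))‖ = R * |r₁ - r₂| := by
    rw [← smul_sub, sub_sub_sub_cancel_left, ← sub_smul, norm_smul, norm_smul,
      norm_eq_of_mem_sphere, mul_one, Real.norm_of_nonneg hR.le, Real.norm_eq_abs, abs_sub_comm]
  rw [← smul_sub, ← smul_add, norm_smul, norm_pow, Real.norm_of_nonneg hR.le, smul_eq_mul,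
    mul_left_comm, ← hdist]
  gcongr
  exact h α hα _ _

end Cutoff

section SteinTomas

variable {f g : E → ℂ}

theorem memLp_two_of_norm_le_one (hf : Integrable f) (hf1 : ∀ x, ‖f x‖ ≤ 1) : MemLp f 2 := by
  refine (memLp_two_iff_integrable_sq_norm hf.1).2
    (hf.norm.mono' (hf.1.norm.pow 2) (.of_forall fun x => ?_))
  rw [Real.norm_of_nonneg (by positivity)]
  exact pow_le_of_le_one (norm_nonneg _) (hf1 x) two_ne_zero

theorem integral_norm_fourier_sq_le (hf : Integrable f) (hf1 : ∀ x, ‖f x‖ ≤ 1) :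
    ∫ ξ, ‖𝓕 f ξ‖ ^ 2 ≤ ∫ x, ‖f x‖ := by
  have hf2 := memLp_two_of_norm_le_one hf hf1
  rw [integral_norm_fourier_sq hf hf2]
  exact integral_mono (hf2.integrable_norm_pow two_ne_zero) hf.norm fun x =>
    pow_le_of_le_one (norm_nonneg _) (hf1 x) two_ne_zero

theorem integrable_norm_fourier_sq (hf : Integrable f) (hf1 : ∀ x, ‖f x‖ ≤ 1) :
    Integrable fun ξ => ‖𝓕 f ξ‖ ^ 2 :=
  (memLp_two_fourier hf (memLp_two_of_norm_le_one hf hf1)).integrable_norm_pow two_ne_zero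

variable (E) in
theorem exists_integral_sphereMollification_mul_norm_fourier_sq_le [Nontrivial E] :
    ∃ C : ℝ, 0 < C ∧ ∀ R > 0, ∀ r : ℝ, 1 ≤ r → ∀ f : E → ℂ, Integrable f → (∀ x, ‖f x‖ ≤ 1) →
      ∫ ξ, sphereMollification decayProfile R r ξ * ‖𝓕 f ξ‖ ^ 2 ≤ C * R * ∫ x, ‖f x‖ := by
  have hI := integral_decayProfile_pos (E := E)
  refine ⟨2 ^ (finrank ℝ E + 1) * ∫ x : E, decayProfile x, by positivity,
    fun R hR r hr f hf hf1 => ?_⟩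
  calc ∫ ξ, sphereMollification decayProfile R r ξ * ‖𝓕 f ξ‖ ^ 2
      ≤ ∫ ξ, 2 ^ (finrank ℝ E + 1) * R * (∫ x : E, decayProfile x) * ‖𝓕 f ξ‖ ^ 2 := by
        refine integral_mono_of_nonneg (.of_forall fun ξ => mul_nonneg
          (sphereMollification_decayProfile_nonneg hR ξ) (by positivity))
          ((integrable_norm_fourier_sq hf hf1).const_mul _) (.of_forall fun ξ => ?_)
        exact mul_le_mul_of_nonneg_right (sphereMollification_decayProfile_le hR hr ξ)
          (by positivity)
    _ ≤ _ := by
        rw [integral_const_mul, mul_right_comm _ _ R]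
        exact mul_le_mul_of_nonneg_left (integral_norm_fourier_sq_le hf hf1) (by positivity)

variable (E) in
theorem exists_integral_sphere_norm_fourier_sq_le_add [Nontrivial E] :
    ∃ C : ℝ, 0 < C ∧ ∀ R > 0, ∀ r : ℝ, 1 ≤ r → ∀ f : E → ℂ, Integrable f → (∀ x, ‖f x‖ ≤ 1) →
      ∫ ω : sphere (0 : E) 1, ‖𝓕 f (r • (ω : E))‖ ^ 2 ∂σ ≤
        C * (R ^ (-(((finrank ℝ E : ℝ) - 1) / 2)) * (∫ x, ‖f x‖) ^ 2 + R * ∫ x, ‖f x‖) := by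
  obtain ⟨C₁, hC₁, hdecay⟩ := exists_sphereKernel_smul_bound E
  obtain ⟨C₂, hC₂, hmoll⟩ := exists_norm_sphereMollification_mollifier_le E
  obtain ⟨C₃, hC₃, hnear⟩ := exists_integral_sphereMollification_mul_norm_fourier_sq_le E
  have hd : (1 : ℝ) ≤ finrank ℝ E := mod_cast finrank_pos
  refine ⟨C₁ + C₂ * C₃, by positivity, fun R hR r hr f hf hf1 => ?_⟩
  set A := ∫ x, ‖f x‖
  have : 0 ≤ A := integral_nonneg fun x => norm_nonneg _
  set W := sphereMollification (mollifier E : E → ℂ) R r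
  have hV := integrable_sphereMollification integrable_decayProfile
    (continuous_decayProfile (E := E)) hR r
  have hfar (z : E) (hz : R ≤ ‖z‖) :
      |sphereKernel (r • z)| ≤ C₁ * R ^ (-(((finrank ℝ E : ℝ) - 1) / 2)) := by
    refine (hdecay z (norm_pos_iff.1 (hR.trans_le hz)) r r hr hr).1.trans ?_
    gcongr ?_ * ?_
    exact Real.rpow_le_rpow_of_nonpos hR hz (by linarith)
  have hsplit := norm_kernelForm_le_add_integral (L := fun z => sphereKernel (r • z))
    (continuous_sphereKernel.comp (continuous_const_smul r)) (fun z => abs_sphereKernel_le _)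
    (integrable_sphereMollification (mollifier E).integrable (mollifier E).continuous hR r) hR
    (fourier_sphereMollification_mollifier hR r) (by positivity) hfar hf hf
  rw [← integral_sphere_norm_fourier_sq r hf, norm_real] at hsplit
  have hW_le : ∫ ξ, ‖W ξ‖ * (‖𝓕 f ξ‖ * ‖𝓕 f ξ‖) ≤ C₂ * (C₃ * R * A) := by
    refine le_trans ?_ (mul_le_mul_of_nonneg_left (hnear R hR r hr f hf hf1) hC₂.le)
    rw [← integral_const_mul]
    simp only [sq]
    refine integral_mono_of_nonneg (.of_forall fun ξ => by positivity)
      ((integrable_mul_norm_fourier_mul hV hf hf).const_mul C₂) (.of_forall fun ξ => ?_)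
    simp only
    rw [← mul_assoc C₂]
    gcongr
    exact hmoll R hR r ξ
  have hpos : 0 ≤ R ^ (-(((finrank ℝ E : ℝ) - 1) / 2)) * A ^ 2 := by positivity
  have hRA : 0 ≤ R * A := by positivity
  calc _ ≤ C₁ * R ^ (-(((finrank ℝ E : ℝ) - 1) / 2)) * (A * A) + C₂ * (C₃ * R * A) :=
        (le_abs_self _).trans (hsplit.trans (by gcongr))
    _ ≤ _ := by nlinarith [mul_pos hC₂ hC₃, mul_nonneg (mul_pos hC₂ hC₃).le hpos]

variable (E) in
theorem exists_integral_sphere_norm_fourier_sq_le [Nontrivial E] :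
    ∃ C : ℝ, 0 < C ∧ ∀ r : ℝ, 1 ≤ r → ∀ A : ℝ, 0 < A → ∀ f : E → ℂ, Integrable f →
      (∀ x, ‖f x‖ ≤ 1) → ∫ x, ‖f x‖ ≤ A →
      ∫ ω : sphere (0 : E) 1, ‖𝓕 f (r • (ω : E))‖ ^ 2 ∂σ ≤
        C * A ^ (((finrank ℝ E : ℝ) + 3) / (finrank ℝ E + 1)) := by
  obtain ⟨C, hC, h⟩ := exists_integral_sphere_norm_fourier_sq_le_add E
  refine ⟨2 * C, by positivity, fun r hr A hA f hf hf1 hfA => ?_⟩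
  have hd : (0 : ℝ) < finrank ℝ E + 1 := by positivity
  set d : ℝ := (finrank ℝ E : ℝ)
  have hfar : (A ^ (2 / (d + 1))) ^ (-((d - 1) / 2)) * A ^ 2 = A ^ ((d + 3) / (d + 1)) := by
    rw [← Real.rpow_mul hA.le, ← Real.rpow_natCast, ← Real.rpow_add hA]
    congr 1
    push_cast
    field_simp
    ring
  have hnear : A ^ (2 / (d + 1)) * A = A ^ ((d + 3) / (d + 1)) := by
    rw [← Real.rpow_add_one hA.ne']
    congr 1
    field_simp
    ring
  calc _ ≤ C * ((A ^ (2 / (d + 1))) ^ (-((d - 1) / 2)) * (∫ x, ‖f x‖) ^ 2 +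
        A ^ (2 / (d + 1)) * ∫ x, ‖f x‖) := h _ (by positivity) r hr f hf hf1
    _ ≤ C * ((A ^ (2 / (d + 1))) ^ (-((d - 1) / 2)) * A ^ 2 + A ^ (2 / (d + 1)) * A) := by
        gcongr
    _ = _ := by rw [hfar, hnear]; ring

end SteinTomas

section PairBound

theorem integral_mul_mul_le_sqrt_mul_sqrt {Ω : Type*} [MeasurableSpace Ω] {μ : Measure Ω}
    {V a b : Ω → ℝ} (hV : AEStronglyMeasurable V μ) (hV0 : ∀ x, 0 ≤ V x)
    (ha : AEStronglyMeasurable a μ) (ha0 : ∀ x, 0 ≤ a x) (hb : AEStronglyMeasurable b μ)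
    (hb0 : ∀ x, 0 ≤ b x) (hVa : Integrable (fun x => V x * a x ^ 2) μ)
    (hVb : Integrable (fun x => V x * b x ^ 2) μ) :
    ∫ x, V x * (a x * b x) ∂μ ≤ √(∫ x, V x * a x ^ 2 ∂μ) * √(∫ x, V x * b x ^ 2 ∂μ) := by
  have hsq (u : Ω → ℝ) (x : Ω) : (√(V x) * u x) ^ 2 = V x * u x ^ 2 := by
    rw [mul_pow, Real.sq_sqrt (hV0 x)]
  have hmem (u : Ω → ℝ) (hu : AEStronglyMeasurable u μ)
      (hVu : Integrable (fun x => V x * u x ^ 2) μ) :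
      MemLp (fun x => √(V x) * u x) (ENNReal.ofReal 2) μ := by
    rw [ENNReal.ofReal_ofNat, memLp_two_iff_integrable_sq
      ((Real.continuous_sqrt.comp_aestronglyMeasurable hV).fun_mul hu)]
    simpa only [hsq] using hVu
  have h := integral_mul_le_Lp_mul_Lq_of_nonneg Real.HolderConjugate.two_two
    (.of_forall fun x => mul_nonneg (Real.sqrt_nonneg _) (ha0 x))
    (.of_forall fun x => mul_nonneg (Real.sqrt_nonneg _) (hb0 x)) (hmem a ha hVa) (hmem b hb hVb)
  simp only [Real.rpow_two, hsq, ← Real.sqrt_eq_rpow] at h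
  refine le_of_eq_of_le (integral_congr_ae (.of_forall fun x => ?_)) h
  simp only
  rw [mul_mul_mul_comm, Real.mul_self_sqrt (hV0 x)]

variable (E) in
/-- Averaging the restriction theorem over the translates of the sphere that make up the
mollification. -/
theorem exists_integral_sphereMollification_mul_norm_fourier_sq_le_rpow [Nontrivial E] :
    ∃ C : ℝ, 0 < C ∧ ∀ R > 0, ∀ r : ℝ, 1 ≤ r → ∀ A : ℝ, 0 < A → ∀ f : E → ℂ, Integrable f →
      (∀ x, ‖f x‖ ≤ 1) → ∫ x, ‖f x‖ ≤ A →
      ∫ ξ, sphereMollification decayProfile R r ξ * ‖𝓕 f ξ‖ ^ 2 ≤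
        C * A ^ (((finrank ℝ E : ℝ) + 3) / (finrank ℝ E + 1)) := by
  obtain ⟨C, hC, hST⟩ := exists_integral_sphere_norm_fourier_sq_le E
  have hI := integral_decayProfile_pos (E := E)
  refine ⟨C * ∫ x : E, decayProfile x, by positivity, fun R hR r hr A hA f hf hf1 hfA => ?_⟩
  have htranslate (η : E) : ∫ ω : sphere (0 : E) 1, ‖𝓕 f (r • (ω : E) + R⁻¹ • η)‖ ^ 2 ∂σ ≤
      C * A ^ (((finrank ℝ E : ℝ) + 3) / (finrank ℝ E + 1)) := by
    have hmod (x : E) : ‖cexp (↑(-2 * π * ⟪x, R⁻¹ • η⟫) * I) * f x‖ = ‖f x‖ := by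
      rw [norm_mul, norm_exp_ofReal_mul_I, one_mul]
    simp only [← fourier_modulation]
    exact hST r hr A hA _ (hf.bdd_mul (c := 1) (by fun_prop)
      (.of_forall fun x => (norm_exp_ofReal_mul_I _).le)) (by simpa only [hmod])
      (by simpa only [hmod])
  have hbound (ξ : E) : ‖‖𝓕 f ξ‖ ^ 2‖ ≤ (∫ x, ‖f x‖) ^ 2 := by
    rw [norm_pow, norm_norm]
    gcongr
    exact norm_fourier_le_integral_norm f ξ
  rw [integral_sphereMollification_mul (h := fun ξ => ‖𝓕 f ξ‖ ^ 2) integrable_decayProfile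
    continuous_decayProfile hR r ((continuous_fourier_of_integrable hf).norm.pow 2) hbound,
    mul_right_comm, mul_comm, ← integral_mul_const]
  refine integral_mono_of_nonneg (.of_forall fun η => mul_nonneg (decayProfile_pos η).le
    (integral_nonneg fun ω => by positivity)) (integrable_decayProfile.mul_const _)
    (.of_forall fun η => mul_le_mul_of_nonneg_left (htranslate η) (decayProfile_pos η).le)

variable {f g : E → ℂ} {R r : ℝ}

theorem integral_sphereMollification_mul_le_sqrt (hR : 0 < R) (r : ℝ) (hf : Integrable f)
    (hg : Integrable g) :
    ∫ ξ, sphereMollification decayProfile R r ξ * (‖𝓕 f ξ‖ * ‖𝓕 g ξ‖) ≤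
      √(∫ ξ, sphereMollification decayProfile R r ξ * ‖𝓕 f ξ‖ ^ 2) *
        √(∫ ξ, sphereMollification decayProfile R r ξ * ‖𝓕 g ξ‖ ^ 2) := by
  have hV := integrable_sphereMollification integrable_decayProfile
    (continuous_decayProfile (E := E)) hR r
  refine integral_mul_mul_le_sqrt_mul_sqrt hV.1 (sphereMollification_decayProfile_nonneg hR)
    (continuous_fourier_of_integrable hf).norm.aestronglyMeasurable (fun ξ => norm_nonneg _)
    (continuous_fourier_of_integrable hg).norm.aestronglyMeasurable (fun ξ => norm_nonneg _) ?_ ?_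
  · simpa only [sq] using integrable_mul_norm_fourier_mul hV hf hf
  · simpa only [sq] using integrable_mul_norm_fourier_mul hV hg hg

variable (E) in
theorem exists_integral_norm_sphereMollification_sub_le [Nontrivial E] :
    ∃ C : ℝ, 0 < C ∧ ∀ α ∈ Set.Icc (0 : ℝ) 1, ∀ R > 0, ∀ r₁ r₂ : ℝ, 1 ≤ r₁ → 1 ≤ r₂ →
      ∀ A B : ℝ, 0 < A → 0 < B → ∀ f g : E → ℂ, Integrable f → Integrable g →
      (∀ x, ‖f x‖ ≤ 1) → (∀ x, ‖g x‖ ≤ 1) → ∫ x, ‖f x‖ ≤ A → ∫ x, ‖g x‖ ≤ B →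
      ∫ ξ, ‖sphereMollification (mollifier E) R r₁ ξ - sphereMollification (mollifier E) R r₂ ξ‖ *
          (‖𝓕 f ξ‖ * ‖𝓕 g ξ‖) ≤
        C * (R * |r₁ - r₂|) ^ α *
          (√(R * A) * √(B ^ (((finrank ℝ E : ℝ) + 3) / (finrank ℝ E + 1)))) := by
  obtain ⟨C₁, hC₁, hsub⟩ := exists_norm_sphereMollification_mollifier_sub_le E
  obtain ⟨C₂, hC₂, hplanch⟩ := exists_integral_sphereMollification_mul_norm_fourier_sq_le E
  obtain ⟨C₃, hC₃, hST⟩ := exists_integral_sphereMollification_mul_norm_fourier_sq_le_rpow E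
  refine ⟨2 * C₁ * (√C₂ * √C₃), by positivity,
    fun α hα R hR r₁ r₂ hr₁ hr₂ A B hA hB f g hf hg hf1 hg1 hfA hgB => ?_⟩
  have hint (r : ℝ) := integrable_mul_norm_fourier_mul (integrable_sphereMollification
    integrable_decayProfile (continuous_decayProfile (E := E)) hR r) hf hg
  set D := √C₂ * √C₃ * (√(R * A) * √(B ^ (((finrank ℝ E : ℝ) + 3) / (finrank ℝ E + 1)))) with hD
  have hV (r : ℝ) (hr : 1 ≤ r) :
      ∫ ξ, sphereMollification decayProfile R r ξ * (‖𝓕 f ξ‖ * ‖𝓕 g ξ‖) ≤ D := by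
    refine (integral_sphereMollification_mul_le_sqrt hR r hf hg).trans ?_
    rw [hD, mul_mul_mul_comm, ← Real.sqrt_mul hC₂.le, ← Real.sqrt_mul hC₃.le, ← mul_assoc]
    gcongr
    · exact (hplanch R hR r hr f hf hf1).trans (by gcongr)
    · exact hST R hR r hr B hB g hg hg1 hgB
  calc _ ≤ ∫ ξ, C₁ * (R * |r₁ - r₂|) ^ α *
          (sphereMollification decayProfile R r₁ ξ * (‖𝓕 f ξ‖ * ‖𝓕 g ξ‖) +
            sphereMollification decayProfile R r₂ ξ * (‖𝓕 f ξ‖ * ‖𝓕 g ξ‖)) := by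
        refine integral_mono_of_nonneg (.of_forall fun ξ => by positivity)
          (((hint r₁).add (hint r₂)).const_mul _) (.of_forall fun ξ => ?_)
        simp only
        rw [← add_mul, ← mul_assoc (C₁ * _)]
        exact mul_le_mul_of_nonneg_right (hsub α hα R hR r₁ r₂ ξ) (by positivity)
    _ ≤ C₁ * (R * |r₁ - r₂|) ^ α * (D + D) := by
        rw [integral_const_mul, integral_add (hint r₁) (hint r₂)]
        gcongr
        · exact hV r₁ hr₁
        · exact hV r₂ hr₂
    _ = _ := by rw [hD]; ring

theorem fourier_sub {f g : E → ℂ} (hf : Integrable f) (hg : Integrable g) (ξ : E) :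
    𝓕 (f - g) ξ = 𝓕 f ξ - 𝓕 g ξ := by
  simp only [Real.fourier_eq, Pi.sub_apply, smul_sub]
  refine integral_sub ?_ ?_
  · exact (Real.fourierIntegral_convergent_iff ξ).2 hf
  · exact (Real.fourierIntegral_convergent_iff ξ).2 hg

variable (E) in
theorem exists_norm_kernelForm_sphereKernel_sub_le_add [Nontrivial E] :
    ∃ C : ℝ, 0 < C ∧ ∀ α ∈ Set.Icc (0 : ℝ) 1, 2 * α ≤ finrank ℝ E - 1 → ∀ R > 0,
      ∀ r₁ r₂ : ℝ, 1 ≤ r₁ → 1 ≤ r₂ →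
      ∀ A B : ℝ, 0 < A → 0 < B → ∀ f g : E → ℂ, Integrable f → Integrable g →
      (∀ x, ‖f x‖ ≤ 1) → (∀ x, ‖g x‖ ≤ 1) → ∫ x, ‖f x‖ ≤ A → ∫ x, ‖g x‖ ≤ B →
      ‖kernelForm (fun z => sphereKernel (r₁ • z) - sphereKernel (r₂ • z)) f g‖ ≤
        C * |r₁ - r₂| ^ α * (R ^ (α - ((finrank ℝ E : ℝ) - 1) / 2) * (A * B) +
          R ^ α * (√(R * A) * √(B ^ (((finrank ℝ E : ℝ) + 3) / (finrank ℝ E + 1))))) := by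
  obtain ⟨C₁, hC₁, hfar⟩ := exists_sphereKernel_sub_le E
  obtain ⟨C₂, hC₂, hnear⟩ := exists_integral_norm_sphereMollification_sub_le E
  refine ⟨C₁ + C₂, by positivity,
    fun α hα hακ R hR r₁ r₂ hr₁ hr₂ A B hA hB f g hf hg hf1 hg1 hfA hgB => ?_⟩
  have hK := continuous_sphereKernel (E := E)
  have hw (r : ℝ) := integrable_sphereMollification (mollifier E).integrable
    (mollifier E).continuous hR r
  have hwL (z : E) : 𝓕 (sphereMollification (mollifier E) R r₁ -
        sphereMollification (mollifier E) R r₂) z =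
      (cutoff E (R⁻¹ • z) * (sphereKernel (r₁ • z) - sphereKernel (r₂ • z)) : ℝ) := by
    rw [mul_sub, ofReal_sub, ← fourier_sphereMollification_mollifier hR,
      ← fourier_sphereMollification_mollifier hR]
    exact fourier_sub (hw r₁) (hw r₂) z
  have hdecay (z : E) (hz : R ≤ ‖z‖) : |sphereKernel (r₁ • z) - sphereKernel (r₂ • z)| ≤
      C₁ * |r₁ - r₂| ^ α * R ^ (α - ((finrank ℝ E : ℝ) - 1) / 2) := by
    refine (hfar α hα z (norm_pos_iff.1 (hR.trans_le hz)) r₁ r₂ hr₁ hr₂).trans ?_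
    gcongr ?_ * ?_
    exact Real.rpow_le_rpow_of_nonpos hR hz (by linarith)
  refine (norm_kernelForm_le_add_integral (by fun_prop) (fun z => (abs_sub _ _).trans
    (add_le_add (abs_sphereKernel_le _) (abs_sphereKernel_le _))) ((hw r₁).sub (hw r₂)) hR hwL
    (by positivity) hdecay hf hg).trans ?_
  have h := hnear α hα R hR r₁ r₂ hr₁ hr₂ A B hA hB f g hf hg hf1 hg1 hfA hgB
  rw [Real.mul_rpow hR.le (abs_nonneg _)] at h
  rw [mul_add]
  refine add_le_add ?_ (h.trans ?_)
  · rw [mul_assoc (C₁ * _)]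
    gcongr ?_ * _ * (_ * ?_)
    · linarith
    · gcongr
  · rw [mul_comm (R ^ α), ← mul_assoc C₂, mul_assoc (C₂ * _)]
    gcongr
    linarith

theorem exists_pos_rpow_balanced {d : ℝ} (hd : 0 < d) (α : ℝ) {A B : ℝ} (hA : 0 < A)
    (hB : 0 < B) :
    ∃ R : ℝ, 0 < R ∧
      R ^ (α - (d - 1) / 2) * (A * B) = A ^ ((d + 1 + 2 * α) / (2 * d)) *
        B ^ ((d + 3 + 2 * α) / (d + 1) - (d + 1 + 2 * α) / (2 * d)) ∧
      R ^ α * (√(R * A) * √(B ^ ((d + 3) / (d + 1)))) = A ^ ((d + 1 + 2 * α) / (2 * d)) *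
        B ^ ((d + 3 + 2 * α) / (d + 1) - (d + 1 + 2 * α) / (2 * d)) := by
  obtain ⟨a, rfl⟩ : ∃ a, Real.exp a = A := ⟨_, Real.exp_log hA⟩
  obtain ⟨b, rfl⟩ : ∃ b, Real.exp b = B := ⟨_, Real.exp_log hB⟩
  refine ⟨Real.exp (a / d + b * (d - 1) / (d * (d + 1))), Real.exp_pos _, ?_, ?_⟩ <;>
  · simp only [Real.sqrt_eq_rpow, ← Real.exp_mul, ← Real.exp_add]
    congr 1
    field_simp
    ring

/-- The form with kernel `L` is of restricted type with exponents `a` and `b`: tested on functions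
bounded by `1`, it is at most `S` times the product of the powers `a` and `b` of the `L¹` norms. -/
def HasRestrictedType (L : E → ℝ) (S a b : ℝ) : Prop :=
  ∀ f g : E → ℂ, Integrable f → Integrable g → (∀ x, ‖f x‖ ≤ 1) → (∀ x, ‖g x‖ ≤ 1) →
    ‖kernelForm L f g‖ ≤ S * ((∫ x, ‖f x‖) ^ a * (∫ x, ‖g x‖) ^ b)

variable (E) in
theorem exists_hasRestrictedType_sphereKernel_sub [Nontrivial E] :
    ∃ C : ℝ, 0 < C ∧ ∀ α ∈ Set.Icc (0 : ℝ) 1, 2 * α ≤ finrank ℝ E - 1 →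
      ∀ r₁ r₂ : ℝ, 1 ≤ r₁ → 1 ≤ r₂ →
      HasRestrictedType (fun z : E => sphereKernel (r₁ • z) - sphereKernel (r₂ • z))
        (C * |r₁ - r₂| ^ α) (((finrank ℝ E : ℝ) + 1 + 2 * α) / (2 * finrank ℝ E))
        (((finrank ℝ E : ℝ) + 3 + 2 * α) / (finrank ℝ E + 1) -
          ((finrank ℝ E : ℝ) + 1 + 2 * α) / (2 * finrank ℝ E)) := by
  obtain ⟨C, hC, h⟩ := exists_norm_kernelForm_sphereKernel_sub_le_add E
  refine ⟨2 * C, by positivity, fun α hα hακ r₁ r₂ hr₁ hr₂ f g hf hg hf1 hg1 => ?_⟩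
  have hfg : 0 ≤ (∫ x, ‖f x‖) * ∫ x, ‖g x‖ := by positivity
  rcases hfg.eq_or_lt with h0 | hpos
  · refine (norm_kernelForm_le hf hg fun z => (abs_sub _ _).trans
      (add_le_add (abs_sphereKernel_le _) (abs_sphereKernel_le _))).trans ?_
    rw [← h0, mul_zero]
    positivity
  have hA := pos_of_mul_pos_left hpos (integral_nonneg fun x => norm_nonneg (g x))
  have hB := pos_of_mul_pos_right hpos (integral_nonneg fun x => norm_nonneg (f x))
  obtain ⟨R, hR, hfar, hnear⟩ :=
    exists_pos_rpow_balanced (Nat.cast_pos.2 (finrank_pos (R := ℝ) (M := E))) α hA hB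
  refine (h α hα hακ R hR r₁ r₂ hr₁ hr₂ _ _ hA hB f g hf hg hf1 hg1 le_rfl le_rfl).trans_eq ?_
  rw [hfar, hnear]
  ring

end PairBound

section MinMax

theorem lintegral_Ioc_rpow_neg {a : ℝ} (ha : a < 1) {l : ℝ} (hl : 0 < l) :
    ∫⁻ u in Set.Ioc 0 l, ENNReal.ofReal (u ^ (-a)) = ENNReal.ofReal (l ^ (1 - a) / (1 - a)) := by
  rw [← ofReal_integral_eq_lintegral_ofReal ((intervalIntegrable_iff_integrableOn_Ioc_of_le hl.le).1
      (intervalIntegral.intervalIntegrable_rpow' (by linarith)))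
    ((ae_restrict_mem measurableSet_Ioc).mono fun u hu => Real.rpow_nonneg hu.1.le _),
    ← intervalIntegral.integral_of_le hl.le, integral_rpow (.inl (by linarith)),
    Real.zero_rpow (by linarith), sub_zero, neg_add_eq_sub]

theorem lintegral_Ioi_rpow_neg {b : ℝ} (hb : 1 < b) {l : ℝ} (hl : 0 < l) :
    ∫⁻ u in Set.Ioi l, ENNReal.ofReal (u ^ (-b)) = ENNReal.ofReal (l ^ (1 - b) / (b - 1)) := by
  rw [← ofReal_integral_eq_lintegral_ofReal (integrableOn_Ioi_rpow_of_lt (by linarith) hl)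
    ((ae_restrict_mem measurableSet_Ioi).mono fun u hu => Real.rpow_nonneg (hl.trans hu).le _),
    integral_Ioi_rpow_of_lt (by linarith) hl, neg_div, ← div_neg, neg_add_eq_sub, neg_sub]

theorem lintegral_min_rpow_mul_max_rpow_eq {a b : ℝ} (ha : a < 1) (hab : a + b = 2) {l : ℝ}
    (hl : 0 < l) :
    ∫⁻ u in Set.Ioi (0 : ℝ), ENNReal.ofReal ((min l u) ^ (-a) * (max l u) ^ (-b)) =
      ENNReal.ofReal (2 / (1 - a)) * ENNReal.ofReal (l⁻¹) := by
  have : 0 < 1 - a := sub_pos.2 ha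
  have hbelow : ∫⁻ u in Set.Ioc 0 l, ENNReal.ofReal ((min l u) ^ (-a) * (max l u) ^ (-b)) =
      ENNReal.ofReal (l⁻¹ / (1 - a)) := by
    rw [setLIntegral_congr_fun (g := fun u => ENNReal.ofReal (l ^ (-b)) * ENNReal.ofReal (u ^ (-a)))
      measurableSet_Ioc fun u hu => by
        simp only [min_eq_right hu.2, max_eq_left hu.2]
        rw [mul_comm, ENNReal.ofReal_mul (by positivity)],
      lintegral_const_mul' _ _ ENNReal.ofReal_ne_top, lintegral_Ioc_rpow_neg ha hl,
      ← ENNReal.ofReal_mul (by positivity), ← mul_div_assoc, ← Real.rpow_add hl,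
      show -b + (1 - a) = -1 by linarith, Real.rpow_neg_one]
  have habove : ∫⁻ u in Set.Ioi l, ENNReal.ofReal ((min l u) ^ (-a) * (max l u) ^ (-b)) =
      ENNReal.ofReal (l⁻¹ / (1 - a)) := by
    rw [setLIntegral_congr_fun (g := fun u => ENNReal.ofReal (l ^ (-a)) * ENNReal.ofReal (u ^ (-b)))
      measurableSet_Ioi fun u hu => by
        simp only [min_eq_left (le_of_lt (Set.mem_Ioi.1 hu)),
          max_eq_right (le_of_lt (Set.mem_Ioi.1 hu))]
        rw [ENNReal.ofReal_mul (by positivity)],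
      lintegral_const_mul' _ _ ENNReal.ofReal_ne_top, lintegral_Ioi_rpow_neg (by linarith) hl,
      ← ENNReal.ofReal_mul (by positivity), ← mul_div_assoc, ← Real.rpow_add hl,
      show -a + (1 - b) = -1 by linarith, Real.rpow_neg_one, show b - 1 = 1 - a by linarith]
  rw [← Set.Ioc_union_Ioi_eq_Ioi hl.le,
    lintegral_union measurableSet_Ioi (Set.Ioc_disjoint_Ioi le_rfl), hbelow, habove,
    ← ENNReal.ofReal_add (by positivity) (by positivity), ← ENNReal.ofReal_mul (by positivity)]
  ring_nf

theorem lintegral_lintegral_mul_add_le {Ω : Type*} [MeasurableSpace Ω] {ρ : Measure Ω} [SFinite ρ]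
    {w : Ω → Ω → ℝ≥0∞} (hwm : Measurable fun q : Ω × Ω => w q.1 q.2)
    (hsymm : ∀ l u, w l u = w u l) {m h : Ω → ℝ≥0∞} (hm : Measurable m)
    (hw : ∀ᵐ l ∂ρ, ∫⁻ u, w l u ∂ρ ≤ h l) :
    ∫⁻ l, ∫⁻ u, w l u * (m l + m u) ∂ρ ∂ρ ≤ 2 * ∫⁻ l, m l * h l ∂ρ := by
  have hm1 : Measurable fun q : Ω × Ω => w q.1 q.2 * m q.1 := by fun_prop
  have hm2 : Measurable fun q : Ω × Ω => w q.1 q.2 * m q.2 := by fun_prop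
  have hfst : ∫⁻ l, ∫⁻ u, w l u * m l ∂ρ ∂ρ ≤ ∫⁻ l, m l * h l ∂ρ := by
    refine lintegral_mono_ae (hw.mono fun l hl => ?_)
    rw [lintegral_mul_const (f := fun u => w l u) _ (hwm.comp measurable_prodMk_left), mul_comm]
    gcongr
  have hsnd : ∫⁻ l, ∫⁻ u, w l u * m u ∂ρ ∂ρ = ∫⁻ l, ∫⁻ u, w l u * m l ∂ρ ∂ρ := by
    rw [lintegral_lintegral_swap hm2.aemeasurable]
    exact lintegral_congr fun l => lintegral_congr fun u => by rw [hsymm]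
  calc _ = (∫⁻ l, ∫⁻ u, w l u * m l ∂ρ ∂ρ) + ∫⁻ l, ∫⁻ u, w l u * m u ∂ρ ∂ρ := by
        rw [← lintegral_add_left hm1.lintegral_prod_right']
        refine lintegral_congr fun l => ?_
        rw [← lintegral_add_left (f := fun u => w l u * m l) (hm1.comp measurable_prodMk_left)]
        simp only [mul_add]
    _ ≤ _ := by
        rw [hsnd, two_mul]
        exact add_le_add hfst hfst

theorem lintegral_lintegral_min_rpow_mul_max_rpow_le {a b : ℝ} (ha : a < 1) (hab : a + b = 2)
    {m : ℝ → ℝ≥0∞} (hm : Measurable m) :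
    ∫⁻ l in Set.Ioi (0 : ℝ), ∫⁻ u in Set.Ioi (0 : ℝ),
        ENNReal.ofReal ((min l u) ^ (-a) * (max l u) ^ (-b)) * (m l + m u) ≤
      2 * (ENNReal.ofReal (2 / (1 - a)) *
        ∫⁻ l in Set.Ioi (0 : ℝ), m l * ENNReal.ofReal (l⁻¹)) := by
  refine (lintegral_lintegral_mul_add_le
    (w := fun l u => ENNReal.ofReal ((min l u) ^ (-a) * (max l u) ^ (-b)))
    (by fun_prop) (fun l u => by simp only [min_comm l u, max_comm l u]) hm
    ((ae_restrict_mem measurableSet_Ioi).mono fun _ hl =>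
      (lintegral_min_rpow_mul_max_rpow_eq ha hab hl).le)).trans_eq ?_
  simp only [mul_left_comm (m _), lintegral_const_mul' _ _ ENNReal.ofReal_ne_top]

theorem rpow_mul_rpow_le_rpow_mul_add {U V P x y : ℝ} (hU : 0 ≤ U) (hV : 0 ≤ V) (hx : 0 ≤ x)
    (hy : 0 ≤ y) (hxy : 1 ≤ x + y) (hUP : U ≤ P) (hVP : V ≤ P) :
    U ^ x * V ^ y ≤ P ^ (x + y - 1) * (U + V) := by
  have hW : 0 ≤ max U V := hU.trans (le_max_left _ _)
  calc U ^ x * V ^ y ≤ max U V ^ x * max U V ^ y := by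
        gcongr
        · exact le_max_left _ _
        · exact le_max_right _ _
    _ = max U V ^ (x + y - 1) * max U V := by
        rw [← Real.rpow_add_of_nonneg hW hx hy, ← Real.rpow_add_one' hW (by linarith),
          sub_add_cancel]
    _ ≤ P ^ (x + y - 1) * (U + V) :=
        mul_le_mul (Real.rpow_le_rpow hW (max_le hUP hVP) (by linarith))
          (max_le (by linarith) (by linarith)) hW (Real.rpow_nonneg (hU.trans hUP) _)

theorem rpow_mul_rpow_le_of_mul_rpow_le {A B P l u p x y : ℝ} (hA : 0 ≤ A) (hB : 0 ≤ B)
    (hl : 0 < l) (hu : 0 < u) (hx : 0 ≤ x) (hy : 0 ≤ y) (hxy : 1 ≤ x + y)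
    (hAP : A * l ^ p ≤ P) (hBP : B * u ^ p ≤ P) :
    A ^ x * B ^ y ≤
      P ^ (x + y - 1) * (l ^ (-(p * x)) * u ^ (-(p * y)) * (A * l ^ p + B * u ^ p)) := by
  have hpow {A l : ℝ} (hA : 0 ≤ A) (hl : 0 < l) (x : ℝ) :
      A ^ x = (A * l ^ p) ^ x * l ^ (-(p * x)) := by
    rw [Real.mul_rpow hA (by positivity), ← Real.rpow_mul hl.le, mul_assoc, ← Real.rpow_add hl,
      add_neg_cancel, Real.rpow_zero, mul_one]
  calc A ^ x * B ^ y = (A * l ^ p) ^ x * (B * u ^ p) ^ y * (l ^ (-(p * x)) * u ^ (-(p * y))) := by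
        rw [hpow hA hl x, hpow hB hu y]
        ring
    _ ≤ P ^ (x + y - 1) * (A * l ^ p + B * u ^ p) * (l ^ (-(p * x)) * u ^ (-(p * y))) :=
        mul_le_mul_of_nonneg_right (rpow_mul_rpow_le_rpow_mul_add (by positivity) (by positivity)
          hx hy hxy hAP hBP) (by positivity)
    _ = _ := by ring

end MinMax

section LevelParts

variable {X : Type*} {f : X → ℂ} {l : ℝ}

/-- The phase of `f` on the set where `‖f‖` exceeds the level `l`, so that the level parts of `f`
integrate to `f` over the positive levels. -/
def levelPart (f : X → ℂ) (l : ℝ) (x : X) : ℂ :=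
  (Set.Iio ‖f x‖).indicator (fun _ => f x / ‖f x‖) l

theorem norm_levelPart (hl : 0 ≤ l) (x : X) :
    ‖levelPart f l x‖ = {x | l < ‖f x‖}.indicator (fun _ => (1 : ℝ)) x := by
  by_cases h : l < ‖f x‖
  · have : ‖f x‖ ≠ 0 := (hl.trans_lt h).ne'
    simp [levelPart, Set.indicator, h, this]
  · simp [levelPart, Set.indicator, h]

theorem norm_levelPart_le_one (hl : 0 ≤ l) (x : X) : ‖levelPart f l x‖ ≤ 1 := by
  rw [norm_levelPart hl]
  exact Set.indicator_le_self' (fun _ _ => zero_le_one) x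

theorem integrable_levelPart_level (f : X → ℂ) (x : X) :
    Integrable (fun l => levelPart f l x) (volume.restrict (Set.Ioi 0)) := by
  unfold levelPart
  rw [integrable_indicator_iff measurableSet_Iio, IntegrableOn,
    Measure.restrict_restrict measurableSet_Iio, Set.inter_comm, Set.Ioi_inter_Iio]
  exact integrable_const _

theorem integral_levelPart_level (f : X → ℂ) (x : X) :
    ∫ l in Set.Ioi 0, levelPart f l x = f x := by
  unfold levelPart
  rw [setIntegral_indicator measurableSet_Iio, Set.Ioi_inter_Iio, setIntegral_const,
    Real.volume_real_Ioo, sub_zero, max_eq_left (norm_nonneg _), real_smul]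
  by_cases h : f x = 0
  · simp [h]
  · have : (‖f x‖ : ℂ) ≠ 0 := by simpa using h
    field_simp

theorem integral_norm_levelPart_level (f : X → ℂ) (x : X) :
    ∫ l in Set.Ioi 0, ‖levelPart f l x‖ = ‖f x‖ := by
  have hnorm : ∀ l ∈ Set.Ioi (0 : ℝ),
      ‖levelPart f l x‖ = (Set.Iio ‖f x‖).indicator (fun _ => 1) l :=
    fun l hl => by rw [norm_levelPart (le_of_lt hl)]; simp [Set.indicator]
  rw [setIntegral_congr_fun measurableSet_Ioi hnorm, setIntegral_indicator measurableSet_Iio,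
    Set.Ioi_inter_Iio, setIntegral_const, Real.volume_real_Ioo, sub_zero,
    max_eq_left (norm_nonneg _), smul_eq_mul, mul_one]

theorem integrable_levelPart_mul_conj (f : X → ℂ) (x y : X) :
    Integrable (fun q : ℝ × ℝ => levelPart f q.1 x * conj (levelPart f q.2 y))
      ((volume.restrict (Set.Ioi 0)).prod (volume.restrict (Set.Ioi 0))) :=
  (integrable_levelPart_level f x).mul_prod
    (conjLIE.integrable_comp_iff.2 (integrable_levelPart_level f y))

theorem integral_levelPart_mul_conj (f : X → ℂ) (x y : X) :
    ∫ q : ℝ × ℝ, levelPart f q.1 x * conj (levelPart f q.2 y)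
      ∂(volume.restrict (Set.Ioi 0)).prod (volume.restrict (Set.Ioi 0)) = f x * conj (f y) := by
  rw [integral_prod_mul (fun l => levelPart f l x) (fun l => conj (levelPart f l y)),
    integral_conj, integral_levelPart_level, integral_levelPart_level]

theorem integral_norm_levelPart_mul_conj (f : X → ℂ) (x y : X) :
    ∫ q : ℝ × ℝ, ‖levelPart f q.1 x * conj (levelPart f q.2 y)‖
      ∂(volume.restrict (Set.Ioi 0)).prod (volume.restrict (Set.Ioi 0)) =
    ‖f x * conj (f y)‖ := by
  simp only [norm_mul, RCLike.norm_conj]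
  rw [integral_prod_mul (fun l => ‖levelPart f l x‖) (fun l => ‖levelPart f l y‖),
    integral_norm_levelPart_level, integral_norm_levelPart_level]

variable [MeasurableSpace X] {μ : Measure X}

theorem measurable_levelPart (hf : Measurable f) :
    Measurable fun q : ℝ × X => levelPart f q.1 q.2 := by
  have hindicator : (fun q : ℝ × X => levelPart f q.1 q.2) =
      {q : ℝ × X | q.1 < ‖f q.2‖}.indicator fun q => f q.2 / ‖f q.2‖ := by
    ext q
    simp [levelPart, Set.indicator]
  rw [hindicator]
  exact Measurable.indicator (by fun_prop) (measurableSet_lt (by fun_prop) (by fun_prop))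

theorem integrable_levelPart (hf : Measurable f) (hfi : Integrable f μ) (hl : 0 < l) :
    Integrable (levelPart f l) μ := by
  refine (hfi.norm.const_mul l⁻¹).mono' ((measurable_levelPart hf).comp
    (by fun_prop : Measurable fun x : X => (l, x))).aestronglyMeasurable (.of_forall fun x => ?_)
  rw [norm_levelPart hl.le]
  refine Set.indicator_apply_le' (fun h => ?_) fun _ => by positivity
  rw [← div_eq_inv_mul, one_le_div hl]
  exact le_of_lt h

theorem integral_norm_levelPart (hf : Measurable f) (hl : 0 < l) :
    ∫ x, ‖levelPart f l x‖ ∂μ = μ.real {x | l < ‖f x‖} := by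
  simp only [norm_levelPart hl.le]
  rw [integral_indicator_const _ (measurableSet_lt (by fun_prop) (by fun_prop)), smul_eq_mul,
    mul_one]

theorem measureReal_mul_rpow_le_integral {p : ℝ} (hp : 0 < p)
    (hfp : Integrable (fun x => ‖f x‖ ^ p) μ) (hl : 0 < l) :
    μ.real {x | l < ‖f x‖} * l ^ p ≤ ∫ x, ‖f x‖ ^ p ∂μ := by
  have hlp : 0 < l ^ p := by positivity
  refine le_trans ?_ (mul_meas_ge_le_integral_of_nonneg
    (.of_forall fun x => by positivity) hfp (l ^ p))
  rw [mul_comm]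
  gcongr
  · have h := hfp.measure_norm_ge_lt_top hlp
    simp only [Real.norm_of_nonneg (Real.rpow_nonneg (norm_nonneg _) _)] at h
    exact h.ne
  · exact fun h => Real.rpow_le_rpow hl.le (le_of_lt h) hp.le

theorem measurable_measure_lt_norm (f : X → ℂ) (μ : Measure X) :
    Measurable fun l : ℝ => μ {x | l < ‖f x‖} :=
  Antitone.measurable fun _ _ hlu => measure_mono fun _ hx => lt_of_le_of_lt hlu hx

theorem lintegral_measure_mul_rpow_mul_inv {p : ℝ} (hp : 0 < p) (hf : AEMeasurable f μ)
    (hfp : Integrable (fun x => ‖f x‖ ^ p) μ) :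
    ∫⁻ l in Set.Ioi (0 : ℝ), μ {x | l < ‖f x‖} * ENNReal.ofReal (l ^ p) * ENNReal.ofReal (l⁻¹) =
      ENNReal.ofReal ((∫ x, ‖f x‖ ^ p ∂μ) / p) := by
  rw [ENNReal.ofReal_div_of_pos hp, ENNReal.eq_div_iff (by simpa using hp) ENNReal.ofReal_ne_top,
    ofReal_integral_eq_lintegral_ofReal hfp (.of_forall fun _ => by positivity),
    lintegral_rpow_eq_lintegral_meas_lt_mul μ (.of_forall fun _ => norm_nonneg _) hf.norm hp]
  congr 1
  refine setLIntegral_congr_fun measurableSet_Ioi fun l hl => ?_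
  have hl0 : 0 < l := hl
  rw [mul_assoc, ← ENNReal.ofReal_mul (by positivity), Real.rpow_sub_one hl0.ne', div_eq_mul_inv]

end LevelParts

section RestrictedType

variable {f : E → ℂ} {L : E → ℝ} {M S p a b : ℝ}

theorem enorm_kernelForm_le_lintegral_levelPart (hf : Measurable f) (hfi : Integrable f)
    (hL : Continuous L) (hM : ∀ z, |L z| ≤ M) :
    ‖kernelForm L f f‖ₑ ≤ ∫⁻ l in Set.Ioi (0 : ℝ), ∫⁻ u in Set.Ioi (0 : ℝ),
      ‖kernelForm L (levelPart f l) (levelPart f u)‖ₑ := by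
  set ρ : Measure ℝ := volume.restrict (Set.Ioi 0)
  have hlev := measurable_levelPart hf
  have hconj := Complex.continuous_conj.measurable
  have hLm := hL.measurable
  set Φ : E × E → ℝ × ℝ → ℂ := fun z q =>
    levelPart f q.1 z.1 * conj (levelPart f q.2 z.2) * (L (z.1 - z.2) : ℂ) with hΦ
  have hΦm : Measurable (Function.uncurry Φ) := by
    simp only [hΦ, Function.uncurry_def]
    refine Measurable.mul (Measurable.mul ?_ ?_) (by fun_prop)
    · exact hlev.comp (by fun_prop : Measurable fun q : (E × E) × (ℝ × ℝ) => (q.2.1, q.1.1))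
    · exact hconj.comp
        (hlev.comp (by fun_prop : Measurable fun q : (E × E) × (ℝ × ℝ) => (q.2.2, q.1.2)))
  have hΦi : Integrable (Function.uncurry Φ) (volume.prod (ρ.prod ρ)) := by
    rw [integrable_prod_iff hΦm.aestronglyMeasurable]
    refine ⟨.of_forall fun z =>
      (integrable_levelPart_mul_conj f z.1 z.2).mul_const (L (z.1 - z.2) : ℂ), ?_⟩
    simp only [Function.uncurry_apply_pair, hΦ, norm_mul _ (ofReal _), integral_mul_const,
      ρ, integral_norm_levelPart_mul_conj]
    simpa only [norm_mul] using (integrable_kernelForm hfi hfi hL hM).norm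
  have hlevels : kernelForm L f f = ∫ q : ℝ × ℝ, kernelForm L (levelPart f q.1) (levelPart f q.2)
      ∂ρ.prod ρ := by
    simp only [kernelForm, ← integral_levelPart_mul_conj, ← integral_mul_const]
    exact integral_integral_swap hΦi
  rw [hlevels]
  exact (enorm_integral_le_lintegral_enorm _).trans (lintegral_prod_le _)

theorem norm_kernelForm_levelPart_le (h : HasRestrictedType L S a b) (hS : 0 ≤ S)
    (hL : ∀ z, L (-z) = L z) (ha : 0 ≤ a) (hb : 0 ≤ b) (hab : 1 ≤ a + b) (hp : 0 < p)
    (hf : Measurable f) (hfi : Integrable f) (hfp : Integrable fun x => ‖f x‖ ^ p)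
    {l u : ℝ} (hl : 0 < l) (hu : 0 < u) :
    ‖kernelForm L (levelPart f l) (levelPart f u)‖ ≤
      S * (∫ x, ‖f x‖ ^ p) ^ (a + b - 1) * ((min l u) ^ (-(p * a)) * (max l u) ^ (-(p * b)) *
        (volume.real {x | l < ‖f x‖} * l ^ p + volume.real {x | u < ‖f x‖} * u ^ p)) := by
  wlog hlu : l ≤ u generalizing l u
  · rw [norm_kernelForm_swap hL, min_comm, max_comm, add_comm (volume.real _ * _)]
    exact this hu hl (le_of_not_ge hlu)
  refine (h _ _ (integrable_levelPart hf hfi hl) (integrable_levelPart hf hfi hu)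
    (norm_levelPart_le_one hl.le) (norm_levelPart_le_one hu.le)).trans ?_
  rw [min_eq_left hlu, max_eq_right hlu, mul_assoc, integral_norm_levelPart hf hl,
    integral_norm_levelPart hf hu]
  exact mul_le_mul_of_nonneg_left (rpow_mul_rpow_le_of_mul_rpow_le measureReal_nonneg
    measureReal_nonneg hl hu ha hb hab (measureReal_mul_rpow_le_integral hp hfp hl)
    (measureReal_mul_rpow_le_integral hp hfp hu)) hS

theorem enorm_kernelForm_levelPart_le (h : HasRestrictedType L S a b) (hS : 0 ≤ S)
    (hL : ∀ z, L (-z) = L z) (ha : 0 ≤ a) (hb : 0 ≤ b) (hab : 1 ≤ a + b) (hp : 0 < p)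
    (hf : Measurable f) (hfi : Integrable f) (hfp : Integrable fun x => ‖f x‖ ^ p)
    {l u : ℝ} (hl : 0 < l) (hu : 0 < u) :
    ‖kernelForm L (levelPart f l) (levelPart f u)‖ₑ ≤
      ENNReal.ofReal (S * (∫ x, ‖f x‖ ^ p) ^ (a + b - 1)) *
        (ENNReal.ofReal ((min l u) ^ (-(p * a)) * (max l u) ^ (-(p * b))) *
          (volume {x | l < ‖f x‖} * ENNReal.ofReal (l ^ p) +
            volume {x | u < ‖f x‖} * ENNReal.ofReal (u ^ p))) := by
  have hlevel {l : ℝ} (hl : 0 < l) : volume {x | l < ‖f x‖} * ENNReal.ofReal (l ^ p) =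
      ENNReal.ofReal (volume.real {x | l < ‖f x‖} * l ^ p) := by
    rw [ENNReal.ofReal_mul measureReal_nonneg,
      ofReal_measureReal (hfi.measure_norm_gt_lt_top hl).ne]
  rw [← ofReal_norm, hlevel hl, hlevel hu, ← ENNReal.ofReal_add (by positivity) (by positivity),
    ← ENNReal.ofReal_mul (by positivity), ← ENNReal.ofReal_mul (by positivity)]
  exact ENNReal.ofReal_le_ofReal
    (norm_kernelForm_levelPart_le h hS hL ha hb hab hp hf hfi hfp hl hu)

/-- Since `p * a < 1`, the restricted bounds of the pairs of levels are summable. -/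
theorem norm_kernelForm_self_le_of_hasRestrictedType (h : HasRestrictedType L S a b) (hS : 0 ≤ S)
    (hLc : Continuous L) (hM : ∀ z, |L z| ≤ M) (hL : ∀ z, L (-z) = L z) (hp : 0 < p) (hp2 : p ≤ 2)
    (ha : 0 ≤ a) (hpa : p * a < 1) (hpab : p * a + p * b = 2)
    (hf : Measurable f) (hfi : Integrable f) (hfp : Integrable fun x => ‖f x‖ ^ p) :
    ‖kernelForm L f f‖ ≤ 2 * (2 / (1 - p * a) / p) * S * (∫ x, ‖f x‖ ^ p) ^ (2 / p) := by
  have hab : a + b = 2 / p := by rw [eq_div_iff hp.ne']; linarith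
  have hab1 : 1 ≤ a + b := by rwa [hab, one_le_div hp]
  have hb : 0 ≤ b := (pos_of_mul_pos_right (by linarith : 0 < p * b) hp.le).le
  have : 0 < 1 - p * a := sub_pos.2 hpa
  set P := ∫ x, ‖f x‖ ^ p
  have hP0 : 0 ≤ P := integral_nonneg fun _ => by positivity
  have hPp : P ^ (2 / p) = P ^ (a + b - 1) * P := by
    rw [← hab, ← Real.rpow_add_one' hP0 (by linarith), sub_add_cancel]
  rw [← ENNReal.ofReal_le_ofReal_iff (by positivity), ofReal_norm]
  calc ‖kernelForm L f f‖ₑ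
      ≤ ∫⁻ l in Set.Ioi (0 : ℝ), ∫⁻ u in Set.Ioi (0 : ℝ),
          ‖kernelForm L (levelPart f l) (levelPart f u)‖ₑ :=
        enorm_kernelForm_le_lintegral_levelPart hf hfi hLc hM
    _ ≤ ∫⁻ l in Set.Ioi (0 : ℝ), ∫⁻ u in Set.Ioi (0 : ℝ), ENNReal.ofReal (S * P ^ (a + b - 1)) *
          (ENNReal.ofReal ((min l u) ^ (-(p * a)) * (max l u) ^ (-(p * b))) *
            (volume {x | l < ‖f x‖} * ENNReal.ofReal (l ^ p) +
              volume {x | u < ‖f x‖} * ENNReal.ofReal (u ^ p))) :=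
        setLIntegral_mono' measurableSet_Ioi fun l hl => setLIntegral_mono' measurableSet_Ioi
          fun u hu => enorm_kernelForm_levelPart_le h hS hL ha hb hab1 hp hf hfi hfp hl hu
    _ ≤ ENNReal.ofReal (S * P ^ (a + b - 1)) *
          (2 * (ENNReal.ofReal (2 / (1 - p * a)) * ENNReal.ofReal (P / p))) := by
        simp only [lintegral_const_mul' _ _ ENNReal.ofReal_ne_top]
        gcongr
        rw [← lintegral_measure_mul_rpow_mul_inv hp hf.aemeasurable hfp]
        exact lintegral_lintegral_min_rpow_mul_max_rpow_le hpa hpab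
          ((measurable_measure_lt_norm f volume).mul (by fun_prop))
    _ = ENNReal.ofReal (2 * (2 / (1 - p * a) / p) * S * P ^ (2 / p)) := by
        rw [← ENNReal.ofReal_mul (by positivity), ← ENNReal.ofReal_ofNat,
          ← ENNReal.ofReal_mul (by positivity), ← ENNReal.ofReal_mul (by positivity), hPp]
        congr 1
        ring

end RestrictedType

section RadialContinuity

variable {f : E → ℂ}

theorem abs_integral_sphere_norm_fourier_sq_sub (r₁ r₂ : ℝ) (hf : Integrable f) :
    |(∫ ω : sphere (0 : E) 1, ‖𝓕 f (r₁ • (ω : E))‖ ^ 2 ∂σ) -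
      ∫ ω : sphere (0 : E) 1, ‖𝓕 f (r₂ • (ω : E))‖ ^ 2 ∂σ| =
    ‖kernelForm (fun z => sphereKernel (r₁ • z) - sphereKernel (r₂ • z)) f f‖ := by
  have hK := continuous_sphereKernel (E := E)
  rw [kernelForm_sub hf hf (by fun_prop) (by fun_prop) (fun z => abs_sphereKernel_le _)
    (fun z => abs_sphereKernel_le _), ← integral_sphere_norm_fourier_sq r₁ hf,
    ← integral_sphere_norm_fourier_sq r₂ hf, ← ofReal_sub, norm_real, Real.norm_eq_abs]

variable (E) in
theorem exists_abs_integral_sphere_sub_le_of_lt [Nontrivial E] {α : ℝ}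
    (hα : α ∈ Set.Icc (0 : ℝ) 1) (hα' : 2 * α < finrank ℝ E - 1) {p : ℝ}
    (hp : p * ((finrank ℝ E : ℝ) + 3 + 2 * α) = 2 * (finrank ℝ E + 1)) :
    ∃ C : ℝ, 0 < C ∧ ∀ r₁ r₂ : ℝ, 1 ≤ r₁ → 1 ≤ r₂ → ∀ f : E → ℂ, Measurable f → Integrable f →
      Integrable (fun x => ‖f x‖ ^ p) →
      |(∫ ω : sphere (0 : E) 1, ‖𝓕 f (r₁ • (ω : E))‖ ^ 2 ∂σ) -
        ∫ ω : sphere (0 : E) 1, ‖𝓕 f (r₂ • (ω : E))‖ ^ 2 ∂σ| ≤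
        C * |r₁ - r₂| ^ α * (∫ x, ‖f x‖ ^ p) ^ (2 / p) := by
  obtain ⟨C, hC, h⟩ := exists_hasRestrictedType_sphereKernel_sub E
  have hK := continuous_sphereKernel (E := E)
  have hα0 := hα.1
  set d : ℝ := (finrank ℝ E : ℝ)
  have hd : 0 < d := Nat.cast_pos.2 finrank_pos
  set a := (d + 1 + 2 * α) / (2 * d) with ha
  set b := (d + 3 + 2 * α) / (d + 1) - a with hb
  have hp' : p = 2 * (d + 1) / (d + 3 + 2 * α) := eq_div_of_mul_eq (by positivity) hp
  have hp0 : 0 < p := by rw [hp']; positivity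
  have hp2 : p ≤ 2 := by rw [hp', div_le_iff₀ (by positivity)]; linarith
  have hpa : p * a < 1 := by
    rw [hp', ha, div_mul_div_comm, div_lt_one (by positivity)]
    nlinarith
  have hpab : p * a + p * b = 2 := by
    rw [← mul_add, hb, add_sub_cancel, hp']
    field_simp
  have : 0 < 1 - p * a := sub_pos.2 hpa
  refine ⟨2 * (2 / (1 - p * a) / p) * C, by positivity, fun r₁ r₂ hr₁ hr₂ f hf hfi hfp => ?_⟩
  rw [abs_integral_sphere_norm_fourier_sq_sub r₁ r₂ hfi, mul_assoc (2 * _)]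
  exact norm_kernelForm_self_le_of_hasRestrictedType (h α hα hα'.le r₁ r₂ hr₁ hr₂)
    (by positivity) (by fun_prop) (fun z => (abs_sub _ _).trans
      (add_le_add (abs_sphereKernel_le _) (abs_sphereKernel_le _)))
    (fun z => by simp only [smul_neg, sphereKernel_neg]) hp0 hp2 (by positivity) hpa hpab hf hfi hfp

variable (E) in
theorem exists_abs_integral_sphere_sub_le_of_eq [Nontrivial E] :
    ∃ C : ℝ, 0 < C ∧ ∀ α ∈ Set.Icc (0 : ℝ) 1, 2 * α = finrank ℝ E - 1 →
      ∀ r₁ r₂ : ℝ, 1 ≤ r₁ → 1 ≤ r₂ → ∀ f : E → ℂ, Integrable f →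
      |(∫ ω : sphere (0 : E) 1, ‖𝓕 f (r₁ • (ω : E))‖ ^ 2 ∂σ) -
        ∫ ω : sphere (0 : E) 1, ‖𝓕 f (r₂ • (ω : E))‖ ^ 2 ∂σ| ≤
        C * |r₁ - r₂| ^ α * (∫ x, ‖f x‖) ^ 2 := by
  obtain ⟨C, hC, hsub⟩ := exists_sphereKernel_sub_le E
  refine ⟨C, hC, fun α hα hα' r₁ r₂ hr₁ hr₂ f hf => ?_⟩
  rw [abs_integral_sphere_norm_fourier_sq_sub r₁ r₂ hf, sq]
  refine norm_kernelForm_le hf hf fun z => ?_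
  rcases eq_or_ne z 0 with rfl | hz
  · simp only [smul_zero, sub_self, abs_zero]
    positivity
  · refine (hsub α hα z hz r₁ r₂ hr₁ hr₂).trans_eq ?_
    rw [show α - ((finrank ℝ E : ℝ) - 1) / 2 = 0 by linarith, Real.rpow_zero, mul_one]

variable (E) in
theorem exists_abs_integral_sphere_sub_le [Nontrivial E] {α : ℝ}
    (hα : α ∈ Set.Icc (0 : ℝ) 1) (hα' : 2 * α ≤ finrank ℝ E - 1) {p : ℝ}
    (hp : p * ((finrank ℝ E : ℝ) + 3 + 2 * α) = 2 * (finrank ℝ E + 1)) :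
    ∃ C : ℝ, 0 < C ∧ ∀ r₁ r₂ : ℝ, 1 ≤ r₁ → 1 ≤ r₂ → ∀ f : E → ℂ, Integrable f →
      Integrable (fun x => ‖f x‖ ^ p) →
      |(∫ ω : sphere (0 : E) 1, ‖𝓕 f (r₁ • (ω : E))‖ ^ 2 ∂σ) -
        ∫ ω : sphere (0 : E) 1, ‖𝓕 f (r₂ • (ω : E))‖ ^ 2 ∂σ| ≤
        C * |r₁ - r₂| ^ α * (∫ x, ‖f x‖ ^ p) ^ (2 / p) := by
  rcases hα'.lt_or_eq with hlt | heq
  · obtain ⟨C, hC, h⟩ := exists_abs_integral_sphere_sub_le_of_lt E hα hlt hp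
    refine ⟨C, hC, fun r₁ r₂ hr₁ hr₂ f hf hfp => ?_⟩
    have hfg := hf.1.ae_eq_mk
    have hfourier : 𝓕 f = 𝓕 (hf.1.mk f) := by
      ext ξ
      simp only [Real.fourier_eq]
      exact integral_congr_ae (hfg.mono fun x hx => by simp only [hx])
    have hpow : (fun x => ‖f x‖ ^ p) =ᵐ[volume] fun x => ‖hf.1.mk f x‖ ^ p :=
      hfg.mono fun x hx => by simp only [hx]
    rw [hfourier, integral_congr_ae hpow]
    exact h r₁ r₂ hr₁ hr₂ _ hf.1.stronglyMeasurable_mk.measurable (hf.congr hfg) (hfp.congr hpow)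
  · obtain ⟨C, hC, h⟩ := exists_abs_integral_sphere_sub_le_of_eq E
    have hp1 : p = 1 := by
      refine mul_right_cancel₀ (b := 2 * ((finrank ℝ E : ℝ) + 1)) (by positivity) ?_
      linear_combination hp - p * heq
    refine ⟨C, hC, fun r₁ r₂ hr₁ hr₂ f hf _ => ?_⟩
    simpa only [hp1, Real.rpow_one, div_one, Real.rpow_two] using h α hα heq r₁ r₂ hr₁ hr₂ f hf

end RadialContinuity

section Scaling

theorem fourier_comp_inv_smul (f : E → ℂ) {c : ℝ} (hc : 0 < c) (ξ : E) :
    𝓕 (fun x => f (c⁻¹ • x)) ξ = ((c ^ finrank ℝ E : ℝ) : ℂ) * 𝓕 f (c • ξ) := by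
  have h := Measure.integral_comp_inv_smul (volume : Measure E)
    (fun x => Real.fourierChar (-⟪x, c • ξ⟫) • f x) c
  rw [abs_of_nonneg (by positivity)] at h
  rw [Real.fourier_eq, Real.fourier_eq, ← real_smul, ← h]
  congr 1 with x
  rw [real_inner_smul_left, real_inner_smul_right, inv_mul_cancel_left₀ hc.ne']

theorem integral_sphere_norm_fourier_comp_inv_smul (f : E → ℂ) {c : ℝ} (hc : 0 < c) (r : ℝ) :
    ∫ ω : sphere (0 : E) 1, ‖𝓕 (fun x => f (c⁻¹ • x)) ((c⁻¹ * r) • (ω : E))‖ ^ 2 ∂σ =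
      (c ^ finrank ℝ E) ^ 2 * ∫ ω : sphere (0 : E) 1, ‖𝓕 f (r • (ω : E))‖ ^ 2 ∂σ := by
  rw [← integral_const_mul]
  congr 1 with ω
  rw [fourier_comp_inv_smul f hc, norm_mul, mul_pow, norm_real, Real.norm_eq_abs, sq_abs,
    smul_smul, mul_inv_cancel_left₀ hc.ne']

variable (E) in
theorem exists_abs_integral_sphere_sub_le_of_radius_le [Nontrivial E] {α : ℝ}
    (hα : α ∈ Set.Icc (0 : ℝ) 1) (hα' : 2 * α ≤ finrank ℝ E - 1) {p : ℝ}
    (hp : p * ((finrank ℝ E : ℝ) + 3 + 2 * α) = 2 * (finrank ℝ E + 1)) :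
    ∃ C : ℝ, 0 < C ∧ ∀ c > 0, ∀ r₁ r₂ : ℝ, c ≤ r₁ → c ≤ r₂ → ∀ f : E → ℂ, Integrable f →
      Integrable (fun x => ‖f x‖ ^ p) →
      (c ^ finrank ℝ E) ^ 2 * |(∫ ω : sphere (0 : E) 1, ‖𝓕 f (r₁ • (ω : E))‖ ^ 2 ∂σ) -
        ∫ ω : sphere (0 : E) 1, ‖𝓕 f (r₂ • (ω : E))‖ ^ 2 ∂σ| ≤
        C * (|r₁ - r₂| / c) ^ α * (c ^ finrank ℝ E * ∫ x, ‖f x‖ ^ p) ^ (2 / p) := by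
  obtain ⟨C, hC, h⟩ := exists_abs_integral_sphere_sub_le E hα hα' hp
  refine ⟨C, hC, fun c hc r₁ r₂ hr₁ hr₂ f hf hfp => ?_⟩
  have hc' := inv_ne_zero hc.ne'
  have hone {r : ℝ} (hr : c ≤ r) : 1 ≤ c⁻¹ * r := by rwa [← div_eq_inv_mul, one_le_div hc]
  have hnorm : ∫ x, ‖f (c⁻¹ • x)‖ ^ p = c ^ finrank ℝ E * ∫ x, ‖f x‖ ^ p := by
    rw [Measure.integral_comp_inv_smul volume (fun x => ‖f x‖ ^ p) c,
      abs_of_nonneg (by positivity), smul_eq_mul]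
  have hdist : |c⁻¹ * r₁ - c⁻¹ * r₂| = |r₁ - r₂| / c := by
    rw [← mul_sub, abs_mul, abs_of_pos (inv_pos.2 hc), div_eq_inv_mul]
  have hscaled := h _ _ (hone hr₁) (hone hr₂) (fun x => f (c⁻¹ • x)) (hf.comp_smul hc')
    (hfp.comp_smul hc')
  rwa [integral_sphere_norm_fourier_comp_inv_smul f hc,
    integral_sphere_norm_fourier_comp_inv_smul f hc, ← mul_sub, abs_mul,
    abs_of_nonneg (by positivity), hnorm, hdist] at hscaled

theorem abs_sqrt_sub_sqrt_div_le {m s t : ℝ} (hm : 0 < m) (hs : m ≤ s) (ht : m ≤ t) :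
    |√s - √t| / √m ≤ |s - t| / m := by
  have hfactor : |s - t| = |√s - √t| * (√s + √t) := by
    rw [← abs_of_nonneg (by positivity : 0 ≤ √s + √t), ← abs_mul, mul_comm, ← sq_sub_sq,
      Real.sq_sqrt (hm.le.trans hs), Real.sq_sqrt (hm.le.trans ht)]
  have hsum : √m ≤ √s + √t := (Real.sqrt_le_sqrt hs).trans (le_add_of_nonneg_right (by positivity))
  rw [div_le_div_iff₀ (by positivity) hm, hfactor]
  nth_rw 1 [← Real.mul_self_sqrt hm.le]
  rw [mul_assoc, mul_comm (√m) (√m)]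
  gcongr

theorem rpow_mul_rescaled_eq {n γ m d P : ℝ} (hγ : 0 < γ) (hm : 0 < m) (hd : 0 ≤ d) (hP : 0 ≤ P) :
    m ^ ((n - 2) / 2) * (m ^ (-n) * ((d / m) ^ ((n + 1) / γ - 1) *
      (m ^ (n / 2) * P) ^ ((γ + 2) / γ))) =
    (d ^ (n + 1 - γ) / m) ^ (1 / γ) * (P ^ ((γ + 2) / (2 * γ))) ^ 2 := by
  have hPpow : (P ^ ((γ + 2) / (2 * γ))) ^ 2 = P ^ ((γ + 2) / γ) := by
    rw [← Real.rpow_mul_natCast hP]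
    congr 1
    push_cast
    field_simp
  have hdpow : (d ^ (n + 1 - γ)) ^ (1 / γ) = d ^ ((n + 1) / γ - 1) := by
    rw [← Real.rpow_mul hd]
    congr 1
    field_simp
  have hmpow : m ^ (-(1 / γ)) = m ^ ((n - 2) / 2) * m ^ (-n) * m ^ (-((n + 1) / γ - 1)) *
      m ^ (n / 2 * ((γ + 2) / γ)) := by
    rw [← Real.rpow_add hm, ← Real.rpow_add hm, ← Real.rpow_add hm]
    congr 1
    field_simp
    ring
  rw [hPpow, Real.div_rpow (Real.rpow_nonneg hd _) hm.le, hdpow, Real.div_rpow hd hm.le,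
    Real.mul_rpow (by positivity) hP, ← Real.rpow_mul hm.le, div_eq_mul_inv (d ^ _),
    div_eq_mul_inv (d ^ _), ← Real.rpow_neg hm.le, ← Real.rpow_neg hm.le, hmpow]
  ring

theorem sqrt_pow_eq_rpow {m : ℝ} (hm : 0 ≤ m) (n : ℕ) : √m ^ n = m ^ ((n : ℝ) / 2) := by
  rw [Real.sqrt_eq_rpow, ← Real.rpow_mul_natCast hm, one_div_mul_eq_div]

end Scaling

end SphereRestriction

open SphereRestriction Module in
theorem sphere_restriction_norm_continuity_general {E : Type*} [NormedAddCommGroup E]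
    [InnerProductSpace ℝ E] [FiniteDimensional ℝ E] [MeasurableSpace E] [BorelSpace E] {γ : ℝ}
    (hγ : 2 ≤ γ) (hγ₁ : ((finrank ℝ E : ℝ) + 1) / 2 ≤ γ) (hγ₂ : γ ≤ (finrank ℝ E : ℝ) + 1) :
    ∃ C : ℝ, 0 < C ∧ ∀ f : E → ℂ, Integrable f →
      Integrable (fun x => ‖f x‖ ^ (2 * γ / (γ + 2))) → ∀ m > 0, ∀ s₁ s₂ : ℝ, m ≤ s₁ → m ≤ s₂ →
      m ^ (((finrank ℝ E : ℝ) - 2) / 2) *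
        |(∫ ω : sphere (0 : E) 1, ‖𝓕 f (√s₁ • (ω : E))‖ ^ 2 ∂(volume : Measure E).toSphere) -
          ∫ ω : sphere (0 : E) 1, ‖𝓕 f (√s₂ • (ω : E))‖ ^ 2 ∂(volume : Measure E).toSphere| ≤
        C * (|s₁ - s₂| ^ ((finrank ℝ E : ℝ) + 1 - γ) / m) ^ (1 / γ) *
          ((∫ x, ‖f x‖ ^ (2 * γ / (γ + 2))) ^ ((γ + 2) / (2 * γ))) ^ 2 := by
  have hγ0 : 0 < γ := by linarith
  have : Nontrivial E := finrank_pos_iff.1 (by exact_mod_cast (by linarith : (0 : ℝ) < finrank ℝ E))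
  set n : ℝ := (finrank ℝ E : ℝ)
  have hα : (n + 1) / γ - 1 ∈ Set.Icc (0 : ℝ) 1 :=
    ⟨sub_nonneg.2 ((one_le_div hγ0).2 hγ₂), by rw [sub_le_iff_le_add, div_le_iff₀ hγ0]; linarith⟩
  have hα' : 2 * ((n + 1) / γ - 1) ≤ n - 1 := by
    have : (n + 1) / γ ≤ (n + 1) / 2 := by gcongr
    linarith
  obtain ⟨C, hC, h⟩ := exists_abs_integral_sphere_sub_le_of_radius_le E hα hα'
    (p := 2 * γ / (γ + 2)) (by field_simp; ring)
  refine ⟨C, hC, fun f hf hfp m hm s₁ s₂ hs₁ hs₂ => ?_⟩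
  have hscaled := h (√m) (Real.sqrt_pos.2 hm) _ _ (Real.sqrt_le_sqrt hs₁) (Real.sqrt_le_sqrt hs₂)
    f hf hfp
  have hexp : 2 / (2 * γ / (γ + 2)) = (γ + 2) / γ := by field_simp
  have hvol : ((m ^ (n / 2)) ^ 2)⁻¹ = m ^ (-n) := by
    rw [← Real.rpow_mul_natCast hm.le, Real.rpow_neg hm.le, Nat.cast_ofNat,
      div_mul_cancel₀ n two_ne_zero]
  rw [sqrt_pow_eq_rpow hm.le, hexp, ← le_inv_mul_iff₀ (by positivity), hvol] at hscaled
  have hP : 0 ≤ ∫ x, ‖f x‖ ^ (2 * γ / (γ + 2)) := integral_nonneg fun _ => by positivity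
  rw [mul_assoc C, ← rpow_mul_rescaled_eq hγ0 hm (abs_nonneg _) hP, mul_left_comm C,
    mul_left_comm C, ← mul_assoc C]
  gcongr
  refine hscaled.trans ?_
  gcongr ?_ * (C * ?_ * ?_)
  exact Real.rpow_le_rpow (by positivity) (abs_sqrt_sub_sqrt_div_le hm hs₁ hs₂) hα.1

/-- Continuity (in the parameter `s = |ξ|²`) of the squared `L²(S^{n-1})`
norms of the spherical restrictions of `ψ̂`, in terms of the `L^{2γ/(γ+2)}` norm of `ψ`. -/
theorem sphere_restriction_norm_continuity (n : ℕ) (hn : 3 ≤ n) (γ : ℝ)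
    (hγ₁ : ((n : ℝ) + 1) / 2 ≤ γ) (hγ₂ : γ ≤ (n : ℝ) + 1) :
    ∃ C : ℝ, 0 < C ∧ ∀ ψ : SchwartzMap (EuclideanSpace ℝ (Fin n)) ℂ,
      ∀ m : ℕ, 1 ≤ m → ∀ s₁ s₂ : ℝ,
        s₁ ∈ Set.Icc (m : ℝ) ((m : ℝ) + 1) → s₂ ∈ Set.Icc (m : ℝ) ((m : ℝ) + 1) →
      (m : ℝ) ^ (((n : ℝ) - 2) / 2) *
        |(∫ ω : sphere (0 : EuclideanSpace ℝ (Fin n)) 1,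
            ‖𝓕 (⇑ψ) (Real.sqrt s₁ • (ω : EuclideanSpace ℝ (Fin n)))‖ ^ 2
            ∂((volume : Measure (EuclideanSpace ℝ (Fin n))).toSphere))
          - (∫ ω : sphere (0 : EuclideanSpace ℝ (Fin n)) 1,
            ‖𝓕 (⇑ψ) (Real.sqrt s₂ • (ω : EuclideanSpace ℝ (Fin n)))‖ ^ 2
            ∂((volume : Measure (EuclideanSpace ℝ (Fin n))).toSphere))|
        ≤ C * (|s₁ - s₂| ^ ((n : ℝ) + 1 - γ) / (m : ℝ)) ^ (1 / γ) *
          ((∫ x : EuclideanSpace ℝ (Fin n), ‖ψ x‖ ^ (2 * γ / (γ + 2)))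
            ^ ((γ + 2) / (2 * γ))) ^ 2 := by
  have hn' : (3 : ℝ) ≤ n := by exact_mod_cast hn
  have hp : 0 < 2 * γ / (γ + 2) := by
    have : 0 < γ := by linarith
    positivity
  have hfin : Module.finrank ℝ (EuclideanSpace ℝ (Fin n)) = n := finrank_euclideanSpace_fin
  obtain ⟨C, hC, h⟩ := sphere_restriction_norm_continuity_general
    (E := EuclideanSpace ℝ (Fin n)) (γ := γ) (by linarith) (by rwa [hfin]) (by rwa [hfin])
  rw [hfin] at h
  refine ⟨C, hC, fun ψ m hm s₁ s₂ hs₁ hs₂ => h ψ ψ.integrable ?_ m (by positivity) s₁ s₂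
    hs₁.1 hs₂.1⟩
  simpa only [ENNReal.toReal_ofReal hp.le] using
    (ψ.memLp (ENNReal.ofReal (2 * γ / (γ + 2))) volume).integrable_norm_rpow
      (ENNReal.ofReal_pos.2 hp).ne' ENNReal.ofReal_ne_top
end
end

section
/- Let n ≥ 3. There is a constant C depending only on n such that for every Schwartz function ψ on ℝⁿ and every r > 0, (∫_{S^{n−1}} |ψ̂(rω)|² dσ(ω))^{1/2} ≤ C r^{1−n/2} ‖⟨x⟩ψ‖_{L²(ℝⁿ)}. -/
open MeasureTheory Complex FourierTransform Metric
open scoped ENNReal Real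

noncomputable section

/-!
By Plancherel, `‖∇ψ̂‖ = 2π ‖|x| ψ‖` in `L²`, so it is enough to bound the trace of a function `f`
on a sphere by `‖∇f‖`. Along a ray, put `g s = f (s • ω)` and let `a = n - 2`. Completing the
square,

  `(a s ^ a |g| ^ 2)' = s ^ (a - 1) |a g + s g'| ^ 2 - s ^ (a + 1) |g'| ^ 2`,

and integrating from `r` to infinity gives `a r ^ a |g r| ^ 2 ≤ ∫ s ^ (n - 1) |g'| ^ 2`. Integrating
over the sphere turns the right-hand side into `‖∇f‖ ^ 2` in polar coordinates.
-/

open Set Filter Module SchwartzMap LineDeriv Topology Bornology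

section HalfLine

theorem sub_le_integral_Ioi_of_hasDerivWithinAt_of_tendsto {f f' φ : ℝ → ℝ} {a m : ℝ}
    (hcont : ContinuousOn f (Ici a)) (hderiv : ∀ x ∈ Ioi a, HasDerivWithinAt f (f' x) (Ioi x) x)
    (hφ : IntegrableOn φ (Ioi a)) (hle : ∀ x ∈ Ioi a, f' x ≤ φ x)
    (hlim : Tendsto f atTop (𝓝 m)) :
    m - f a ≤ ∫ x in Ioi a, φ x := by
  refine le_of_tendsto_of_tendsto (hlim.sub_const (f a))
    (intervalIntegral_tendsto_integral_Ioi a hφ tendsto_id) ?_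
  filter_upwards [eventually_ge_atTop a] with b hab
  exact intervalIntegral.sub_le_integral_of_hasDeriv_right_of_le hab
    (hcont.mono Icc_subset_Ici_self) (fun x hx ↦ hderiv x hx.1)
    ((integrableOn_Icc_iff_integrableOn_Ioc).2 (hφ.mono_set Ioc_subset_Ioi_self))
    fun x hx ↦ hle x hx.1

variable {F : Type*} [NormedAddCommGroup F] [InnerProductSpace ℝ F]

theorem neg_mul_rpow_mul_norm_sq_deriv_le (a : ℝ) {s : ℝ} (hs : 0 < s) (u v : F) :
    -(a * (a * s ^ (a - 1) * ‖u‖ ^ 2 + s ^ a * (2 * inner ℝ u v))) ≤ s ^ (a + 1) * ‖v‖ ^ 2 := by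
  have hsquare : 0 ≤ s ^ (a - 1) * ‖a • u + s • v‖ ^ 2 := by positivity
  rw [norm_add_sq_real, norm_smul, norm_smul, real_inner_smul_left, real_inner_smul_right,
    mul_pow, mul_pow, Real.norm_eq_abs, Real.norm_eq_abs, sq_abs, sq_abs] at hsquare
  have hpow : s ^ a = s ^ (a - 1) * s := by rw [← Real.rpow_add_one hs.ne', sub_add_cancel]
  rw [Real.rpow_add_one hs.ne', hpow]
  linear_combination hsquare

theorem mul_rpow_mul_norm_sq_le_integral_Ioi (a : ℝ) {g g' : ℝ → F} {φ : ℝ → ℝ} {r : ℝ}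
    (hr : 0 < r) (hg : ∀ s ∈ Ici r, HasDerivAt g (g' s) s) (hφ : IntegrableOn φ (Ioi r))
    (hle : ∀ s ∈ Ioi r, s ^ (a + 1) * ‖g' s‖ ^ 2 ≤ φ s)
    (hlim : Tendsto (fun s ↦ s ^ a * ‖g s‖ ^ 2) atTop (𝓝 0)) :
    a * (r ^ a * ‖g r‖ ^ 2) ≤ ∫ s in Ioi r, φ s := by
  have hderiv : ∀ s ∈ Ici r, HasDerivAt (fun s ↦ -(a * (s ^ a * ‖g s‖ ^ 2)))
      (-(a * (a * s ^ (a - 1) * ‖g s‖ ^ 2 + s ^ a * (2 * inner ℝ (g s) (g' s))))) s :=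
    fun s hs ↦ (((Real.hasDerivAt_rpow_const (.inl (hr.trans_le hs).ne')).mul
      (hg s hs).norm_sq).const_mul a).neg
  have hlim' : Tendsto (fun s ↦ -(a * (s ^ a * ‖g s‖ ^ 2))) atTop (𝓝 0) := by
    simpa using (hlim.const_mul a).neg
  simpa using sub_le_integral_Ioi_of_hasDerivWithinAt_of_tendsto
    (fun s hs ↦ (hderiv s hs).continuousAt.continuousWithinAt)
    (fun s hs ↦ (hderiv s (Ioi_subset_Ici_self hs)).hasDerivWithinAt) hφ
    (fun s hs ↦ (neg_mul_rpow_mul_norm_sq_deriv_le a (hr.trans hs) (g s) (g' s)).trans (hle s hs))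
    hlim'

end HalfLine

section VolumeIoiPow

variable {F : Type*} [NormedAddCommGroup F] [NormedSpace ℝ F]

theorem integrable_volumeIoiPow_iff (k : ℕ) (f : ℝ → F) :
    Integrable (fun s : Ioi (0 : ℝ) ↦ f s) (.volumeIoiPow k) ↔
      IntegrableOn (fun s ↦ s ^ k • f s) (Ioi 0) := by
  rw [integrableOn_iff_comap_subtypeVal measurableSet_Ioi, Measure.volumeIoiPow,
    integrable_withDensity_iff_integrable_smul' (by fun_prop) (by simp)]
  refine integrable_congr (.of_forall fun s ↦ ?_)
  simp only [ENNReal.toReal_ofReal (pow_nonneg s.2.out.le k), Function.comp_apply]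

theorem integral_volumeIoiPow (k : ℕ) (f : ℝ → F) :
    ∫ s : Ioi (0 : ℝ), f s ∂.volumeIoiPow k = ∫ s in Ioi (0 : ℝ), s ^ k • f s := by
  rw [← integral_subtype_comap measurableSet_Ioi, Measure.volumeIoiPow,
    integral_withDensity_eq_integral_toReal_smul (by fun_prop) (by simp)]
  refine integral_congr_ae (.of_forall fun s ↦ ?_)
  simp only [ENNReal.toReal_ofReal (pow_nonneg s.2.out.le k)]

end VolumeIoiPow

section Polar

variable {E F : Type*} [NormedAddCommGroup E] [NormedSpace ℝ E]
  [MeasurableSpace E] [BorelSpace E]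

theorem measurableEmbedding_smul_sphere :
    MeasurableEmbedding (fun p : sphere (0 : E) 1 × Ioi (0 : ℝ) ↦ (p.2 : ℝ) • (p.1 : E)) :=
  (MeasurableEmbedding.subtype_coe (measurableSet_singleton (0 : E)).compl).comp
    (homeomorphUnitSphereProd E).symm.measurableEmbedding

variable [FiniteDimensional ℝ E] [Nontrivial E] (μ : Measure E) [μ.IsAddHaarMeasure]

theorem measurePreserving_smul_sphere :
    MeasurePreserving (fun p : sphere (0 : E) 1 × Ioi (0 : ℝ) ↦ (p.2 : ℝ) • (p.1 : E))
      (μ.toSphere.prod (.volumeIoiPow (finrank ℝ E - 1))) μ := by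
  have hval := measurePreserving_subtype_coe (μa := μ) (measurableSet_singleton (0 : E)).compl
  rw [restrict_compl_singleton] at hval
  exact hval.comp (μ.measurePreserving_homeomorphUnitSphereProd.symm
    (homeomorphUnitSphereProd E).toMeasurableEquiv)

variable {μ} [NormedAddCommGroup F] {f : E → F}

theorem integrable_smul_sphere (hf : Integrable f μ) :
    Integrable (fun p : sphere (0 : E) 1 × Ioi (0 : ℝ) ↦ f ((p.2 : ℝ) • (p.1 : E)))
      (μ.toSphere.prod (.volumeIoiPow (finrank ℝ E - 1))) :=
  ((measurePreserving_smul_sphere μ).integrable_comp_emb measurableEmbedding_smul_sphere).2 hf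

variable [NormedSpace ℝ F]

theorem ae_integrableOn_Ioi_pow_smul_ray (hf : Integrable f μ) :
    ∀ᵐ ω : sphere (0 : E) 1 ∂μ.toSphere,
      IntegrableOn (fun s : ℝ ↦ s ^ (finrank ℝ E - 1) • f (s • (ω : E))) (Ioi 0) := by
  filter_upwards [(integrable_smul_sphere hf).prod_right_ae] with ω hω
  exact (integrable_volumeIoiPow_iff _ fun s ↦ f (s • (ω : E))).1 hω

theorem integrable_integral_Ioi_pow_smul_ray (hf : Integrable f μ) :
    Integrable (fun ω : sphere (0 : E) 1 ↦
      ∫ s in Ioi (0 : ℝ), s ^ (finrank ℝ E - 1) • f (s • (ω : E))) μ.toSphere := by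
  have hray (ω : E) := integral_volumeIoiPow (finrank ℝ E - 1) fun s ↦ f (s • ω)
  simpa only [hray] using (integrable_smul_sphere hf).integral_prod_left

theorem integral_eq_integral_sphere_integral_Ioi (hf : Integrable f μ) :
    ∫ x, f x ∂μ = ∫ ω : sphere (0 : E) 1,
      (∫ s in Ioi (0 : ℝ), s ^ (finrank ℝ E - 1) • f (s • (ω : E))) ∂μ.toSphere := by
  have hray (ω : E) := integral_volumeIoiPow (finrank ℝ E - 1) fun s ↦ f (s • ω)
  rw [← (measurePreserving_smul_sphere μ).integral_comp measurableEmbedding_smul_sphere,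
    integral_prod _ (integrable_smul_sphere hf)]
  simp only [hray]

end Polar

section Trace

variable {E F : Type*} [NormedAddCommGroup E] [NormedSpace ℝ E]
  [NormedAddCommGroup F] [InnerProductSpace ℝ F] {f : E → F} {k : ℕ} {r : ℝ}

theorem natCast_mul_pow_mul_norm_sq_le_integral_norm_sq_fderiv_ray (hf : Differentiable ℝ f)
    (hlim : Tendsto (fun x ↦ ‖x‖ ^ k * ‖f x‖ ^ 2) (cobounded E) (𝓝 0)) (hr : 0 < r) {ω : E}
    (hω : ‖ω‖ = 1)
    (hint : IntegrableOn (fun s : ℝ ↦ s ^ (k + 1) * ‖fderiv ℝ f (s • ω)‖ ^ 2) (Ioi 0)) :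
    k * (r ^ k * ‖f (r • ω)‖ ^ 2) ≤
      ∫ s in Ioi (0 : ℝ), s ^ (k + 1) * ‖fderiv ℝ f (s • ω)‖ ^ 2 := by
  have hderiv (s : ℝ) : HasDerivAt (fun t : ℝ ↦ f (t • ω)) (fderiv ℝ f (s • ω) ω) s := by
    have hline : HasDerivAt (fun t : ℝ ↦ t • ω) ω s := by
      simpa using (hasDerivAt_id s).smul_const ω
    exact (hf _).hasFDerivAt.comp_hasDerivAt s hline
  have hle : ∀ s ∈ Ioi r, s ^ ((k : ℝ) + 1) * ‖fderiv ℝ f (s • ω) ω‖ ^ 2 ≤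
      s ^ (k + 1) * ‖fderiv ℝ f (s • ω)‖ ^ 2 := fun s hs ↦ by
    have hs0 : 0 < s := hr.trans hs
    have hop : ‖fderiv ℝ f (s • ω) ω‖ ≤ ‖fderiv ℝ f (s • ω)‖ :=
      (fderiv ℝ f (s • ω)).unit_le_opNorm ω hω.le
    norm_cast
    gcongr
  have hray : Tendsto (fun s : ℝ ↦ s • ω) atTop (cobounded E) := by
    refine tendsto_norm_atTop_iff_cobounded.1 ?_
    simpa only [norm_smul, hω, mul_one] using tendsto_norm_atTop_atTop
  have hlim_ray : Tendsto (fun s : ℝ ↦ s ^ (k : ℝ) * ‖f (s • ω)‖ ^ 2) atTop (𝓝 0) := by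
    refine (hlim.comp hray).congr' ?_
    filter_upwards [eventually_ge_atTop 0] with s hs
    simp [norm_smul, hω, abs_of_nonneg hs]
  have hsubset : Ioi r ⊆ Ioi 0 := Ioi_subset_Ioi hr.le
  calc (k : ℝ) * (r ^ k * ‖f (r • ω)‖ ^ 2)
      ≤ ∫ s in Ioi r, s ^ (k + 1) * ‖fderiv ℝ f (s • ω)‖ ^ 2 := by
        simpa only [Real.rpow_natCast] using mul_rpow_mul_norm_sq_le_integral_Ioi (k : ℝ) hr
          (fun s _ ↦ hderiv s) (hint.mono_set hsubset) hle hlim_ray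
    _ ≤ ∫ s in Ioi (0 : ℝ), s ^ (k + 1) * ‖fderiv ℝ f (s • ω)‖ ^ 2 := by
        refine setIntegral_mono_set hint ?_ hsubset.eventuallyLE
        filter_upwards [ae_restrict_mem measurableSet_Ioi] with s hs
        exact mul_nonneg (pow_nonneg (le_of_lt hs) _) (sq_nonneg _)

variable [MeasurableSpace E] [BorelSpace E] [FiniteDimensional ℝ E]
  {μ : Measure E} [μ.IsAddHaarMeasure]

theorem natCast_mul_pow_mul_integral_sphere_norm_sq_le (hdim : finrank ℝ E = k + 2)
    (hf : Differentiable ℝ f) (hint : Integrable (fun x ↦ ‖fderiv ℝ f x‖ ^ 2) μ)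
    (hlim : Tendsto (fun x ↦ ‖x‖ ^ k * ‖f x‖ ^ 2) (cobounded E) (𝓝 0)) (hr : 0 < r) :
    k * (r ^ k * ∫ ω : sphere (0 : E) 1, ‖f (r • (ω : E))‖ ^ 2 ∂μ.toSphere) ≤
      ∫ x, ‖fderiv ℝ f x‖ ^ 2 ∂μ := by
  have : Nontrivial E := nontrivial_of_finrank_pos (R := ℝ) (by lia)
  have hpred : finrank ℝ E - 1 = k + 1 := by lia
  have hint_ray := ae_integrableOn_Ioi_pow_smul_ray hint
  have hint_sphere := integrable_integral_Ioi_pow_smul_ray hint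
  rw [integral_eq_integral_sphere_integral_Ioi hint, ← integral_const_mul, ← integral_const_mul]
  simp only [hpred, smul_eq_mul] at hint_ray hint_sphere ⊢
  refine integral_mono_of_nonneg (.of_forall fun ω ↦ by positivity) hint_sphere ?_
  filter_upwards [hint_ray] with ω hω
  exact natCast_mul_pow_mul_norm_sq_le_integral_norm_sq_fderiv_ray hf hlim hr
    (norm_eq_of_mem_sphere ω) hω

end Trace

section Schwartz

variable {V F : Type*} [NormedAddCommGroup V] [NormedSpace ℝ V]
  [NormedAddCommGroup F] [NormedSpace ℝ F]

theorem schwartzMap_tendsto_norm_pow_mul_norm_sq [ProperSpace V] (f : 𝓢(V, F)) (k : ℕ) :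
    Tendsto (fun x ↦ ‖x‖ ^ k * ‖f x‖ ^ 2) (cobounded V) (𝓝 0) := by
  obtain ⟨C, -, hC⟩ := f.decay k 0
  have hlim : Tendsto (fun x ↦ C * ‖f x‖) (cobounded V) (𝓝 0) := by
    simpa [cobounded_eq_cocompact] using f.tendsto_cocompact.norm.const_mul C
  refine squeeze_zero (fun x ↦ by positivity) (fun x ↦ ?_) hlim
  have hx : ‖x‖ ^ k * ‖f x‖ ≤ C := by simpa using hC x
  calc ‖x‖ ^ k * ‖f x‖ ^ 2 = ‖x‖ ^ k * ‖f x‖ * ‖f x‖ := by ring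
    _ ≤ C * ‖f x‖ := by gcongr

variable [MeasurableSpace V] [BorelSpace V] [SecondCountableTopology V]
  (μ : Measure V) [μ.HasTemperateGrowth]

theorem schwartzMap_integrable_norm_pow_mul_norm_sq (f : 𝓢(V, F)) (k : ℕ) :
    Integrable (fun x ↦ ‖x‖ ^ k * ‖f x‖ ^ 2) μ := by
  obtain ⟨C, -, hC⟩ := f.decay 0 0
  simp only [sq, ← mul_assoc]
  exact (f.integrable_pow_mul μ k).mul_bdd (by fun_prop) (.of_forall fun x ↦ by simpa using hC x)

theorem schwartzMap_integrable_norm_sq (f : 𝓢(V, F)) : Integrable (fun x ↦ ‖f x‖ ^ 2) μ := by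
  simpa using schwartzMap_integrable_norm_pow_mul_norm_sq μ f 0

theorem sqrt_integral_norm_sq_mul_norm_sq_le (f : 𝓢(V, F)) :
    √(∫ x, ‖x‖ ^ 2 * ‖f x‖ ^ 2 ∂μ) ≤ √(∫ x, (1 + ‖x‖ ^ 2) * ‖f x‖ ^ 2 ∂μ) := by
  have hint := schwartzMap_integrable_norm_pow_mul_norm_sq μ f 2
  refine Real.sqrt_le_sqrt (integral_mono hint ?_ fun x ↦ ?_)
  · simpa only [add_mul, one_mul] using! (schwartzMap_integrable_norm_sq μ f).add hint
  · dsimp only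
    gcongr
    simp

end Schwartz

section Fourier

variable {V : Type*} [NormedAddCommGroup V] [InnerProductSpace ℝ V] {ι : Type*} [Fintype ι]

theorem norm_sq_le_sum_norm_sq_apply_orthonormalBasis (b : OrthonormalBasis ι ℝ V) {F : Type*}
    [NormedAddCommGroup F] [NormedSpace ℝ F] (L : V →L[ℝ] F) :
    ‖L‖ ^ 2 ≤ ∑ i, ‖L (b i)‖ ^ 2 := by
  refine (Real.le_sqrt (norm_nonneg _) (by positivity)).1 (L.opNorm_le_bound (by positivity) ?_)
  intro v
  calc ‖L v‖ = ‖∑ i, inner ℝ (b i) v • L (b i)‖ := by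
        conv_lhs => rw [← b.sum_repr' v, map_sum]
        simp only [map_smul]
    _ ≤ ∑ i, ‖L (b i)‖ * ‖inner ℝ (b i) v‖ := by
        refine (norm_sum_le _ _).trans_eq ?_
        simp only [norm_smul, mul_comm]
    _ ≤ √(∑ i, ‖L (b i)‖ ^ 2) * √(∑ i, ‖inner ℝ (b i) v‖ ^ 2) :=
        Real.sum_mul_le_sqrt_mul_sqrt _ _ _
    _ = √(∑ i, ‖L (b i)‖ ^ 2) * ‖v‖ := by
        rw [b.sum_sq_norm_inner_right, Real.sqrt_sq (norm_nonneg v)]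

variable [FiniteDimensional ℝ V] [MeasurableSpace V] [BorelSpace V]
  {H : Type*} [NormedAddCommGroup H] [InnerProductSpace ℂ H] [CompleteSpace H]

theorem integral_norm_sq_lineDeriv_fourier (ψ : 𝓢(V, H)) (v : V) :
    ∫ ξ, ‖∂_{v} (𝓕 ψ) ξ‖ ^ 2 = (2 * π) ^ 2 * ∫ x, ‖inner ℝ x v‖ ^ 2 * ‖ψ x‖ ^ 2 := by
  have hgrowth : (inner ℝ · v).HasTemperateGrowth := by fun_prop
  rw [lineDerivOp_fourier_eq, integral_norm_sq_fourier, ← integral_const_mul]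
  refine integral_congr_ae (.of_forall fun x ↦ ?_)
  simp [hgrowth, norm_smul, abs_of_pos Real.pi_pos, mul_pow]

theorem integral_sum_norm_sq_lineDeriv_fourier (b : OrthonormalBasis ι ℝ V) (ψ : 𝓢(V, H)) :
    ∫ ξ, ∑ i, ‖∂_{b i} (𝓕 ψ) ξ‖ ^ 2 = (2 * π) ^ 2 * ∫ x, ‖x‖ ^ 2 * ‖ψ x‖ ^ 2 := by
  have hint (i : ι) : Integrable fun x ↦ ‖inner ℝ x (b i)‖ ^ 2 * ‖ψ x‖ ^ 2 := by
    have hgrowth : (inner ℝ · (b i)).HasTemperateGrowth := by fun_prop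
    simpa [hgrowth, norm_smul, mul_pow] using
      schwartzMap_integrable_norm_sq volume (smulLeftCLM H (inner ℝ · (b i)) ψ)
  calc ∫ ξ, ∑ i, ‖∂_{b i} (𝓕 ψ) ξ‖ ^ 2
      = ∑ i, (2 * π) ^ 2 * ∫ x, ‖inner ℝ x (b i)‖ ^ 2 * ‖ψ x‖ ^ 2 := by
        rw [integral_finsetSum _ fun i _ ↦ schwartzMap_integrable_norm_sq volume (∂_{b i} (𝓕 ψ))]
        simp only [integral_norm_sq_lineDeriv_fourier]
    _ = (2 * π) ^ 2 * ∫ x, ‖x‖ ^ 2 * ‖ψ x‖ ^ 2 := by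
        rw [← Finset.mul_sum, ← integral_finsetSum _ fun i _ ↦ hint i]
        simp only [← Finset.sum_mul, b.sum_sq_norm_inner_left]

theorem integral_norm_sq_fderiv_fourier_le (ψ : 𝓢(V, H)) :
    ∫ ξ, ‖fderiv ℝ (𝓕 ψ : 𝓢(V, H)) ξ‖ ^ 2 ≤ (2 * π) ^ 2 * ∫ x, ‖x‖ ^ 2 * ‖ψ x‖ ^ 2 := by
  let b := stdOrthonormalBasis ℝ V
  rw [← integral_sum_norm_sq_lineDeriv_fourier b]
  refine integral_mono_of_nonneg (.of_forall fun ξ ↦ by positivity)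
    (integrable_finsetSum _ fun i _ ↦ schwartzMap_integrable_norm_sq volume (∂_{b i} (𝓕 ψ)))
    (.of_forall fun ξ ↦ ?_)
  exact norm_sq_le_sum_norm_sq_apply_orthonormalBasis b _

theorem sphere_restriction_weighted_bound_general (hV : 3 ≤ finrank ℝ V) (ψ : 𝓢(V, H))
    {r : ℝ} (hr : 0 < r) :
    √(∫ ω : sphere (0 : V) 1, ‖𝓕 (⇑ψ) (r • (ω : V))‖ ^ 2 ∂(volume : Measure V).toSphere) ≤
      2 * π / √(finrank ℝ V - 2) * r ^ (1 - (finrank ℝ V : ℝ) / 2) *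
        √(∫ x, ‖x‖ ^ 2 * ‖ψ x‖ ^ 2) := by
  obtain ⟨k, hdim : finrank ℝ V = (k + 1) + 2⟩ := Nat.exists_eq_add_of_le' hV
  have hcodim : (finrank ℝ V : ℝ) - 2 = (k + 1 : ℕ) := by rw [hdim]; push_cast; ring
  let _ : InnerProductSpace ℝ H := .complexToReal
  let f : 𝓢(V, H) := 𝓕 ψ
  have htrace := (natCast_mul_pow_mul_integral_sphere_norm_sq_le hdim f.differentiable
    (schwartzMap_integrable_norm_sq volume (fderivCLM ℝ V H f))
    (schwartzMap_tendsto_norm_pow_mul_norm_sq f (k + 1)) hr).trans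
    (integral_norm_sq_fderiv_fourier_le ψ)
  have hpow : √(r ^ (k + 1))⁻¹ = r ^ (1 - (finrank ℝ V : ℝ) / 2) := by
    rw [Real.sqrt_eq_rpow, ← Real.rpow_natCast, ← Real.rpow_neg hr.le, ← Real.rpow_mul hr.le]
    congr 1
    linear_combination hcodim / 2
  rw [hcodim, ← hpow, ← SchwartzMap.fourier_coe]
  calc √(∫ ω : sphere (0 : V) 1, ‖𝓕 ψ (r • (ω : V))‖ ^ 2 ∂(volume : Measure V).toSphere)
      ≤ √((2 * π) ^ 2 / (k + 1 : ℕ) * (r ^ (k + 1))⁻¹ * ∫ x, ‖x‖ ^ 2 * ‖ψ x‖ ^ 2) := by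
        refine Real.sqrt_le_sqrt ?_
        field_simp
        linarith
    _ = 2 * π / √(k + 1 : ℕ) * √(r ^ (k + 1))⁻¹ * √(∫ x, ‖x‖ ^ 2 * ‖ψ x‖ ^ 2) := by
        rw [Real.sqrt_mul (by positivity), Real.sqrt_mul (by positivity),
          Real.sqrt_div (by positivity), Real.sqrt_sq (by positivity)]

end Fourier

/-- Weighted Fourier restriction bound: the restriction of `ψ̂` to the
sphere of radius `r` has `L²(S^{n-1})` norm at most `C r^{1-n/2} ‖⟨x⟩ψ‖_{L²}`. -/
theorem sphere_restriction_weighted_bound (n : ℕ) (hn : 3 ≤ n) :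
    ∃ C : ℝ, 0 < C ∧ ∀ ψ : SchwartzMap (EuclideanSpace ℝ (Fin n)) ℂ, ∀ r : ℝ, 0 < r →
      Real.sqrt (∫ ω : sphere (0 : EuclideanSpace ℝ (Fin n)) 1,
          ‖𝓕 (⇑ψ) (r • (ω : EuclideanSpace ℝ (Fin n)))‖ ^ 2
          ∂((volume : Measure (EuclideanSpace ℝ (Fin n))).toSphere))
        ≤ C * r ^ ((1 : ℝ) - (n : ℝ) / 2) *
          Real.sqrt (∫ x : EuclideanSpace ℝ (Fin n), (1 + ‖x‖ ^ 2) * ‖ψ x‖ ^ 2) := by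
  have hcodim : 0 < (n : ℝ) - 2 := sub_pos.2 (by exact_mod_cast hn)
  refine ⟨2 * π / √(n - 2), by positivity, fun ψ r hr ↦ ?_⟩
  have hbound := sphere_restriction_weighted_bound_general (by simpa using hn) ψ hr
  rw [finrank_euclideanSpace_fin] at hbound
  exact hbound.trans (mul_le_mul_of_nonneg_left
    (sqrt_integral_norm_sq_mul_norm_sq_le volume ψ) (by positivity))
end
end

section
/- Let n ≥ 3. There is a constant C depending only on n such that for every Schwartz function ψ on ℝⁿ, every r₀ > 0, and all r₁, r₂ ∈ [r₀/4, 4r₀], the spherical restrictions of ψ̂ satisfy the Hölder-1/2 continuity bound (∫_{S^{n−1}} |ψ̂(r₁ω) − ψ̂(r₂ω)|² dσ(ω))^{1/2} ≤ C r₀^{(1−n)/2} |r₁ − r₂|^{1/2} ‖⟨x⟩ψ‖_{L²(ℝⁿ)}. -/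
open MeasureTheory Complex FourierTransform Metric
open scoped ENNReal Real

noncomputable section

/-!
Along each ray, the fundamental theorem of calculus and Cauchy–Schwarz bound
`|ψ̂(r₁ω) - ψ̂(r₂ω)|²` by `|r₁ - r₂|` times the integral of `|∇ψ̂(sω)|²` over `s` between the two
radii. These radii are at least `c`, so inserting the weight `s ^ (n - 1)` costs a factor
`c ^ (1 - n)` and turns the integral over `(s, ω)` into a part of the integral of `|∇ψ̂|²` over
`ℝⁿ`, which by Plancherel equals `(2π)² ‖|x| ψ‖²`.
-/

section Line

lemma sq_lintegral_le_measure_univ_mul_lintegral_sq {α : Type*} [MeasurableSpace α]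
    {μ : Measure α} {f : α → ℝ≥0∞} (hf : AEMeasurable f μ) :
    (∫⁻ x, f x ∂μ) ^ 2 ≤ μ Set.univ * ∫⁻ x, f x ^ 2 ∂μ := by
  have holder := ENNReal.lintegral_mul_le_Lp_mul_Lq μ Real.HolderConjugate.two_two
    (aemeasurable_const (b := (1 : ℝ≥0∞))) hf
  have sq_sqrt (t : ℝ≥0∞) : (t ^ (1 / 2 : ℝ)) ^ 2 = t := by
    rw [← ENNReal.rpow_mul_natCast]
    norm_num
  calc (∫⁻ x, f x ∂μ) ^ 2
    _ ≤ ((μ Set.univ) ^ (1 / 2 : ℝ) * (∫⁻ x, f x ^ 2 ∂μ) ^ (1 / 2 : ℝ)) ^ 2 := by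
      gcongr
      simpa using holder
    _ = μ Set.univ * ∫⁻ x, f x ^ 2 ∂μ := by rw [mul_pow, sq_sqrt, sq_sqrt]

lemma enorm_sub_sq_le_mul_lintegral_enorm_deriv_sq {F : Type*} [NormedAddCommGroup F]
    [NormedSpace ℝ F] {f : ℝ → F} (hf : ContDiff ℝ 1 f) {a b : ℝ} (hab : a ≤ b) :
    ‖f b - f a‖ₑ ^ 2 ≤ ENNReal.ofReal (b - a) * ∫⁻ s in Set.Icc a b, ‖deriv f s‖ₑ ^ 2 := by
  calc ‖f b - f a‖ₑ ^ 2
    _ ≤ (∫⁻ s in Set.Icc a b, ‖deriv f s‖ₑ) ^ 2 := by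
      gcongr
      exact enorm_sub_le_lintegral_deriv_of_contDiffOn_Icc hf.contDiffOn hab
    _ ≤ ENNReal.ofReal (b - a) * ∫⁻ s in Set.Icc a b, ‖deriv f s‖ₑ ^ 2 := by
      simpa using sq_lintegral_le_measure_univ_mul_lintegral_sq
        (μ := volume.restrict (Set.Icc a b)) hf.continuous_deriv_one.enorm.aemeasurable

lemma enorm_sub_sq_le_mul_lintegral_enorm_fderiv_sq {E F : Type*} [NormedAddCommGroup E]
    [NormedSpace ℝ E] [NormedAddCommGroup F] [NormedSpace ℝ F] {g : E → F}
    (hg : ContDiff ℝ 1 g) {a b : ℝ} (hab : a ≤ b) {v : E} (hv : ‖v‖ ≤ 1) :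
    ‖g (b • v) - g (a • v)‖ₑ ^ 2
      ≤ ENNReal.ofReal (b - a) * ∫⁻ s in Set.Icc a b, ‖fderiv ℝ g (s • v)‖ₑ ^ 2 := by
  have deriv_ray (s : ℝ) : deriv (fun s : ℝ => g (s • v)) s = fderiv ℝ g (s • v) v := by
    have hray : HasDerivAt (fun s : ℝ => s • v) v s := by
      simpa using (hasDerivAt_id s).smul_const v
    exact ((hg.differentiable one_ne_zero _).hasFDerivAt.comp_hasDerivAt s hray).deriv
  refine (enorm_sub_sq_le_mul_lintegral_enorm_deriv_sq (f := fun s : ℝ => g (s • v))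
    (by fun_prop) hab).trans ?_
  gcongr with s
  rw [deriv_ray, enorm_le_iff_norm_le]
  exact (fderiv ℝ g (s • v)).unit_le_opNorm v hv

lemma setLIntegral_Ici_le_inv_pow_mul_lintegral_Ioi {c : ℝ} (hc : 0 < c) (k : ℕ)
    (h : ℝ → ℝ≥0∞) :
    ∫⁻ s in Set.Ici c, h s
      ≤ ENNReal.ofReal (c ^ k)⁻¹ * ∫⁻ s in Set.Ioi 0, ENNReal.ofReal (s ^ k) * h s := by
  calc ∫⁻ s in Set.Ici c, h s
    _ ≤ ∫⁻ s in Set.Ici c, ENNReal.ofReal (c ^ k)⁻¹ * (ENNReal.ofReal (s ^ k) * h s) := by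
      refine setLIntegral_mono' measurableSet_Ici fun s hs => ?_
      have one_le : 1 ≤ (c ^ k)⁻¹ * s ^ k := by
        rw [inv_mul_eq_div, one_le_div (by positivity)]
        exact pow_le_pow_left₀ hc.le hs k
      rw [← mul_assoc, ← ENNReal.ofReal_mul (by positivity)]
      exact le_mul_of_one_le_left' (ENNReal.one_le_ofReal.2 one_le)
    _ = ENNReal.ofReal (c ^ k)⁻¹ * ∫⁻ s in Set.Ici c, ENNReal.ofReal (s ^ k) * h s :=
      lintegral_const_mul' _ _ ENNReal.ofReal_ne_top
    _ ≤ ENNReal.ofReal (c ^ k)⁻¹ * ∫⁻ s in Set.Ioi 0, ENNReal.ofReal (s ^ k) * h s := by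
      gcongr

end Line

section Sphere

variable {E : Type*} [NormedAddCommGroup E] [NormedSpace ℝ E] [FiniteDimensional ℝ E]
  [MeasurableSpace E] [BorelSpace E] (μ : Measure E) [μ.IsAddHaarMeasure]

-- On the zero space the sphere is empty and both sides vanish, whatever the truncated exponent is.
lemma setLIntegral_compl_zero_eq_lintegral_toSphere {f : E → ℝ≥0∞} (hf : Measurable f) :
    ∫⁻ x in {0}ᶜ, f x ∂μ = ∫⁻ ω : sphere (0 : E) 1, (∫⁻ r in Set.Ioi (0 : ℝ),
      ENNReal.ofReal (r ^ (Module.finrank ℝ E - 1)) * f (r • (ω : E))) ∂μ.toSphere := by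
  have hpolar : Measurable fun z : sphere (0 : E) 1 × Set.Ioi (0 : ℝ) =>
      f ((z.2 : ℝ) • (z.1 : E)) := by fun_prop
  calc ∫⁻ x in {0}ᶜ, f x ∂μ
    _ = ∫⁻ x : ({0}ᶜ : Set E), f x ∂(μ.comap (↑)) :=
      (lintegral_subtype_comap (measurableSet_singleton _).compl f).symm
    _ = ∫⁻ z, f ((z.2 : ℝ) • (z.1 : E))
          ∂μ.toSphere.prod (.volumeIoiPow (Module.finrank ℝ E - 1)) := by
      rw [← μ.measurePreserving_homeomorphUnitSphereProd.lintegral_comp hpolar]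
      refine lintegral_congr fun x => ?_
      have hx : ‖(x : E)‖ ≠ 0 := norm_ne_zero_iff.2 x.2
      simp [smul_smul, hx]
    _ = ∫⁻ ω : sphere (0 : E) 1, (∫⁻ r : Set.Ioi (0 : ℝ), f ((r : ℝ) • (ω : E))
          ∂.volumeIoiPow (Module.finrank ℝ E - 1)) ∂μ.toSphere :=
      lintegral_prod _ hpolar.aemeasurable
    _ = _ := by
      refine lintegral_congr fun ω => ?_
      rw [Measure.volumeIoiPow, lintegral_withDensity_eq_lintegral_mul _ (by fun_prop)
        (by fun_prop), ← lintegral_subtype_comap measurableSet_Ioi]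
      rfl

lemma lintegral_toSphere_enorm_sub_sq_le {F : Type*} [NormedAddCommGroup F] [NormedSpace ℝ F]
    {g : E → F} (hg : ContDiff ℝ 1 g) {c a b : ℝ} (hc : 0 < c) (hca : c ≤ a) (hab : a ≤ b) :
    ∫⁻ ω : sphere (0 : E) 1, ‖g (b • (ω : E)) - g (a • (ω : E))‖ₑ ^ 2 ∂μ.toSphere
      ≤ ENNReal.ofReal (b - a) * (ENNReal.ofReal (c ^ (Module.finrank ℝ E - 1))⁻¹ *
        ∫⁻ x, ‖fderiv ℝ g x‖ₑ ^ 2 ∂μ) := by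
  set k := Module.finrank ℝ E - 1
  calc ∫⁻ ω : sphere (0 : E) 1, ‖g (b • (ω : E)) - g (a • (ω : E))‖ₑ ^ 2 ∂μ.toSphere
    _ ≤ ∫⁻ ω : sphere (0 : E) 1, ENNReal.ofReal (b - a) *
          (ENNReal.ofReal (c ^ k)⁻¹ * ∫⁻ r in Set.Ioi (0 : ℝ),
            ENNReal.ofReal (r ^ k) * ‖fderiv ℝ g (r • (ω : E))‖ₑ ^ 2) ∂μ.toSphere := by
      refine lintegral_mono fun ω =>
        (enorm_sub_sq_le_mul_lintegral_enorm_fderiv_sq hg hab (by simp)).trans ?_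
      gcongr
      exact (lintegral_mono_set fun s hs => hca.trans hs.1).trans
        (setLIntegral_Ici_le_inv_pow_mul_lintegral_Ioi hc k _)
    _ = ENNReal.ofReal (b - a) * (ENNReal.ofReal (c ^ k)⁻¹ *
          ∫⁻ x in {0}ᶜ, ‖fderiv ℝ g x‖ₑ ^ 2 ∂μ) := by
      rw [setLIntegral_compl_zero_eq_lintegral_toSphere μ
          ((hg.continuous_fderiv one_ne_zero).enorm.measurable.pow_const 2),
        lintegral_const_mul' _ _ ENNReal.ofReal_ne_top,
        lintegral_const_mul' _ _ ENNReal.ofReal_ne_top]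
    _ ≤ ENNReal.ofReal (b - a) * (ENNReal.ofReal (c ^ k)⁻¹ *
          ∫⁻ x, ‖fderiv ℝ g x‖ₑ ^ 2 ∂μ) := by
      gcongr
      exact Measure.restrict_le_self

end Sphere

section SchwartzWeight

open scoped SchwartzMap

variable {D V : Type*} [NormedAddCommGroup D] [NormedSpace ℝ D] [MeasurableSpace D]
  [BorelSpace D] [SecondCountableTopology D] [NormedAddCommGroup V] [NormedSpace ℝ V]
  (μ : Measure D) [μ.HasTemperateGrowth] (f : 𝓢(D, V))

lemma integrable_pow_mul_norm_sq (k : ℕ) : Integrable (fun x => ‖x‖ ^ k * ‖f x‖ ^ 2) μ := by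
  have hbdd (x : D) : ‖‖f x‖‖ ≤ SchwartzMap.seminorm ℝ 0 0 f := by
    rw [norm_norm]
    exact SchwartzMap.norm_le_seminorm ℝ f x
  simp_rw [pow_two ‖f _‖, ← mul_assoc]
  exact (f.integrable_pow_mul μ k).mul_bdd f.continuous.norm.aestronglyMeasurable
    (.of_forall hbdd)

lemma integral_norm_sq_mul_norm_sq_le_integral_one_add :
    ∫ x, ‖x‖ ^ 2 * ‖f x‖ ^ 2 ∂μ ≤ ∫ x, (1 + ‖x‖ ^ 2) * ‖f x‖ ^ 2 ∂μ := by
  refine integral_mono (integrable_pow_mul_norm_sq μ f 2) ?_ fun x => ?_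
  · refine ((integrable_pow_mul_norm_sq μ f 0).add
      (integrable_pow_mul_norm_sq μ f 2)).congr (.of_forall fun x => ?_)
    simp only [Pi.add_apply]
    ring
  · dsimp only
    gcongr
    simp

end SchwartzWeight

section Plancherel

open scoped SchwartzMap LineDeriv

lemma enorm_sq_eq_ofReal_norm_sq {F : Type*} [SeminormedAddGroup F] (x : F) :
    ‖x‖ₑ ^ 2 = ENNReal.ofReal (‖x‖ ^ 2) := by
  rw [← ofReal_norm, ENNReal.ofReal_pow (norm_nonneg x)]

lemma sq_opNorm_le_sum_sq_norm_apply {𝕜 ι E F : Type*} [RCLike 𝕜] [Fintype ι]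
    [NormedAddCommGroup E] [InnerProductSpace 𝕜 E] [SeminormedAddCommGroup F] [NormedSpace 𝕜 F]
    (b : OrthonormalBasis ι 𝕜 E) (L : E →L[𝕜] F) : ‖L‖ ^ 2 ≤ ∑ i, ‖L (b i)‖ ^ 2 := by
  rw [← Real.le_sqrt (norm_nonneg _) (by positivity)]
  refine L.opNorm_le_bound (Real.sqrt_nonneg _) fun x => ?_
  calc ‖L x‖
    _ = ‖∑ i, inner 𝕜 (b i) x • L (b i)‖ := by
      conv_lhs => rw [← b.sum_repr' x]
      simp only [map_sum, map_smul]
    _ ≤ ∑ i, ‖L (b i)‖ * ‖inner 𝕜 (b i) x‖ := by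
      refine (norm_sum_le _ _).trans_eq (Finset.sum_congr rfl fun i _ => ?_)
      rw [norm_smul, mul_comm]
    _ ≤ √(∑ i, ‖L (b i)‖ ^ 2) * √(∑ i, ‖inner 𝕜 (b i) x‖ ^ 2) :=
      Real.sum_mul_le_sqrt_mul_sqrt _ _ _
    _ = √(∑ i, ‖L (b i)‖ ^ 2) * ‖x‖ := by
      rw [b.sum_sq_norm_inner_right, Real.sqrt_sq (norm_nonneg _)]

variable {E H : Type*} [NormedAddCommGroup E] [InnerProductSpace ℝ E] [FiniteDimensional ℝ E]
  [MeasurableSpace E] [BorelSpace E] [NormedAddCommGroup H] [InnerProductSpace ℂ H]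
  [CompleteSpace H]

lemma lintegral_enorm_sq_fourier (f : 𝓢(E, H)) :
    ∫⁻ ξ, ‖𝓕 f ξ‖ₑ ^ 2 = ∫⁻ x, ‖f x‖ₑ ^ 2 := by
  have lintegral_eq (h : 𝓢(E, H)) : ∫⁻ x, ‖h x‖ₑ ^ 2 = ENNReal.ofReal (∫ x, ‖h x‖ ^ 2) := by
    simp_rw [enorm_sq_eq_ofReal_norm_sq]
    exact (ofReal_integral_eq_lintegral_ofReal
      (by simpa using integrable_pow_mul_norm_sq volume h 0)
      (.of_forall fun x => by positivity)).symm
  rw [lintegral_eq, lintegral_eq, f.integral_norm_sq_fourier]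

lemma lintegral_enorm_sq_lineDeriv_fourier (f : 𝓢(E, H)) (m : E) :
    ∫⁻ ξ, ‖(∂_{m} (𝓕 f)) ξ‖ₑ ^ 2
      = ENNReal.ofReal (2 * π) ^ 2 * ∫⁻ x, ‖inner ℝ x m‖ₑ ^ 2 * ‖f x‖ₑ ^ 2 := by
  have hm : (inner ℝ · m : E → ℝ).HasTemperateGrowth := by fun_prop
  rw [SchwartzMap.lineDerivOp_fourier_eq, lintegral_enorm_sq_fourier,
    ← lintegral_const_mul' _ _ (ENNReal.pow_ne_top ENNReal.ofReal_ne_top)]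
  refine lintegral_congr fun x => ?_
  have norm_two_pi_I : ‖-(2 * π * Complex.I)‖ₑ = ENNReal.ofReal (2 * π) := by
    rw [← ofReal_norm]
    simp [abs_of_pos Real.pi_pos]
  rw [_root_.smul_apply, SchwartzMap.smulLeftCLM_apply_apply hm, enorm_smul, enorm_smul,
    norm_two_pi_I, mul_pow, mul_pow]

lemma lintegral_enorm_sq_fderiv_fourier_le (f : 𝓢(E, H)) :
    ∫⁻ ξ, ‖fderiv ℝ (𝓕 f : 𝓢(E, H)) ξ‖ₑ ^ 2
      ≤ ENNReal.ofReal (2 * π) ^ 2 * ∫⁻ x, ‖x‖ₑ ^ 2 * ‖f x‖ₑ ^ 2 := by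
  let b := stdOrthonormalBasis ℝ E
  have parseval (x : E) : ∑ i, ‖inner ℝ x (b i)‖ₑ ^ 2 = ‖x‖ₑ ^ 2 := by
    simp_rw [enorm_sq_eq_ofReal_norm_sq]
    rw [← ENNReal.ofReal_sum_of_nonneg fun i _ => by positivity, b.sum_sq_norm_inner_left]
  calc ∫⁻ ξ, ‖fderiv ℝ (𝓕 f : 𝓢(E, H)) ξ‖ₑ ^ 2
    _ ≤ ∫⁻ ξ, ∑ i, ‖(∂_{b i} (𝓕 f) : 𝓢(E, H)) ξ‖ₑ ^ 2 := by
      refine lintegral_mono fun ξ => ?_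
      simp_rw [enorm_sq_eq_ofReal_norm_sq, SchwartzMap.lineDerivOp_apply_eq_fderiv]
      rw [← ENNReal.ofReal_sum_of_nonneg fun i _ => by positivity]
      exact ENNReal.ofReal_le_ofReal (sq_opNorm_le_sum_sq_norm_apply b _)
    _ = ∑ i, ENNReal.ofReal (2 * π) ^ 2 * ∫⁻ x, ‖inner ℝ x (b i)‖ₑ ^ 2 * ‖f x‖ₑ ^ 2 := by
      rw [lintegral_finsetSum _ fun i _ =>
        (SchwartzMap.continuous (∂_{b i} (𝓕 f))).enorm.measurable.pow_const 2]
      simp_rw [lintegral_enorm_sq_lineDeriv_fourier]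
    _ = ENNReal.ofReal (2 * π) ^ 2 * ∫⁻ x, ‖x‖ₑ ^ 2 * ‖f x‖ₑ ^ 2 := by
      rw [← Finset.mul_sum, ← lintegral_finsetSum _ fun i _ => by fun_prop]
      simp_rw [← Finset.sum_mul, parseval]

lemma integral_toSphere_norm_fourier_sub_sq_le (f : 𝓢(E, H)) {c a b : ℝ} (hc : 0 < c)
    (hca : c ≤ a) (hab : a ≤ b) :
    ∫ ω : sphere (0 : E) 1, ‖𝓕 f (b • (ω : E)) - 𝓕 f (a • (ω : E))‖ ^ 2
        ∂(volume : Measure E).toSphere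
      ≤ (2 * π) ^ 2 * (c ^ (Module.finrank ℝ E - 1))⁻¹ * (b - a) *
        ∫ x, ‖x‖ ^ 2 * ‖f x‖ ^ 2 := by
  have hba : 0 ≤ b - a := sub_nonneg.2 hab
  have lintegral_weight : ∫⁻ x, ‖x‖ₑ ^ 2 * ‖f x‖ₑ ^ 2
      = ENNReal.ofReal (∫ x, ‖x‖ ^ 2 * ‖f x‖ ^ 2) := by
    rw [ofReal_integral_eq_lintegral_ofReal (integrable_pow_mul_norm_sq volume f 2)
      (.of_forall fun x => by positivity)]
    simp_rw [enorm_sq_eq_ofReal_norm_sq, ← ENNReal.ofReal_mul (sq_nonneg ‖_‖)]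
  rw [integral_eq_lintegral_of_nonneg_ae (.of_forall fun ω => by positivity)
    (Continuous.aestronglyMeasurable (by fun_prop))]
  refine ENNReal.toReal_le_of_le_ofReal
    (mul_nonneg (by positivity) (integral_nonneg fun x => by positivity)) ?_
  simp_rw [← enorm_sq_eq_ofReal_norm_sq]
  calc ∫⁻ ω : sphere (0 : E) 1, ‖𝓕 f (b • (ω : E)) - 𝓕 f (a • (ω : E))‖ₑ ^ 2
        ∂(volume : Measure E).toSphere
    _ ≤ ENNReal.ofReal (b - a) * (ENNReal.ofReal (c ^ (Module.finrank ℝ E - 1))⁻¹ *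
          ∫⁻ ξ, ‖fderiv ℝ (𝓕 f : 𝓢(E, H)) ξ‖ₑ ^ 2) :=
      lintegral_toSphere_enorm_sub_sq_le volume ((𝓕 f).smooth 1) hc hca hab
    _ ≤ ENNReal.ofReal (b - a) * (ENNReal.ofReal (c ^ (Module.finrank ℝ E - 1))⁻¹ *
          (ENNReal.ofReal (2 * π) ^ 2 * ∫⁻ x, ‖x‖ₑ ^ 2 * ‖f x‖ₑ ^ 2)) := by
      gcongr
      exact lintegral_enorm_sq_fderiv_fourier_le f
    _ = ENNReal.ofReal ((2 * π) ^ 2 * (c ^ (Module.finrank ℝ E - 1))⁻¹ * (b - a) *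
          ∫ x, ‖x‖ ^ 2 * ‖f x‖ ^ 2) := by
      rw [lintegral_weight, ← ENNReal.ofReal_pow (by positivity),
        ← ENNReal.ofReal_mul (by positivity), ← ENNReal.ofReal_mul (by positivity),
        ← ENNReal.ofReal_mul hba]
      congr 1
      ring

theorem sphere_restriction_holder_continuity_general (f : 𝓢(E, H)) {c r₁ r₂ : ℝ} (hc : 0 < c)
    (h₁ : c ≤ r₁) (h₂ : c ≤ r₂) :
    √(∫ ω : sphere (0 : E) 1, ‖𝓕 f (r₁ • (ω : E)) - 𝓕 f (r₂ • (ω : E))‖ ^ 2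
        ∂(volume : Measure E).toSphere)
      ≤ 2 * π * c ^ ((1 - (Module.finrank ℝ E : ℝ)) / 2) * √|r₁ - r₂| *
        √(∫ x, ‖x‖ ^ 2 * ‖f x‖ ^ 2) := by
  wlog h : r₂ ≤ r₁ generalizing r₁ r₂
  · simpa only [norm_sub_rev, abs_sub_comm] using this h₂ h₁ (le_of_not_ge h)
  rcases subsingleton_or_nontrivial E with hE | hE
  · rw [Measure.toSphere_eq_zero_iff volume |>.2 hE, integral_zero_measure, Real.sqrt_zero]
    positivity
  have sqrt_inv_pow : √(c ^ (Module.finrank ℝ E - 1))⁻¹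
      = c ^ ((1 - (Module.finrank ℝ E : ℝ)) / 2) := by
    rw [Real.sqrt_eq_rpow, ← Real.rpow_natCast, ← Real.rpow_neg hc.le, ← Real.rpow_mul hc.le,
      Nat.cast_pred Module.finrank_pos]
    congr 1
    ring
  have hr : 0 ≤ r₁ - r₂ := sub_nonneg.2 h
  refine (Real.sqrt_le_sqrt (integral_toSphere_norm_fourier_sub_sq_le f hc h₂ h)).trans_eq ?_
  rw [Real.sqrt_mul (by positivity), Real.sqrt_mul (by positivity), Real.sqrt_mul (by positivity),
    Real.sqrt_sq (by positivity), sqrt_inv_pow, abs_of_nonneg hr]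

end Plancherel

/-- Hölder-1/2 continuity in the radius of the spherical restrictions
of `ψ̂`, with the weighted norm `‖⟨x⟩ψ‖_{L²}` on the right-hand side. -/
theorem sphere_restriction_holder_continuity (n : ℕ) (hn : 3 ≤ n) :
    ∃ C : ℝ, 0 < C ∧ ∀ ψ : SchwartzMap (EuclideanSpace ℝ (Fin n)) ℂ,
      ∀ r₀ : ℝ, 0 < r₀ → ∀ r₁ r₂ : ℝ,
        r₁ ∈ Set.Icc (r₀ / 4) (4 * r₀) → r₂ ∈ Set.Icc (r₀ / 4) (4 * r₀) →
      Real.sqrt (∫ ω : sphere (0 : EuclideanSpace ℝ (Fin n)) 1,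
          ‖𝓕 (⇑ψ) (r₁ • (ω : EuclideanSpace ℝ (Fin n)))
            - 𝓕 (⇑ψ) (r₂ • (ω : EuclideanSpace ℝ (Fin n)))‖ ^ 2
          ∂((volume : Measure (EuclideanSpace ℝ (Fin n))).toSphere))
        ≤ C * r₀ ^ (((1 : ℝ) - (n : ℝ)) / 2) * Real.sqrt |r₁ - r₂| *
          Real.sqrt (∫ x : EuclideanSpace ℝ (Fin n), (1 + ‖x‖ ^ 2) * ‖ψ x‖ ^ 2) := by
  refine ⟨2 * π / 4 ^ (((1 : ℝ) - n) / 2), by positivity, fun ψ r₀ hr₀ r₁ r₂ h₁ h₂ =>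
    (sphere_restriction_holder_continuity_general ψ (by positivity) h₁.1 h₂.1).trans ?_⟩
  rw [finrank_euclideanSpace_fin, Real.div_rpow hr₀.le (by positivity), ← mul_div_assoc,
    mul_div_right_comm]
  exact mul_le_mul_of_nonneg_left
    (Real.sqrt_le_sqrt (integral_norm_sq_mul_norm_sq_le_integral_one_add volume ψ))
    (by positivity)
end
end
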